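/- arXiv:1506.06688 — 4 statements merged into one kernel-verified Lean document; each statement's English description precedes it below -/
import Mathlib

section
/- Let M be a matrix with t ≥ 1 columns and u ≥ 1 rows and entries in {0, 1, −1} whose row-column graph G(M) is connected. Then the growth rates gr(Geom(M)) = lim_{n→∞} |Geom_n(M)|^{1/n} and gr(Grid(M)) = lim_{n→∞} |Grid_n(M)|^{1/n} both exist, and gr(Geom(M)) < gr(Grid(M)) if and only if G(M) contains a cycle (i.e., is not acyclic). -/
noncomputable section

open Filter

open scoped Classical

/-- The point `p` (0-based) of the permutation `σ` lies in the cell `(i, j)` of the gridding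
determined by the column dividers `c` and row dividers `r`. -/
def InCell {t u k : ℕ} (σ : Equiv.Perm (Fin k)) (c : Fin (t + 1) → ℕ) (r : Fin (u + 1) → ℕ)
    (i : Fin t) (j : Fin u) (p : Fin k) : Prop :=
  c i.castSucc ≤ (p : ℕ) ∧ (p : ℕ) < c i.succ ∧
    r j.castSucc ≤ (σ p : ℕ) ∧ (σ p : ℕ) < r j.succ

/-- `c`, `r` form an `M`-gridding of the permutation `σ`. -/
def IsGridding {t u k : ℕ} (M : Fin t → Fin u → ℤ) (σ : Equiv.Perm (Fin k))
    (c : Fin (t + 1) → ℕ) (r : Fin (u + 1) → ℕ) : Prop :=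
  Monotone c ∧ Monotone r ∧ c 0 = 0 ∧ c (Fin.last t) = k ∧ r 0 = 0 ∧ r (Fin.last u) = k ∧
    ∀ (i : Fin t) (j : Fin u),
      (M i j = 0 → ∀ p : Fin k, ¬ InCell σ c r i j p) ∧
        (M i j = 1 → ∀ p q : Fin k, InCell σ c r i j p → InCell σ c r i j q →
          p < q → σ p < σ q) ∧
          (M i j = -1 → ∀ p q : Fin k, InCell σ c r i j p → InCell σ c r i j q →
            p < q → σ q < σ p)

/-- Membership in the monotone grid class `Grid(M)`. -/
def InGridClass {t u : ℕ} (M : Fin t → Fin u → ℤ) {k : ℕ} (σ : Equiv.Perm (Fin k)) : Prop :=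
  ∃ (c : Fin (t + 1) → ℕ) (r : Fin (u + 1) → ℕ), IsGridding M σ c r

/-- `|Grid_n(M)|`, the number of permutations of length `n` in the grid class of `M`. -/
def gridCount {t u : ℕ} (M : Fin t → Fin u → ℤ) (n : ℕ) : ℕ :=
  Nat.card {σ : Equiv.Perm (Fin n) // InGridClass M σ}

/-- The standard figure `Λ_M ⊆ ℝ²` of a 0/±1 matrix `M`. -/
def stdFigure {t u : ℕ} (M : Fin t → Fin u → ℤ) : Set (ℝ × ℝ) :=
  {p : ℝ × ℝ | ∃ (i : Fin t) (j : Fin u) (s : ℝ), 0 < s ∧ s < 1 ∧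
    ((M i j = 1 ∧ p = (((i : ℕ) : ℝ) + s, ((j : ℕ) : ℝ) + s)) ∨
      (M i j = -1 ∧ p = (((i : ℕ) : ℝ) + s, ((j : ℕ) : ℝ) + 1 - s)))}

/-- Membership in the geometric grid class `Geom(M)`. -/
def InGeomClass {t u : ℕ} (M : Fin t → Fin u → ℤ) {n : ℕ} (σ : Equiv.Perm (Fin n)) : Prop :=
  ∃ f : Fin n → ℝ × ℝ, (∀ p, f p ∈ stdFigure M) ∧
    (∀ a b : Fin n, a < b → (f a).1 < (f b).1) ∧
    ∀ a b : Fin n, (f a).2 < (f b).2 ↔ σ a < σ b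

/-- `|Geom_n(M)|`. -/
def geomCount {t u : ℕ} (M : Fin t → Fin u → ℤ) (n : ℕ) : ℕ :=
  Nat.card {σ : Equiv.Perm (Fin n) // InGeomClass M σ}

/-- The row-column graph `G(M)`. -/
def rowColGraph {t u : ℕ} (M : Fin t → Fin u → ℤ) : SimpleGraph (Fin t ⊕ Fin u) :=
  SimpleGraph.fromRel fun x y =>
    ∃ (i : Fin t) (j : Fin u), x = Sum.inl i ∧ y = Sum.inr j ∧ M i j ≠ 0

/-!
Let `μ` be the Perron eigenvalue of `G(M)`, with positive eigenvector `x`.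

A gridded permutation is a word of nonzero cells listing its points from left to right, together
with the word listing them from bottom to top. The first word is sorted by columns, the second by
rows, and the two have the same content; conversely, every such pair arises. Weighting the cell
`(i, j)` by `x_j / (μ x_i)` in the first word and by `x_i / (μ x_j)` in the second bounds the number
of pairs by a polynomial times `μ ^ (2 n)`. For the lower bound, sort the steps of a walk of length
`2 n` in `G(M)` that lead from columns to rows by columns, and the other steps by rows: up to the
starting point, the walk can be recovered from these two words. Their contents need not agree, but
reversing the walk exchanges them, so two walks with the same contents recombine into two pairs with
matching contents. As the numbers of contents and of griddings are polynomial,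
`gr(Grid(M)) = μ ^ 2`.

Cutting every segment of the standard figure in half makes each half an edge of a signed double
cover of `G(M)`, whose Perron eigenvalue is again `μ`. List the edges carrying the points of a
permutation drawn on the figure by the distance of the points to the midpoints of their segments.
The gridded permutation amounts to the trace of this word, its class modulo commutation of disjoint
edges, so `gr(Geom(M))` is the growth rate of traces. Decomposing traces into pyramids bounds their
generating function through the reversible kernel `p(v, w) = x_w / (μ x_v)`. If `G(M)` has a cycle,
then a non-backtracking ray starts at every vertex and makes the bound strict, so that the
generating function converges even at `μ⁻²`. As the number of traces is submultiplicative,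
`gr(Geom(M)) < μ ^ 2`.

If `G(M)` is a forest, its lines can be oriented consistently with the signs of the cells. The
orders that the points of a gridded permutation must follow along the oriented lines then have no
common cycle, so the points can be placed on the figure one after the other, and
`Grid(M) = Geom(M)`.
-/

/-! ### Growth rates -/

/-- The sequence `a` has growth rate `L`: its `n`-th roots converge to `L`. -/
def HasGrowthRate (a : ℕ → ℝ) (L : ℝ) : Prop :=
  Tendsto (fun n : ℕ => a n ^ (1 / (n : ℝ))) atTop (nhds L)

/-- `a` is at most `b` up to a factor growing polynomially. Shifting `n` by one in the factor lets
it stay positive at `n = 0`. -/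
def PolyLE (a b : ℕ → ℝ) : Prop :=
  ∃ K > 0, ∃ d : ℕ, ∀ n : ℕ, a n ≤ K * ((n : ℝ) + 1) ^ d * b n

theorem PolyLE.of_le {a b : ℕ → ℝ} (h : ∀ n, a n ≤ b n) : PolyLE a b :=
  ⟨1, one_pos, 0, by simpa using h⟩

theorem PolyLE.of_le_pow_mul {a b : ℕ → ℝ} (d : ℕ) (h : ∀ n, a n ≤ ((n : ℝ) + 1) ^ d * b n) :
    PolyLE a b :=
  ⟨1, one_pos, d, by simpa using h⟩

namespace HasGrowthRate

theorem const_mul_poly {K : ℝ} (hK : 0 < K) (d : ℕ) :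
    HasGrowthRate (fun n => K * ((n : ℝ) + 1) ^ d) 1 := by
  have hroot : Tendsto (fun n : ℕ => K ^ (1 / (n : ℝ))) atTop (nhds 1) := by
    simpa [Function.comp_def] using Tendsto.comp
      (Real.continuousAt_const_rpow (b := 0) hK.ne').tendsto
      (tendsto_one_div_atTop_nhds_zero_nat (𝕜 := ℝ))
  have hlin : Tendsto (fun n : ℕ => ((n : ℝ) + 1) ^ (1 / (n : ℝ))) atTop (nhds 1) := by
    have := (tendsto_rpow_div_mul_add (1 : ℝ) 1 (-1) (by norm_num)).comp
      (tendsto_natCast_atTop_atTop.comp (tendsto_add_atTop_nat 1))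
    exact this.congr fun n => by simp
  have hprod := hroot.mul (hlin.pow d)
  rw [one_pow, mul_one] at hprod
  refine hprod.congr fun n => ?_
  rw [Real.mul_rpow hK.le (by positivity), Real.rpow_pow_comm (by positivity)]

theorem const_pow {C : ℝ} (hC : 0 ≤ C) : HasGrowthRate (fun n => C ^ n) C := by
  refine tendsto_const_nhds.congr' ?_
  filter_upwards [eventually_ne_atTop 0] with n hn
  rw [one_div, Real.pow_rpow_inv_natCast hC hn]

variable {a b : ℕ → ℝ} {L L' : ℝ}

theorem mul (ha : HasGrowthRate a L) (hb : HasGrowthRate b L') (ha₀ : ∀ n, 0 ≤ a n)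
    (hb₀ : ∀ n, 0 ≤ b n) : HasGrowthRate (fun n => a n * b n) (L * L') :=
  (Tendsto.mul ha hb).congr fun n => (Real.mul_rpow (ha₀ n) (hb₀ n)).symm

theorem div (ha : HasGrowthRate a L) (hb : HasGrowthRate b L') (hL' : L' ≠ 0)
    (ha₀ : ∀ n, 0 ≤ a n) (hb₀ : ∀ n, 0 ≤ b n) : HasGrowthRate (fun n => a n / b n) (L / L') :=
  (Tendsto.div ha hb hL').congr fun n => (Real.div_rpow (ha₀ n) (hb₀ n) _).symm

theorem of_polyLE (hb : HasGrowthRate b L) (ha₀ : ∀ n, 0 ≤ a n) (hb₀ : ∀ n, 0 ≤ b n)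
    (hab : PolyLE a b) (hba : PolyLE b a) : HasGrowthRate a L := by
  obtain ⟨K, hK, d, hab⟩ := hab
  obtain ⟨K', hK', d', hba⟩ := hba
  have hupper := (const_mul_poly hK d).mul hb (fun n => by positivity) hb₀
  have hlower := hb.div (const_mul_poly hK' d') one_ne_zero hb₀ fun n => by positivity
  rw [one_mul] at hupper
  rw [div_one] at hlower
  refine tendsto_of_tendsto_of_tendsto_of_le_of_le hlower hupper (fun n => ?_) fun n => ?_
  · refine Real.rpow_le_rpow (div_nonneg (hb₀ n) (by positivity)) ?_ (by positivity)
    rw [div_le_iff₀' (by positivity)]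
    exact hba n
  · exact Real.rpow_le_rpow (ha₀ n) (hab n) (by positivity)

theorem mono (ha : HasGrowthRate a L) (hb : HasGrowthRate b L') (ha₀ : ∀ n, 0 ≤ a n)
    (hab : ∀ n, a n ≤ b n) : L ≤ L' :=
  le_of_tendsto_of_tendsto' ha hb fun n => Real.rpow_le_rpow (ha₀ n) (hab n) (by positivity)

end HasGrowthRate

theorem exists_hasGrowthRate_of_submultiplicative {a : ℕ → ℕ} (hpos : ∀ n, 0 < a n)
    (hmul : ∀ m n, a (m + n) ≤ a m * a n) :
    ∃ L, HasGrowthRate (fun n => a n) L ∧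
      ∀ n ≠ 0, ∀ C : ℝ, 0 ≤ C → (a n : ℝ) < C ^ n → L < C := by
  have hlog : Subadditive fun n => Real.log (a n) := fun m n => by
    rw [← Real.log_mul (Nat.cast_ne_zero.2 (hpos m).ne') (Nat.cast_ne_zero.2 (hpos n).ne')]
    exact Real.log_le_log (Nat.cast_pos.2 (hpos _)) (mod_cast hmul m n)
  have hbdd : BddBelow (Set.range fun n : ℕ => Real.log (a n) / n) :=
    ⟨0, by rintro _ ⟨n, rfl⟩; exact div_nonneg (Real.log_natCast_nonneg _) n.cast_nonneg⟩
  have hroot (n : ℕ) : Real.exp (Real.log (a n) / n) = (a n : ℝ) ^ (1 / (n : ℝ)) := by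
    rw [Real.rpow_def_of_pos (Nat.cast_pos.2 (hpos n)), mul_one_div]
  refine ⟨Real.exp hlog.lim, ?_, fun n hn C hC hlt => ?_⟩
  · exact ((Real.continuous_exp.tendsto _).comp (hlog.tendsto_lim hbdd)).congr hroot
  · calc Real.exp hlog.lim ≤ Real.exp (Real.log (a n) / n) :=
          Real.exp_le_exp.2 (hlog.lim_le_div hbdd hn)
      _ = (a n : ℝ) ^ (1 / (n : ℝ)) := hroot n
      _ < (C ^ n) ^ (1 / (n : ℝ)) := Real.rpow_lt_rpow (by positivity) hlt (by positivity)
      _ = C := by rw [one_div, Real.pow_rpow_inv_natCast hC hn]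

/-! ### The Perron eigenvector of a connected graph -/

section Perron

variable {V : Type*} [Fintype V]

theorem exists_nonneg_eigenvector [Nonempty V] {A : Matrix V V ℝ} (hsymm : A.IsSymm)
    (hA : ∀ v w, 0 ≤ A v w) :
    ∃ (x : V → ℝ) (μ : ℝ), 0 ≤ x ∧ x ≠ 0 ∧ A.mulVec x = μ • x := by
  let T := Matrix.toEuclideanCLM (n := V) (𝕜 := ℝ) A
  have hT : IsSelfAdjoint T :=
    (show IsSelfAdjoint A from hsymm).map (Matrix.toEuclideanCLM (n := V) (𝕜 := ℝ))
  have hform (x : EuclideanSpace ℝ V) : T.reApplyInnerSelf x = ∑ v, ∑ w, x v * (A v w * x w) := by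
    rw [T.reApplyInnerSelf_apply, RCLike.re_to_real, real_inner_comm,
      Matrix.inner_toEuclideanCLM]
    simp only [dotProduct, Matrix.mulVec, Finset.mul_sum]
  obtain ⟨x, hx, hmax⟩ := (isCompact_sphere (0 : EuclideanSpace ℝ V) 1).exists_isMaxOn
    (NormedSpace.sphere_nonempty.2 zero_le_one) T.reApplyInnerSelf_continuous.continuousOn
  -- The form does not decrease when `x` is replaced by its entrywise absolute value.
  let y : EuclideanSpace ℝ V := WithLp.toLp 2 fun v => |x v|
  have hle : T.reApplyInnerSelf x ≤ T.reApplyInnerSelf y := by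
    rw [hform, hform]
    refine Finset.sum_le_sum fun v _ => Finset.sum_le_sum fun w _ => ?_
    calc x v * (A v w * x w) ≤ |x v * (A v w * x w)| := le_abs_self _
      _ = |x v| * (A v w * |x w|) := by rw [abs_mul, abs_mul, abs_of_nonneg (hA v w)]
  have hy : ‖y‖ = 1 := by
    rw [← mem_sphere_zero_iff_norm.1 hx, EuclideanSpace.norm_eq, EuclideanSpace.norm_eq]
    simp only [y, Real.norm_eq_abs, abs_abs]
  have hymax : IsMaxOn T.reApplyInnerSelf (Metric.sphere 0 ‖y‖) y := fun z hz =>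
    (hmax (hy ▸ hz)).trans hle
  have heig := hT.eq_smul_self_of_isLocalExtrOn (Or.inr hymax.localize)
  refine ⟨y, T.rayleighQuotient y, fun v => abs_nonneg _, ?_, ?_⟩
  · rintro h
    rw [(WithLp.ofLp_eq_zero 2).1 h, norm_zero] at hy
    exact zero_ne_one hy
  · rw [← Matrix.ofLp_toEuclideanCLM, heig]
    rfl

theorem exists_perron_eigenvector [Nontrivial V] {G : SimpleGraph V} (hG : G.Connected) :
    ∃ (x : V → ℝ) (μ : ℝ), (∀ v, 0 < x v) ∧ 0 < μ ∧ ∀ v, ∑ w with G.Adj v w, x w = μ * x v := by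
  obtain ⟨x, μ, hx, hx₀, heig⟩ := exists_nonneg_eigenvector (G.isSymm_adjMatrix (α := ℝ))
    fun v w => by rw [G.adjMatrix_apply]; positivity
  have hsum (v : V) : ∑ w with G.Adj v w, x w = μ * x v := by
    simpa [G.neighborFinset_eq_filter] using congrFun heig v
  have hle {v w : V} (h : G.Adj v w) : x v ≤ μ * x w := by
    rw [← hsum w]
    exact Finset.single_le_sum (fun i _ => hx i) (by simpa using h.symm)
  obtain ⟨v₀, hv₀⟩ : ∃ v, 0 < x v := by
    by_contra! h
    exact hx₀ (le_antisymm h hx)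
  have hμ : 0 < μ := by
    obtain ⟨w, hw⟩ := hG.preconnected.exists_adj_of_nontrivial v₀
    exact pos_of_mul_pos_left (hv₀.trans_le (hle hw)) (hx w)
  refine ⟨x, μ, fun v => ?_, hμ, hsum⟩
  obtain ⟨walk⟩ := hG.preconnected v₀ v
  induction walk with
  | nil => exact hv₀
  | cons h _ ih => exact ih (pos_of_mul_pos_right (hv₀.trans_le (hle h)) hμ.le)

end Perron

/-! ### Non-backtracking rays and acyclic graphs -/

section Rays

variable {V : Type*} {G : SimpleGraph V}

/-- A ray of `G`: an infinite walk that never immediately retraces an edge. Vertices may repeat. -/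
structure IsRay (G : SimpleGraph V) (f : ℕ → V) : Prop where
  adj : ∀ n, G.Adj (f n) (f (n + 1))
  ne : ∀ n, f n ≠ f (n + 2)

namespace IsRay

theorem shift {f : ℕ → V} (hf : IsRay G f) : IsRay G fun n => f (n + 1) :=
  ⟨fun n => hf.adj (n + 1), fun n => hf.ne (n + 1)⟩

theorem cons {f : ℕ → V} (hf : IsRay G f) {v : V} (hadj : G.Adj v (f 0)) (hne : v ≠ f 1) :
    IsRay G fun n => Nat.casesOn n v f :=
  ⟨fun n => n.casesOn hadj hf.adj, fun n => n.casesOn hne hf.ne⟩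

theorem exists_walk {f : ℕ → V} (hf : IsRay G f) (k : ℕ) :
    ∃ p : G.Walk (f 0) (f k), p.edges = (List.range k).map fun n => s(f n, f (n + 1)) := by
  induction k with
  | zero => exact ⟨.nil, rfl⟩
  | succ k ih =>
    obtain ⟨p, hp⟩ := ih
    exact ⟨p.concat (hf.adj k), by simp [SimpleGraph.Walk.edges_concat, hp, List.range_succ]⟩

theorem not_isAcyclic [Finite V] {f : ℕ → V} (hf : IsRay G f) : ¬ G.IsAcyclic := by
  have := Fintype.ofFinite V
  intro hG
  obtain ⟨p, hp⟩ := hf.exists_walk (Fintype.card V)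
  have hpath : p.IsPath := by
    rw [hG.isPath_iff_isChain, hp, List.isChain_map, List.isChain_range]
    intro n _ h
    have hmem : f n ∈ s(f (n + 1), f (n + 2)) := h ▸ Sym2.mem_mk_left _ _
    exact (Sym2.mem_iff.1 hmem).elim (hf.adj n).ne (hf.ne n)
  have hlength : p.length = Fintype.card V := by
    rw [← p.length_edges, hp, List.length_map, List.length_range]
  exact hpath.length_lt.ne hlength

theorem exists_of_isCycle {v : V} {c : G.Walk v v} (hc : c.IsCycle) : ∃ f, IsRay G f ∧ f 0 = v := by
  have hlength := hc.three_le_length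
  have hmod (n : ℕ) : n % c.length < c.length := n.mod_lt (by lia)
  have hsucc (n : ℕ) : c.getVert ((n + 1) % c.length) = c.getVert (n % c.length + 1) := by
    rw [Nat.add_mod_eq_ite, Nat.mod_eq_of_lt (show 1 < c.length by lia)]
    split_ifs with hwrap
    · rw [show n % c.length + 1 = c.length from le_antisymm (hmod n) hwrap, Nat.sub_self,
        c.getVert_zero, c.getVert_length]
    · rfl
  have hne (n : ℕ) : n % c.length ≠ (n + 2) % c.length := by
    rw [Nat.add_mod_eq_ite, Nat.mod_eq_of_lt (show 2 < c.length by lia)]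
    grind
  refine ⟨fun n => c.getVert (n % c.length), ⟨fun n => ?_, fun n h => hne n ?_⟩, by simp⟩
  · exact hsucc n ▸ c.adj_getVert_succ (hmod n)
  · exact hc.getVert_injOn' (Nat.le_sub_one_of_lt (hmod n)) (Nat.le_sub_one_of_lt (hmod (n + 2))) h

theorem exists_start (hG : G.Connected) (hcyclic : ¬ G.IsAcyclic) (v : V) :
    ∃ f, IsRay G f ∧ f 0 = v := by
  simp only [SimpleGraph.IsAcyclic, not_forall, not_not] at hcyclic
  obtain ⟨r, c, hc⟩ := hcyclic
  obtain ⟨p⟩ := hG.preconnected v r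
  induction p with
  | nil => exact exists_of_isCycle hc
  | @cons a b _ h _ ih =>
    obtain ⟨f, hf, rfl⟩ := ih c hc
    by_cases hback : f 1 = a
    · exact ⟨_, hf.shift, hback⟩
    · exact ⟨_, hf.cons h (Ne.symm hback), rfl⟩

end IsRay

/-- The parity of the number of edges outside `P` on the path from a fixed root. -/
theorem exists_balanced_coloring (hconn : G.Connected) (hG : G.IsAcyclic) (P : Set (Sym2 V)) :
    ∃ ε : V → Bool, ∀ v w, G.Adj v w → (ε v = ε w ↔ s(v, w) ∈ P) := by
  obtain ⟨r⟩ := hconn.nonempty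
  choose path hpath using fun v => (hconn.preconnected r v).exists_isPath
  let color (v : V) : Bool := ((path v).edges.countP fun e => decide (e ∉ P)).bodd
  have hcolor {v w : V} (h : G.Adj v w) (hv : v ∈ (path w).support) :
      color v = color w ↔ s(v, w) ∈ P := by
    simp only [color, hG.path_concat (hpath v) (hpath w) h hv, SimpleGraph.Walk.edges_concat,
      List.concat_eq_append, List.countP_append, Nat.bodd_add]
    by_cases he : s(v, w) ∈ P <;> simp [he]
  refine ⟨color, fun v w h => ?_⟩
  by_cases hv : v ∈ (path w).support
  · exact hcolor h hv
  · rw [eq_comm, Sym2.eq_swap]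
    exact hcolor h.symm
      (hG.mem_support_of_ne_mem_support_of_adj_of_isPath (hpath v) (hpath w) h hv)

end Rays

/-! ### Signed double covers -/

section SignedCover

variable {V : Type*} {G : SimpleGraph V} {P : Set (Sym2 V)}

/-- The double cover of the signed graph `G` whose positive edges are those in `P`: a positive edge
lifts to two edges within the sheets, any other edge to two edges between them. -/
def signedCover (G : SimpleGraph V) (P : Set (Sym2 V)) : SimpleGraph (V × Bool) where
  Adj v w := G.Adj v.1 w.1 ∧ (v.2 = w.2 ↔ s(v.1, w.1) ∈ P)
  symm := ⟨fun v w h => ⟨h.1.symm, by rw [eq_comm, Sym2.eq_swap]; exact h.2⟩⟩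
  loopless := ⟨fun v h => h.1.ne rfl⟩

theorem exists_signedCover_adj {v : V × Bool} {w : V} (h : G.Adj v.1 w) :
    ∃ c, (signedCover G P).Adj v (w, c) := by
  by_cases hP : s(v.1, w) ∈ P
  · exact ⟨v.2, h, by simpa using hP⟩
  · exact ⟨!v.2, h, by simpa using hP⟩

theorem signedCover_edgeSet_nonempty {v w : V} (h : G.Adj v w) :
    (signedCover G P).edgeSet.Nonempty :=
  let ⟨c, hc⟩ := exists_signedCover_adj (P := P) (v := (v, true)) h
  ⟨s((v, true), (w, c)), hc⟩

theorem sum_signedCover_adj [Fintype V] (x : V → ℝ) (v : V × Bool) :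
    ∑ w with (signedCover G P).Adj v w, x w.1 = ∑ w with G.Adj v.1 w, x w := by
  rw [Finset.sum_filter, Finset.sum_filter, Fintype.sum_prod_type]
  refine Finset.sum_congr rfl fun w _ => ?_
  rw [Fintype.sum_bool]
  obtain ⟨v, b⟩ := v
  by_cases hP : s(v, w) ∈ P <;> cases b <;> simp [signedCover, hP]

theorem IsRay.lift_signedCover {f : ℕ → V} (hf : IsRay G f) {v : V × Bool} (hv : f 0 = v.1) :
    ∃ g, IsRay (signedCover G P) g ∧ g 0 = v := by
  choose c hc using fun (n : ℕ) (b : Bool) =>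
    exists_signedCover_adj (P := P) (v := (f n, b)) (hf.adj n)
  let g (n : ℕ) : V × Bool := (f n, Nat.rec v.2 c n)
  exact ⟨g, ⟨fun n => hc n _, fun n h => hf.ne n (congrArg Prod.fst h)⟩, Prod.ext hv rfl⟩

end SignedCover

/-! ### Scheduling tokens on the lines of an acyclic graph -/

section Schedule

variable {V T K : Type*} [LinearOrder K]

/-- Token `p` precedes token `q` if they share one of their two lines `line true p`, `line false p`
and `p` has the smaller key on it. -/
def Precedes (line : Bool → T → V) (key : Bool → T → K) (p q : T) : Prop :=
  ∃ b, line b p = line b q ∧ key b p < key b q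

variable [Finite T] {G : SimpleGraph V} {line : Bool → T → V} {key : Bool → T → K}

/-- Following, from a token that comes first on one line, the first token on its other line gives
a ray, as no token precedes both. -/
theorem wellFounded_precedes [Finite V] (hG : G.IsAcyclic)
    (hadj : ∀ b p, G.Adj (line b p) (line (!b) p))
    (hkey : ∀ b p q, line b p = line b q → line (!b) p = line (!b) q → key b p < key b q →
      key (!b) p < key (!b) q) :
    WellFounded (Precedes line key) := by
  rw [WellFounded.wellFounded_iff_has_min]
  intro S ⟨p₀, hp₀⟩
  by_contra! hmin
  let First (b : Bool) (p : T) : Prop := p ∈ S ∧ ∀ q ∈ S, line b q = line b p → key b p ≤ key b q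
  have hfirst (b : Bool) {p : T} (hp : p ∈ S) :
      ∃ q, First b q ∧ line b q = line b p ∧ key b q ≤ key b p := by
    obtain ⟨q, ⟨hq, hqp⟩, hle⟩ := Set.exists_min_image {q | q ∈ S ∧ line b q = line b p} (key b)
      (Set.toFinite _) ⟨p, hp, rfl⟩
    exact ⟨q, ⟨hq, fun z hz hzq => hle z ⟨hz, hzq.trans hqp⟩⟩, hqp, hle p ⟨hp, rfl⟩⟩
  have hnext (s : {s : Bool × T // First s.1 s.2}) :
      ∃ q, First (!s.1.1) q ∧ line (!s.1.1) q = line (!s.1.1) s.1.2 ∧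
        line s.1.1 q ≠ line s.1.1 s.1.2 := by
    obtain ⟨⟨b, p⟩, hp, hple⟩ := s
    obtain ⟨z, hz, c, hzp, hlt⟩ := hmin p hp
    obtain rfl : c = !b := Bool.eq_not.2 fun hcb => by
      subst hcb; exact (hple z hz hzp).not_gt hlt
    obtain ⟨q, hq, hqz, hqle⟩ := hfirst (!b) hz
    refine ⟨q, hq, hqz.trans hzp, fun h => (hple q hq.1 h).not_gt ?_⟩
    simpa using hkey (!b) q p (hqz.trans hzp) (by simpa using h) (hqle.trans_lt hlt)
  choose next hnext_first hnext_line hnext_ne using hnext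
  obtain ⟨q₀, hq₀, -⟩ := hfirst true hp₀
  let seq (n : ℕ) : {s : Bool × T // First s.1 s.2} :=
    Nat.rec ⟨(true, q₀), hq₀⟩ (fun _ s => ⟨(!s.1.1, next s), hnext_first s⟩) n
  have hray : IsRay G fun n => line (seq n).1.1 (seq n).1.2 := by
    refine ⟨fun n => (hnext_line (seq n)).symm ▸ hadj _ _, fun n h => hnext_ne (seq n) ?_⟩
    have hback : (seq (n + 2)).1.1 = (seq n).1.1 := Bool.not_not _
    have hline := hnext_line (seq (n + 1))
    rw [show (!(seq (n + 1)).1.1) = (seq n).1.1 from Bool.not_not _] at hline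
    exact hline.symm.trans ((congrArg (line · (next (seq (n + 1)))) hback).symm.trans h.symm)
  exact hray.not_isAcyclic hG

theorem exists_rank_of_wellFounded {R : T → T → Prop} (hR : WellFounded R) :
    ∃ d : T → ℕ, ∀ p q, R p q → d p < d q := by
  have := Fintype.ofFinite T
  refine ⟨fun p => Finset.card {q | Relation.TransGen R q p}, fun p q h => ?_⟩
  refine Finset.card_lt_card ((Finset.ssubset_iff_of_subset ?_).2 ⟨p, ?_, ?_⟩)
  · exact Finset.monotone_filter_right _ fun z _ hz => hz.tail h
  · simpa using Relation.TransGen.single h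
  · simpa using hR.transGen.irrefl.irrefl p

end Schedule

/-! ### Weights of languages -/

section LangWeight

open scoped ENNReal Computability

variable {α : Type*}

/-- The generating function of the language `L` by length, evaluated at `z`. -/
def langWeight (z : ℝ≥0∞) (L : Language α) : ℝ≥0∞ :=
  ∑' l : {l // l ∈ L}, z ^ l.1.length

variable {z : ℝ≥0∞}

theorem langWeight_one : langWeight z (1 : Language α) = 1 :=
  (tsum_singleton ([] : List α) fun l => z ^ l.length).trans (pow_zero z)

theorem langWeight_cons_image (a : α) (L : Language α) :
    langWeight z (List.cons a '' {l | l ∈ L} : Set (List α)) = z * langWeight z L := by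
  refine (tsum_image (fun l : List α => z ^ l.length) (List.cons_injective.injOn)).trans ?_
  simp only [List.length_cons, pow_succ', ENNReal.tsum_mul_left]
  rfl

theorem langWeight_mul_le (L M : Language α) :
    langWeight z (L * M) ≤ langWeight z L * langWeight z M := by
  let append (p : {l // l ∈ L} × {l // l ∈ M}) : {l // l ∈ L * M} :=
    ⟨p.1.1 ++ p.2.1, Language.append_mem_mul p.1.2 p.2.2⟩
  have happend : Function.Surjective append := by
    rintro ⟨_, p, hp, q, hq, rfl⟩
    exact ⟨(⟨p, hp⟩, ⟨q, hq⟩), rfl⟩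
  calc langWeight z (L * M) ≤ ∑' p, z ^ (append p).1.length :=
        ENNReal.tsum_le_tsum_comp_of_surjective happend fun l => z ^ l.1.length
    _ = ∑' p : {l // l ∈ L}, ∑' q : {l // l ∈ M}, z ^ p.1.length * z ^ q.1.length := by
        rw [ENNReal.tsum_prod']
        simp only [append, List.length_append, pow_add]
    _ = langWeight z L * langWeight z M := by
        simp_rw [ENNReal.tsum_mul_left, ENNReal.tsum_mul_right]
        rfl

theorem langWeight_pow_le (L : Language α) (n : ℕ) : langWeight z (L ^ n) ≤ langWeight z L ^ n := by
  induction n with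
  | zero => rw [pow_zero, pow_zero, langWeight_one]
  | succ n ih =>
    rw [pow_succ, pow_succ]
    exact (langWeight_mul_le _ _).trans (mul_le_mul_left ih _)

theorem langWeight_kstar_le (L : Language α) : langWeight z L∗ ≤ (1 - langWeight z L)⁻¹ := by
  rw [Language.kstar_eq_iSup_pow, ← ENNReal.tsum_geometric]
  refine (ENNReal.tsum_iUnion_le_tsum (fun l : List α => z ^ l.length) fun n =>
    {l | l ∈ L ^ n}).trans ?_
  exact ENNReal.tsum_le_tsum (langWeight_pow_le L)

end LangWeight

/-! ### Traces of words of edges -/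

section Traces

open scoped ENNReal Computability

variable {V : Type*} {G : SimpleGraph V}

/-- The words of edges of `G` with both ends in `S`. -/
def edgeWords (G : SimpleGraph V) (S : Set V) : Set (List (Sym2 V)) :=
  {l | ∀ e ∈ l, e ∈ G.edgeSet ∧ ∀ v ∈ e, v ∈ S}

/-- The trace of a word of edges: its class modulo commutation of disjoint edges, encoded by the
subwords of the edges at each vertex. -/
def trace (l : List (Sym2 V)) (v : V) : List (Sym2 V) :=
  l.filter (v ∈ ·)

/-- The traces of length `n` over the edges of `G`. -/
def traces (G : SimpleGraph V) (n : ℕ) : Set (V → List (Sym2 V)) :=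
  trace '' {l | l ∈ edgeWords G Set.univ ∧ l.length = n}

theorem trace_append (l m : List (Sym2 V)) (v : V) : trace (l ++ m) v = trace l v ++ trace m v :=
  List.filter_append ..

theorem trace_append_congr {l l' m m' : List (Sym2 V)} (hl : trace l = trace l')
    (hm : trace m = trace m') : trace (l ++ m) = trace (l' ++ m') := by
  funext v
  rw [trace_append, trace_append, hl, hm]

theorem trace_cons_eq_append_singleton {e : Sym2 V} {l : List (Sym2 V)}
    (h : ∀ f ∈ l, ∀ v ∈ f, v ∉ e) : trace (e :: l) = trace (l ++ [e]) := by
  funext v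
  by_cases hv : v ∈ e
  · have hl : trace l v = [] := List.filter_eq_nil_iff.2 fun f hf hvf =>
      h f hf v (of_decide_eq_true hvf) hv
    rw [← List.singleton_append, trace_append, trace_append, hl, List.append_nil, List.nil_append]
  · simp [trace, hv]

theorem length_eq_of_trace_eq {l l' : List (Sym2 V)} (h : trace l = trace l') :
    l.length = l'.length := by
  refine (List.perm_iff_count.2 fun e => ?_).length_eq
  induction e with | _ v w =>
  have hcount (m : List (Sym2 V)) : m.count s(v, w) = (trace m v).count s(v, w) :=
    (List.count_filter (by simp)).symm
  rw [hcount l, hcount l', h]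

/-- The words for heaps of pieces, in the sense of Viennot, all of whose extremal pieces contain
`v`, with pieces the edges of `G` with both ends in `S`. The recursion on a bound `k` for the
cardinality of `S` splits such a word before each edge at `v`. -/
def pyramid (G : SimpleGraph V) : ℕ → Finset V → V → Language (Sym2 V)
  | 0, _, _ => 1
  | k + 1, S, v => (⨆ w ∈ {w ∈ S.erase v | G.Adj v w},
      (List.cons s(v, w) '' {l | l ∈ pyramid G k (S.erase v) w} : Set (List (Sym2 V))))∗

theorem nil_mem_pyramid (k : ℕ) (S : Finset V) (v : V) : [] ∈ pyramid G k S v := by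
  cases k with
  | zero => exact Language.nil_mem_one
  | succ k => exact Language.nil_mem_kstar _

theorem cons_append_mem_pyramid {k : ℕ} {S : Finset V} {v w : V} (hw : w ∈ S.erase v)
    (hvw : G.Adj v w) {q p : List (Sym2 V)} (hq : q ∈ pyramid G k (S.erase v) w)
    (hp : p ∈ pyramid G (k + 1) S v) : s(v, w) :: q ++ p ∈ pyramid G (k + 1) S v := by
  obtain ⟨L, rfl, hL⟩ := hp
  refine ⟨(s(v, w) :: q) :: L, rfl, List.forall_mem_cons.2 ⟨?_, hL⟩⟩
  exact Language.mem_iSup.2 ⟨w, Language.mem_iSup.2 ⟨Finset.mem_filter.2 ⟨hw, hvw⟩, q, hq, rfl⟩⟩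

/-- Pull the edges not weighing on `v` to the front. -/
theorem exists_trace_eq_append_pyramid {k : ℕ} {S : Finset V} {v : V} (hk : S.card ≤ k)
    (hv : v ∈ S) {l : List (Sym2 V)} (hl : l ∈ edgeWords G S) :
    ∃ m ∈ edgeWords G (S.erase v), ∃ p ∈ pyramid G k S v, trace l = trace (m ++ p) := by
  induction k generalizing S v l with
  | zero => simp [Finset.card_eq_zero.1 (Nat.le_zero.1 hk)] at hv
  | succ k ih =>
    have hk' : (S.erase v).card ≤ k := by rw [Finset.card_erase_of_mem hv]; lia
    induction l with
    | nil => exact ⟨[], by simp [edgeWords], [], nil_mem_pyramid _ _ _, rfl⟩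
    | cons e l ihl =>
      obtain ⟨⟨heG, heS⟩, hl⟩ := List.forall_mem_cons.1 hl
      obtain ⟨m, hm, p, hp, hlp⟩ := ihl hl
      by_cases hve : v ∈ e
      · obtain ⟨w, rfl⟩ := hve
        have hvw : G.Adj v w := heG
        have hw : w ∈ S.erase v := Finset.mem_erase.2 ⟨hvw.ne', heS w (Sym2.mem_mk_right _ _)⟩
        obtain ⟨m', hm', q, hq, hmq⟩ := ih hk' hw hm
        have hdisjoint : ∀ f ∈ m', ∀ u ∈ f, u ∉ s(v, w) := fun f hf u hu huvw => by
          have := (hm' f hf).2 u hu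
          rcases Sym2.mem_iff.1 huvw with rfl | rfl <;> simp at this
        refine ⟨m', fun f hf => ⟨(hm' f hf).1, fun u hu => Finset.mem_of_mem_erase
          ((hm' f hf).2 u hu)⟩, _, cons_append_mem_pyramid hw hvw hq hp, ?_⟩
        calc trace (s(v, w) :: l) = trace ([s(v, w)] ++ (m' ++ q ++ p)) :=
              trace_append_congr (l := [s(v, w)]) rfl (hlp.trans (trace_append_congr hmq rfl))
          _ = trace ((s(v, w) :: m') ++ (q ++ p)) := by simp
          _ = trace ((m' ++ [s(v, w)]) ++ (q ++ p)) :=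
              trace_append_congr (trace_cons_eq_append_singleton hdisjoint) rfl
          _ = trace (m' ++ (s(v, w) :: q ++ p)) := by simp
      · refine ⟨e :: m, List.forall_mem_cons.2 ⟨⟨heG, fun u hu => ?_⟩, hm⟩, p, hp,
          trace_append_congr (l := [e]) (l' := [e]) rfl hlp⟩
        exact Finset.mem_erase.2 ⟨fun h => hve (h ▸ hu), heS u hu⟩

theorem exists_normalForms {z : ℝ≥0∞} (hz : ∀ k S v, langWeight z (pyramid G k S v) ≠ ⊤)
    (S : Finset V) :
    ∃ L, langWeight z L ≠ ⊤ ∧ ∀ l ∈ edgeWords G S, ∃ l' ∈ L, trace l = trace l' := by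
  induction S using Finset.induction_on with
  | empty =>
    refine ⟨1, by simp [langWeight_one], fun l hl => ⟨[], Language.nil_mem_one, ?_⟩⟩
    have hnil : l = [] := List.eq_nil_iff_forall_not_mem.2 fun e he => by
      induction e with | _ v w => simpa using (hl _ he).2 v (Sym2.mem_mk_left _ _)
    rw [hnil]
  | insert v S hv ih =>
    obtain ⟨L, hL, hcover⟩ := ih
    refine ⟨L * pyramid G (insert v S).card (insert v S) v, ?_, fun l hl => ?_⟩
    · exact ((langWeight_mul_le _ _).trans_lt (ENNReal.mul_lt_top hL.lt_top (hz _ _ _).lt_top)).ne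
    · obtain ⟨m, hm, p, hp, hlp⟩ :=
        exists_trace_eq_append_pyramid le_rfl (Finset.mem_insert_self v S) hl
      rw [Finset.erase_insert hv] at hm
      obtain ⟨m', hm', hmm'⟩ := hcover m hm
      exact ⟨_, Language.append_mem_mul hm' hp, hlp.trans (trace_append_congr hmm' rfl)⟩

section Counting

variable [Finite V]

theorem finite_traces (n : ℕ) : (traces G n).Finite :=
  ((List.finite_length_eq _ n).subset fun _ hl => hl.2).image _

theorem ncard_traces_pos (hG : G.edgeSet.Nonempty) (n : ℕ) : 0 < (traces G n).ncard := by
  obtain ⟨e, he⟩ := hG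
  rw [Set.ncard_pos (finite_traces n)]
  refine ⟨_, List.replicate n e, ⟨fun f hf => ?_, List.length_replicate⟩, rfl⟩
  rw [List.eq_of_mem_replicate hf]
  exact ⟨he, fun v _ => Set.mem_univ v⟩

theorem ncard_traces_add_le (m n : ℕ) :
    (traces G (m + n)).ncard ≤ (traces G m).ncard * (traces G n).ncard := by
  have hsub : traces G (m + n) ⊆ (fun p v => p.1 v ++ p.2 v) '' (traces G m ×ˢ traces G n) := by
    rintro _ ⟨l, ⟨hl, hlength⟩, rfl⟩
    refine ⟨(trace (l.take m), trace (l.drop m)), ⟨⟨_, ⟨?_, ?_⟩, rfl⟩, ⟨_, ⟨?_, ?_⟩, rfl⟩⟩, ?_⟩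
    · exact fun e he => hl e (List.mem_of_mem_take he)
    · simp [hlength]
    · exact fun e he => hl e (List.mem_of_mem_drop he)
    · simp [hlength]
    · funext v
      exact (trace_append _ _ _).symm.trans (by rw [List.take_append_drop])
  have hfin := (finite_traces (G := G) m).prod (finite_traces (G := G) n)
  rw [← Set.ncard_prod]
  exact (Set.ncard_le_ncard hsub (hfin.image _)).trans (Set.ncard_image_le hfin)

theorem exists_hasGrowthRate_traces (hG : G.edgeSet.Nonempty) :
    ∃ L, HasGrowthRate (fun n => (traces G n).ncard) L :=
  (exists_hasGrowthRate_of_submultiplicative (ncard_traces_pos hG) ncard_traces_add_le).imp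
    fun _ h => h.1

theorem tsum_ncard_traces_le {z : ℝ≥0∞} {L : Language (Sym2 V)}
    (hL : ∀ l ∈ edgeWords G Set.univ, ∃ l' ∈ L, trace l = trace l') :
    ∑' n, (traces G n).ncard * z ^ n ≤ langWeight z L := by
  have hrep (τ : Σ n, traces G n) : ∃ l : {l // l ∈ L}, trace l.1 = τ.2.1 ∧ l.1.length = τ.1 := by
    obtain ⟨n, _, l, ⟨hl, rfl⟩, rfl⟩ := τ
    obtain ⟨l', hl', h⟩ := hL l hl
    exact ⟨⟨l', hl'⟩, h.symm, length_eq_of_trace_eq h.symm⟩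
  choose rep hrep_trace hrep_length using hrep
  have hinj : Function.Injective rep := by
    rintro ⟨m, τ⟩ ⟨n, υ⟩ h
    obtain rfl : m = n := (hrep_length ⟨m, τ⟩).symm.trans (h ▸ hrep_length ⟨n, υ⟩)
    obtain rfl : τ = υ :=
      Subtype.ext ((hrep_trace ⟨m, τ⟩).symm.trans (h ▸ hrep_trace ⟨m, υ⟩))
    rfl
  refine le_trans (le_of_eq ?_)
    (ENNReal.tsum_comp_le_tsum_of_injective hinj fun l => z ^ l.1.length)
  simp_rw [hrep_length, ENNReal.tsum_sigma', ENNReal.tsum_set_const,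
    ← (finite_traces _).cast_ncard_eq]
  rfl

theorem exists_ncard_traces_mul_pow_lt_one {z : ℝ≥0∞}
    (hz : ∀ k S v, langWeight z (pyramid G k S v) ≠ ⊤) :
    ∃ n ≠ 0, (traces G n).ncard * z ^ n < 1 := by
  have := Fintype.ofFinite V
  by_contra! hge
  obtain ⟨L, hL, hcover⟩ := exists_normalForms hz Finset.univ
  rw [Finset.coe_univ] at hcover
  refine ne_top_of_le_ne_top hL (tsum_ncard_traces_le hcover) ?_
  rw [tsum_eq_zero_add' ENNReal.summable, ENNReal.add_eq_top]
  refine .inr (top_le_iff.1 ?_)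
  calc (⊤ : ℝ≥0∞) = ∑' _ : ℕ, 1 := by rw [ENNReal.tsum_const]; simp
    _ ≤ ∑' n, (traces G (n + 1)).ncard * z ^ (n + 1) :=
        ENNReal.tsum_le_tsum fun n => hge (n + 1) n.succ_ne_zero

end Counting

end Traces

/-! ### Growth rate of traces -/

section TraceGrowth

open scoped ENNReal Computability

theorem sum_lt_sum_of_subset_of_ne_top {ι : Type*} {A B : Finset ι} {f g : ι → ℝ≥0∞} {i : ι}
    (hAB : A ⊆ B) (hfg : ∀ j ∈ A, f j ≤ g j) (hi : i ∈ B) (hgi : g i ≠ 0)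
    (hlt : i ∈ A → f i < g i) (hg : ∑ j ∈ B, g j ≠ ⊤) : ∑ j ∈ A, f j < ∑ j ∈ B, g j := by
  let f' (j : ι) : ℝ≥0∞ := if j ∈ A then f j else 0
  have hf'g (j : ι) : f' j ≤ g j := by
    by_cases hj : j ∈ A <;> simp [f', hj, hfg]
  have hf'i : f' i < g i := by
    by_cases hiA : i ∈ A <;> simp [f', hiA, hlt, pos_iff_ne_zero, hgi]
  have hrest : ∑ j ∈ B.erase i, f' j ≤ ∑ j ∈ B.erase i, g j := Finset.sum_le_sum fun j _ => hf'g j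
  rw [← Finset.add_sum_erase B g hi] at hg ⊢
  calc ∑ j ∈ A, f j = ∑ j ∈ B, f' j := by
        rw [Finset.sum_ite_mem, Finset.inter_eq_right.2 hAB]
    _ = f' i + ∑ j ∈ B.erase i, f' j := (Finset.add_sum_erase B f' hi).symm
    _ < g i + ∑ j ∈ B.erase i, g j := ENNReal.add_lt_add_of_lt_of_le
        (ne_top_of_le_ne_top (ne_top_of_le_ne_top hg le_add_self) hrest) hf'i hrest

variable {V : Type*} {G : SimpleGraph V} {z : ℝ≥0∞}

theorem langWeight_pyramid_succ_le (k : ℕ) (S : Finset V) (v : V) :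
    langWeight z (pyramid G (k + 1) S v) ≤
      (1 - ∑ w ∈ S.erase v with G.Adj v w, z * langWeight z (pyramid G k (S.erase v) w))⁻¹ := by
  refine (langWeight_kstar_le _).trans (ENNReal.inv_le_inv.2 (tsub_le_tsub_left ?_ _))
  refine (ENNReal.tsum_biUnion_le (fun l : List (Sym2 V) => z ^ l.length) _ _).trans ?_
  exact Finset.sum_le_sum fun w _ => (langWeight_cons_image _ _).le

variable [Fintype V]

/-- `p` assigns to each vertex of `G` a subprobability distribution on its neighbours, and the two
values on an edge have product `z`. -/
structure IsReversibleKernel (G : SimpleGraph V) (z : ℝ≥0∞) (p : V → V → ℝ≥0∞) : Prop where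
  ne_zero : ∀ {v w}, G.Adj v w → p v w ≠ 0
  sum_le_one : ∀ v, ∑ w with G.Adj v w, p v w ≤ 1
  mul_eq : ∀ {v w}, G.Adj v w → p v w * p w v = z

namespace IsReversibleKernel

variable {p : V → V → ℝ≥0∞}

theorem le_one (hp : IsReversibleKernel G z p) {v w : V} (hvw : G.Adj v w) : p v w ≤ 1 :=
  (Finset.single_le_sum_of_canonicallyOrdered (f := p v) (by simpa using hvw)).trans
    (hp.sum_le_one v)

theorem ne_top (hp : IsReversibleKernel G z p) {v w : V} (hvw : G.Adj v w) : p v w ≠ ⊤ :=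
  ne_top_of_le_ne_top ENNReal.one_ne_top (hp.le_one hvw)

theorem mul_inv_eq (hp : IsReversibleKernel G z p) {v w : V} (hvw : G.Adj v w) :
    z * (p w v)⁻¹ = p v w := by
  rw [← hp.mul_eq hvw, mul_assoc,
    ENNReal.mul_inv_cancel (hp.ne_zero hvw.symm) (hp.ne_top hvw.symm), mul_one]

theorem sum_erase_le (hp : IsReversibleKernel G z p) {v u : V} (hvu : G.Adj v u) :
    ∑ w ∈ ({w | G.Adj v w} : Finset V).erase u, p v w ≤ 1 - p v u := by
  refine ENNReal.le_sub_of_add_le_left (hp.ne_top hvu) ?_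
  rw [Finset.add_sum_erase _ _ (by simpa using hvu)]
  exact hp.sum_le_one v

theorem sum_erase_ne_top (hp : IsReversibleKernel G z p) {v u : V} (hvu : G.Adj v u) :
    ∑ w ∈ ({w | G.Adj v w} : Finset V).erase u, p v w ≠ ⊤ :=
  ne_top_of_le_ne_top (ENNReal.sub_ne_top ENNReal.one_ne_top) (hp.sum_erase_le hvu)

theorem mul_langWeight_pyramid_le (hp : IsReversibleKernel G z p) {k : ℕ} {S : Finset V} {v w : V}
    (hvw : G.Adj v w) (h : langWeight z (pyramid G k S w) ≤ (p w v)⁻¹) :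
    z * langWeight z (pyramid G k S w) ≤ p v w :=
  (mul_le_mul_right h z).trans_eq (hp.mul_inv_eq hvw)

theorem mul_langWeight_pyramid_lt (hp : IsReversibleKernel G z p) {k : ℕ} {S : Finset V} {v w : V}
    (hvw : G.Adj v w) (h : langWeight z (pyramid G k S w) < (p w v)⁻¹) :
    z * langWeight z (pyramid G k S w) < p v w := by
  have hz : z ≠ 0 := hp.mul_eq hvw ▸ mul_ne_zero (hp.ne_zero hvw) (hp.ne_zero hvw.symm)
  have hz' : z ≠ ⊤ := hp.mul_eq hvw ▸ ENNReal.mul_ne_top (hp.ne_top hvw) (hp.ne_top hvw.symm)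
  exact ((ENNReal.mul_lt_mul_iff_right hz hz').2 h).trans_eq (hp.mul_inv_eq hvw)

theorem langWeight_pyramid_le (hp : IsReversibleKernel G z p) (k : ℕ) {S : Finset V} {v u : V}
    (hvu : G.Adj v u) (hu : u ∉ S) : langWeight z (pyramid G k S v) ≤ (p v u)⁻¹ := by
  induction k generalizing S v u with
  | zero => exact langWeight_one.trans_le (ENNReal.one_le_inv.2 (hp.le_one hvu))
  | succ k ih =>
    refine (langWeight_pyramid_succ_le k S v).trans (ENNReal.inv_le_inv.2 ?_)
    calc p v u = 1 - (1 - p v u) :=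
          (ENNReal.sub_sub_cancel ENNReal.one_ne_top (hp.le_one hvu)).symm
      _ ≤ 1 - ∑ w ∈ S.erase v with G.Adj v w, p v w :=
          tsub_le_tsub_left ((Finset.sum_le_sum_of_subset (by grind)).trans
            (hp.sum_erase_le hvu)) _
      _ ≤ 1 - ∑ w ∈ S.erase v with G.Adj v w, z * langWeight z (pyramid G k (S.erase v) w) := by
          refine tsub_le_tsub_left (Finset.sum_le_sum fun w hw => ?_) _
          have hvw := (Finset.mem_filter.1 hw).2
          exact hp.mul_langWeight_pyramid_le hvw (ih hvw.symm (Finset.notMem_erase v S))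

theorem langWeight_pyramid_lt (hp : IsReversibleKernel G z p) (k : ℕ) {S : Finset V} {f : ℕ → V}
    (hf : IsRay G f) (hS : f 0 ∉ S) :
    langWeight z (pyramid G k S (f 1)) < (p (f 1) (f 0))⁻¹ := by
  have hback := (hf.adj 0).symm
  have hnext : f 2 ∈ ({w | G.Adj (f 1) w} : Finset V).erase (f 0) := by
    simpa using ⟨(hf.ne 0).symm, hf.adj 1⟩
  induction k generalizing S f with
  | zero =>
    rw [pyramid, langWeight_one, ENNReal.one_lt_inv, ← tsub_pos_iff_lt]
    refine lt_of_lt_of_le ?_ (hp.sum_erase_le hback)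
    exact Finset.sum_pos_iff.2 ⟨f 2, hnext, pos_iff_ne_zero.2 (hp.ne_zero (hf.adj 1))⟩
  | succ k ih =>
    refine (langWeight_pyramid_succ_le k S (f 1)).trans_lt
      (ENNReal.inv_lt_inv.2 (lt_tsub_comm.1 (lt_of_lt_of_le ?_ (hp.sum_erase_le hback))))
    refine sum_lt_sum_of_subset_of_ne_top (by grind) (fun w hw => ?_) hnext
      (hp.ne_zero (hf.adj 1)) (fun _ => ?_) (hp.sum_erase_ne_top hback)
    · have hvw := (Finset.mem_filter.1 hw).2
      exact hp.mul_langWeight_pyramid_le hvw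
        (hp.langWeight_pyramid_le k hvw.symm (Finset.notMem_erase _ S))
    · exact hp.mul_langWeight_pyramid_lt (hf.adj 1) (ih hf.shift (Finset.notMem_erase _ S)
        (hf.adj 1).symm (by simpa using ⟨(hf.ne 1).symm, hf.adj 2⟩))

theorem langWeight_pyramid_ne_top (hp : IsReversibleKernel G z p)
    (hray : ∀ v, ∃ f, IsRay G f ∧ f 0 = v) (k : ℕ) (S : Finset V) (v : V) :
    langWeight z (pyramid G k S v) ≠ ⊤ := by
  cases k with
  | zero => rw [pyramid, langWeight_one]; exact ENNReal.one_ne_top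
  | succ k =>
    obtain ⟨f, hf, rfl⟩ := hray v
    refine ((langWeight_pyramid_succ_le k S (f 0)).trans_lt (ENNReal.inv_lt_top.2
      (tsub_pos_of_lt (lt_of_lt_of_le ?_ (hp.sum_le_one (f 0)))))).ne
    refine sum_lt_sum_of_subset_of_ne_top (i := f 1) (by grind) (fun w hw => ?_)
      (by simpa using hf.adj 0) (hp.ne_zero (hf.adj 0)) (fun _ => ?_)
      (ne_top_of_le_ne_top ENNReal.one_ne_top (hp.sum_le_one (f 0)))
    · have hvw := (Finset.mem_filter.1 hw).2
      exact hp.mul_langWeight_pyramid_le hvw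
        (hp.langWeight_pyramid_le k hvw.symm (Finset.notMem_erase _ S))
    · exact hp.mul_langWeight_pyramid_lt (hf.adj 0)
        (hp.langWeight_pyramid_lt k hf (Finset.notMem_erase _ S))

end IsReversibleKernel

theorem isReversibleKernel_of_eigenvector {x : V → ℝ} {μ : ℝ} (hx : ∀ v, 0 < x v) (hμ : 0 < μ)
    (heigen : ∀ v, ∑ w with G.Adj v w, x w = μ * x v) :
    IsReversibleKernel G (ENNReal.ofReal (μ ^ 2)⁻¹)
      fun v w => ENNReal.ofReal (x w / (μ * x v)) where
  ne_zero {v w} _ := by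
    have := hx v
    have := hx w
    exact (ENNReal.ofReal_pos.2 (by positivity)).ne'
  sum_le_one v := by
    have hv : 0 < μ * x v := mul_pos hμ (hx v)
    rw [← ENNReal.ofReal_sum_of_nonneg fun w _ => div_nonneg (hx w).le hv.le, ← Finset.sum_div,
      heigen v, div_self hv.ne', ENNReal.ofReal_one]
  mul_eq {v w} _ := by
    have hv := hx v
    have hw := hx w
    rw [← ENNReal.ofReal_mul (by positivity)]
    congr 1
    field_simp

theorem growthRate_traces_lt (hG : G.edgeSet.Nonempty) {L : ℝ}
    (hL : HasGrowthRate (fun n => (traces G n).ncard) L) (hray : ∀ v, ∃ f, IsRay G f ∧ f 0 = v)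
    {x : V → ℝ} {μ : ℝ} (hx : ∀ v, 0 < x v) (hμ : 0 < μ)
    (heigen : ∀ v, ∑ w with G.Adj v w, x w = μ * x v) : L < μ ^ 2 := by
  obtain ⟨L', hL', hlt⟩ :=
    exists_hasGrowthRate_of_submultiplicative (ncard_traces_pos hG) ncard_traces_add_le
  rw [tendsto_nhds_unique hL hL']
  obtain ⟨n, hn, hsmall⟩ := exists_ncard_traces_mul_pow_lt_one
    ((isReversibleKernel_of_eigenvector hx hμ heigen).langWeight_pyramid_ne_top hray)
  refine hlt n hn (μ ^ 2) (by positivity) ?_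
  rwa [← ENNReal.ofReal_pow (by positivity), ← ENNReal.ofReal_natCast,
    ← ENNReal.ofReal_mul (by positivity), ENNReal.ofReal_lt_one, inv_pow,
    mul_inv_lt_iff₀ (by positivity), one_mul] at hsmall

end TraceGrowth

/-! ### Gridded permutations -/

section Content

variable {n : ℕ} {E : Type*}

/-- The number of occurrences of each letter in a word. -/
def content (ω : Fin n → E) (e : E) : ℕ :=
  Finset.card {p | ω p = e}

theorem content_comp_perm (ω : Fin n → E) (σ : Equiv.Perm (Fin n)) :
    content (ω ∘ σ) = content ω :=
  funext fun e => Finset.card_equiv σ (by simp)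

theorem exists_perm_of_content_eq {ω θ : Fin n → E} (h : content ω = content θ) (s : E → Prop) :
    ∃ σ : Equiv.Perm (Fin n), (∀ p, θ (σ p) = ω p) ∧
      ∀ p q, p < q → ω p = ω q → (σ p < σ q ↔ s (ω p)) := by
  have hfiber (e : E) : ∃ F : {p // ω p = e} ≃ {p // θ p = e},
      ∀ p q, p < q → (F p < F q ↔ s e) := by
    have hcard : Fintype.card {p // θ p = e} = Fintype.card {p // ω p = e} := by
      rw [Fintype.card_subtype, Fintype.card_subtype]
      exact (congrFun h e).symm
    let A := Fintype.orderIsoFinOfCardEq {p // ω p = e} rfl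
    let B := Fintype.orderIsoFinOfCardEq {p // θ p = e} hcard
    by_cases he : s e
    · exact ⟨A.symm.toEquiv.trans B.toEquiv, fun p q hpq => by simpa [he] using hpq⟩
    · exact ⟨(A.symm.toEquiv.trans Fin.revPerm).trans B.toEquiv,
        fun p q hpq => by simpa [he] using hpq.le⟩
  choose F hF using hfiber
  refine ⟨Equiv.ofFiberEquiv F, fun p => Equiv.ofFiberEquiv_map F p, fun p q hpq hω => ?_⟩
  have hq : Equiv.ofFiberEquiv F q = F (ω p) ⟨q, hω.symm⟩ := by
    generalize hp : ω p = e at hω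
    subst hω
    rfl
  rw [hq]
  exact hF (ω p) ⟨p, rfl⟩ ⟨q, hω.symm⟩ hpq

theorem perm_eq_one_of_strictMono_on_fibers {ω : Fin n → E} {ρ : Equiv.Perm (Fin n)}
    (hω : ∀ p, ω (ρ p) = ω p) (hρ : ∀ p q, p < q → ω p = ω q → ρ p < ρ q) : ρ = 1 := by
  ext1 p
  induction p using WellFoundedLT.induction with
  | ind p ih =>
    obtain ⟨q, hq⟩ := ρ.surjective p
    rcases lt_trichotomy (ρ p) p with h | h | h
    · exact ρ.injective (ih _ h)
    · exact h
    · have hqp : p < q := lt_of_not_ge fun hle => by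
        rcases hle.eq_or_lt with rfl | hlt
        · exact h.ne hq.symm
        · exact hlt.ne ((ih q hlt).symm.trans hq)
      exact absurd (hq ▸ hρ p q hqp (by rw [← hω q, hq])) h.not_gt

theorem ncard_range_content_le [Finite E] :
    (Set.range (content : (Fin n → E) → E → ℕ)).ncard ≤ (n + 1) ^ Nat.card E := by
  have := Fintype.ofFinite E
  have hsub : Set.range (content : (Fin n → E) → E → ℕ) ⊆
      Set.range fun (c : E → Fin (n + 1)) e => (c e : ℕ) := by
    rintro _ ⟨ω, rfl⟩
    have hle (e : E) : content ω e ≤ n := (Finset.card_le_univ _).trans_eq (by simp)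
    exact ⟨fun e => ⟨content ω e, Nat.lt_succ_of_le (hle e)⟩, rfl⟩
  refine (Set.ncard_le_ncard hsub (Set.finite_range _)).trans ?_
  rw [← Set.image_univ]
  refine (Set.ncard_image_le Set.finite_univ).trans ?_
  simp [Set.ncard_univ]

theorem ncard_monotone_le [LinearOrder E] [Finite E] :
    {f : Fin n → E | Monotone f}.ncard ≤ (n + 1) ^ Nat.card E := by
  refine (Set.ncard_le_ncard_of_injOn content (t := Set.range content)
    (fun f _ => Set.mem_range_self f) (fun f hf g hg hfg => ?_)
    (Set.finite_range _)).trans ncard_range_content_le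
  obtain ⟨σ, hσ, -⟩ := exists_perm_of_content_eq hfg fun _ => True
  have hcomp : f = g ∘ σ := funext fun p => (hσ p).symm
  exact hcomp.trans (Tuple.unique_monotone (τ := 1) (hcomp ▸ hf) hg)

end Content

section Gridded

variable {n : ℕ} {κ η : Type*} [LinearOrder κ] [LinearOrder η]

/-- `ω` lists the cells of the points of the permutation `σ` from left to right and `θ` lists them
from bottom to top; the columns `κ` and rows `η` are intervals, and the points in a cell are
increasing if it satisfies `s` and decreasing otherwise. -/
structure IsGriddedBy (s : κ × η → Prop) (σ : Equiv.Perm (Fin n)) (ω θ : Fin n → κ × η) :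
    Prop where
  col_mono : Monotone fun p => (ω p).1
  row_mono : Monotone fun p => (θ p).2
  apply_eq : ∀ p, θ (σ p) = ω p
  lt_iff : ∀ p q, p < q → ω p = ω q → (σ p < σ q ↔ s (ω p))

namespace IsGriddedBy

variable {s : κ × η → Prop} {σ σ' : Equiv.Perm (Fin n)} {ω θ ω' θ' : Fin n → κ × η}

theorem content_eq (h : IsGriddedBy s σ ω θ) : content ω = content θ := by
  rw [← content_comp_perm θ σ]
  exact congrArg content (funext fun p => (h.apply_eq p).symm)

theorem perm_unique (h : IsGriddedBy s σ ω θ) (h' : IsGriddedBy s σ' ω θ) : σ = σ' := by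
  have hω (p : Fin n) : ω (σ'.symm (σ p)) = ω p := by
    rw [← h'.apply_eq, Equiv.apply_symm_apply, h.apply_eq]
  have hone : σ'⁻¹ * σ = 1 := perm_eq_one_of_strictMono_on_fibers hω fun p q hpq hpq' => by
    by_contra! hle
    have hlt : σ'.symm (σ q) < σ'.symm (σ p) := hle.lt_of_ne fun h =>
      hpq.ne' (σ.injective (σ'.symm.injective h))
    have := h.lt_iff p q hpq hpq'
    have := h'.lt_iff _ _ hlt (by rw [hω, hω, hpq'])
    rw [hω, Equiv.apply_symm_apply, Equiv.apply_symm_apply, ← hpq'] at this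
    have := σ.injective.ne hpq.ne
    grind
  exact (inv_mul_eq_one.1 hone).symm

theorem words_unique (h : IsGriddedBy s σ ω θ) (h' : IsGriddedBy s σ ω' θ')
    (hcol : (fun p => (ω p).1) = fun p => (ω' p).1)
    (hrow : (fun p => (θ p).2) = fun p => (θ' p).2) : (ω, θ) = (ω', θ') := by
  have hω : ω = ω' := funext fun p => Prod.ext (congrFun hcol p) <| by
    rw [← h.apply_eq, ← h'.apply_eq]
    exact congrFun hrow (σ p)
  refine Prod.ext hω (funext fun p => ?_)
  change θ p = θ' p
  rw [← σ.apply_symm_apply p, h.apply_eq, h'.apply_eq, hω]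

end IsGriddedBy

theorem exists_isGriddedBy (s : κ × η → Prop) {ω θ : Fin n → κ × η}
    (hω : Monotone fun p => (ω p).1) (hθ : Monotone fun p => (θ p).2)
    (h : content ω = content θ) : ∃ σ, IsGriddedBy s σ ω θ := by
  obtain ⟨σ, hσ, hlt⟩ := exists_perm_of_content_eq h s
  exact ⟨σ, hω, hθ, hσ, hlt⟩

variable {s : κ × η → Prop} {W : Set ((Fin n → κ × η) × (Fin n → κ × η))}

theorem ncard_perm_le_ncard_words [Finite κ] [Finite η] :
    {σ | ∃ w ∈ W, IsGriddedBy s σ w.1 w.2}.ncard ≤ W.ncard := by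
  choose! perm hperm using
    fun (w : (Fin n → κ × η) × (Fin n → κ × η)) (h : ∃ σ, IsGriddedBy s σ w.1 w.2) => h
  have hsub : {σ | ∃ w ∈ W, IsGriddedBy s σ w.1 w.2} ⊆ perm '' W := by
    rintro σ ⟨w, hw, hσ⟩
    exact ⟨w, hw, (hperm w ⟨σ, hσ⟩).perm_unique hσ⟩
  exact (Set.ncard_le_ncard hsub).trans (Set.ncard_image_le W.toFinite)

theorem ncard_words_le_ncard_perm [Finite κ] [Finite η]
    (hW : ∀ w ∈ W, ∃ σ, IsGriddedBy s σ w.1 w.2) :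
    W.ncard ≤ (n + 1) ^ (Nat.card κ + Nat.card η) *
      {σ | ∃ w ∈ W, IsGriddedBy s σ w.1 w.2}.ncard := by
  choose! perm hperm using hW
  let colRow (w : (Fin n → κ × η) × (Fin n → κ × η)) : (Fin n → κ) × (Fin n → η) :=
    (fun p => (w.1 p).1, fun p => (w.2 p).2)
  calc W.ncard ≤ (({f : Fin n → κ | Monotone f} ×ˢ {g : Fin n → η | Monotone g}) ×ˢ
        {σ | ∃ w ∈ W, IsGriddedBy s σ w.1 w.2}).ncard := by
        refine Set.ncard_le_ncard_of_injOn (fun w => (colRow w, perm w)) (fun w hw => ?_)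
          (fun w hw w' hw' h => ?_) (Set.toFinite _)
        · exact ⟨⟨(hperm w hw).col_mono, (hperm w hw).row_mono⟩, w, hw, hperm w hw⟩
        · obtain ⟨⟨hcol, hrow⟩, hσ⟩ := by simpa only [colRow, Prod.mk.injEq] using h
          exact (hperm w hw).words_unique (hσ ▸ hperm w' hw') hcol hrow
    _ ≤ _ := by
        rw [Set.ncard_prod, Set.ncard_prod, pow_add]
        gcongr <;> exact ncard_monotone_le

end Gridded

/-! ### Sorting words by lines -/

theorem filter_eq_of_cons_filter_eq {E : Type*} {P : E → Bool} {a : E} {l l' : List E}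
    (h : (a :: l).filter P = (a :: l').filter P) : l.filter P = l'.filter P := by
  rwa [← List.singleton_append, ← List.singleton_append (l := l'), List.filter_append,
    List.filter_append, List.append_right_inj] at h

section LineSort

variable {n : ℕ} {E V : Type*} [LinearOrder V]

theorem eq_of_sorted_of_filter_eq {f : E → V} {l l' : List E}
    (hl : l.Pairwise fun a b => f a ≤ f b) (hl' : l'.Pairwise fun a b => f a ≤ f b)
    (hf : ∀ v, l.filter (f · = v) = l'.filter (f · = v)) : l = l' := by
  induction l generalizing l' with
  | nil =>
    refine (List.eq_nil_iff_forall_not_mem.2 fun a ha => ?_).symm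
    exact List.not_mem_nil (List.mem_of_mem_filter
      ((hf (f a)).symm ▸ List.mem_filter.2 ⟨ha, decide_eq_true rfl⟩))
  | cons a l ih =>
    have hmem (e : E) : e ∈ a :: l ↔ e ∈ l' := by
      have hfilter (m : List E) : e ∈ m ↔ e ∈ m.filter (f · = f e) := by simp
      rw [hfilter (a :: l), hf, ← hfilter]
    cases l' with
    | nil => exact absurd ((hmem a).1 List.mem_cons_self) List.not_mem_nil
    | cons a' l' =>
      rw [List.pairwise_cons] at hl hl'
      have hle : f a ≤ f a' :=
        (List.mem_cons.1 ((hmem a').2 List.mem_cons_self)).elim (fun h => h ▸ le_rfl) (hl.1 a')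
      have hge : f a' ≤ f a :=
        (List.mem_cons.1 ((hmem a).1 List.mem_cons_self)).elim (fun h => h ▸ le_rfl) (hl'.1 a)
      have hhead := hf (f a)
      rw [List.filter_cons_of_pos (by simp), List.filter_cons_of_pos (by simp [hge.antisymm hle])]
        at hhead
      obtain rfl : a = a' := (List.cons.inj hhead).1
      rw [ih hl.2 hl'.2 fun v => filter_eq_of_cons_filter_eq (hf v)]

/-- Position of a point on the line `v` at distance `d` from a base point; lines lie side by side
in the order of `V`, and distances count forwards on lines satisfying `s`, backwards on others. -/
def lineKey (s : V → Prop) (v : V) (d : ℕ) : V ×ₗ ℤ :=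
  toLex (v, if s v then (d : ℤ) else -d)

theorem lineKey_lt_iff_of_eq {s : V → Prop} {v w : V} {d d' : ℕ} (h : v = w) :
    lineKey s v d < lineKey s w d' ↔ if s v then d < d' else d' < d := by
  subst h
  by_cases hv : s v <;> simp [lineKey, Prod.Lex.toLex_lt_toLex, hv]

/-- The enumeration of the times `k : Fin n` by position, the time `k` being at distance `k` on the
line `h k`. -/
def lineSort (s : V → Prop) (h : Fin n → V) : Equiv.Perm (Fin n) :=
  Tuple.sort fun k => lineKey s (h k) k

theorem monotone_comp_lineSort (s : V → Prop) (h : Fin n → V) : Monotone (h ∘ lineSort s h) :=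
  (Prod.Lex.monotone_fst_ofLex (α := V) (β := ℤ)).comp
    (Tuple.monotone_sort fun k => lineKey s (h k) k)

theorem strictMono_lineKey_lineSort (s : V → Prop) (h : Fin n → V) :
    StrictMono fun p => lineKey s (h (lineSort s h p)) (lineSort s h p) := by
  refine (Tuple.monotone_sort fun k => lineKey s (h k) k).strictMono_of_injective
    (Function.Injective.comp (fun k k' hkk' => ?_) (lineSort s h).injective)
  obtain ⟨hline, hdist⟩ := Prod.mk.inj (toLex.injective hkk')
  rw [hline] at hdist
  split_ifs at hdist
  · exact Fin.ext (Nat.cast_injective hdist)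
  · exact Fin.ext (Nat.cast_injective (neg_injective hdist))

theorem eq_lineSort {s : V → Prop} {h : Fin n → V} {τ : Equiv.Perm (Fin n)}
    (hτ : StrictMono fun p => lineKey s (h (τ p)) (τ p)) : τ = lineSort s h :=
  Tuple.eq_sort_iff.2 ⟨hτ.monotone, fun _ _ hpq heq => absurd (hτ hpq) heq.not_lt⟩

theorem lineSort_lt_iff (s : V → Prop) (h : Fin n → V) {p q : Fin n} (hpq : p < q)
    (hline : h (lineSort s h p) = h (lineSort s h q)) :
    lineSort s h p < lineSort s h q ↔ s (h (lineSort s h p)) := by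
  have hne : lineSort s h p ≠ lineSort s h q := (lineSort s h).injective.ne hpq.ne
  have hle := Tuple.monotone_sort (fun k => lineKey s (h k) k) hpq.le
  have hnot := mt (lineKey_lt_iff_of_eq hline.symm).2 hle.not_gt
  by_cases hs : s (h (lineSort s h p))
  · simp only [hs, ← hline, if_true, not_lt, Fin.val_fin_le] at hnot ⊢
    exact iff_true_intro (hnot.lt_of_ne hne)
  · simp only [hs, ← hline, if_false, not_lt, Fin.val_fin_le] at hnot ⊢
    exact iff_false_intro hnot.not_gt

theorem filter_ofFn_comp_perm (l : Fin n → E) (τ : Equiv.Perm (Fin n)) (P : E → Bool)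
    {R : Fin n → Fin n → Prop} [Std.Irrefl R] [IsTrans (Fin n) R] {L : List (Fin n)}
    (hL : L.Perm ((List.finRange n).filter (P ∘ l))) (hLR : L.Pairwise R)
    (hτ : ∀ p q, p < q → P (l (τ p)) → P (l (τ q)) → R (τ p) (τ q)) :
    (List.ofFn (l ∘ τ)).filter P = L.map l := by
  have hperm : (((List.finRange n).filter (P ∘ l ∘ τ)).map τ).Perm L := by
    refine List.Perm.trans ((List.perm_ext_iff_of_nodup ?_ ?_).2 fun k => ?_) hL.symm
    · exact ((List.nodup_finRange n).filter _).map τ.injective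
    · exact (List.nodup_finRange n).filter _
    · simp [← Equiv.eq_symm_apply]
  have hpairwise : (((List.finRange n).filter (P ∘ l ∘ τ)).map τ).Pairwise R := by
    refine List.pairwise_map.2 (((List.pairwise_lt_finRange n).filter _).imp_of_mem ?_)
    intro p q hp hq hpq
    exact hτ p q hpq (List.mem_filter.1 hp).2 (List.mem_filter.1 hq).2
  rw [List.ofFn_eq_map, List.filter_map, ← List.map_map]
  exact congrArg (List.map l) (hperm.eq_of_pairwise
    (fun p q _ _ hpq hqp => (irrefl _ (_root_.trans hpq hqp)).elim) hpairwise hLR)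

/-- The word obtained from `l` by listing its letters by position, the letter at time `k` being at
distance `k` on the line `f (l k)`. -/
def lineWord (s : V → Prop) (f : E → V) (l : Fin n → E) : Fin n → E :=
  l ∘ lineSort s (f ∘ l)

theorem filter_ofFn_lineWord (s : V → Prop) (f : E → V) (l : Fin n → E) (v : V) :
    (List.ofFn (lineWord s f l)).filter (f · = v) =
      if s v then (List.ofFn l).filter (f · = v) else ((List.ofFn l).filter (f · = v)).reverse := by
  have hsort := (List.pairwise_lt_finRange n).filter (fun k => decide (f (l k) = v))
  have hlt {p q : Fin n} (hpq : p < q) (hp : f (lineWord s f l p) = v)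
      (hq : f (lineWord s f l q) = v) :
      lineSort s (f ∘ l) p < lineSort s (f ∘ l) q ↔ s v := by
    rw [← hp]
    exact lineSort_lt_iff s (f ∘ l) hpq (hp.trans hq.symm)
  have hmap : (List.ofFn l).filter (f · = v) =
      ((List.finRange n).filter ((fun e => decide (f e = v)) ∘ l)).map l := by
    rw [List.ofFn_eq_map, List.filter_map]
  split_ifs with hs <;> rw [hmap]
  · exact filter_ofFn_comp_perm l _ _ (.refl _) hsort fun p q hpq hp hq =>
      (hlt hpq (of_decide_eq_true hp) (of_decide_eq_true hq)).2 hs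
  · rw [← List.map_reverse]
    refine filter_ofFn_comp_perm l _ _ (R := (· > ·)) (List.reverse_perm _)
      (List.pairwise_reverse.2 hsort) fun p q hpq hp hq => ?_
    have hnot := mt (hlt hpq (of_decide_eq_true hp) (of_decide_eq_true hq)).1 hs
    exact (not_lt.1 hnot).lt_of_ne ((lineSort s (f ∘ l)).injective.ne hpq.ne')

theorem lineWord_eq_iff (s : V → Prop) (f : E → V) (l l' : Fin n → E) :
    lineWord s f l = lineWord s f l' ↔
      ∀ v, (List.ofFn l).filter (f · = v) = (List.ofFn l').filter (f · = v) := by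
  have hsorted (m : Fin n → E) :
      (List.ofFn (lineWord s f m)).Pairwise fun a b => f a ≤ f b :=
    List.pairwise_ofFn.2 fun p q hpq => monotone_comp_lineSort s (f ∘ m) hpq.le
  constructor
  · intro h v
    have hfilter := congrArg (fun m => (List.ofFn m).filter (f · = v)) h
    simp only [filter_ofFn_lineWord] at hfilter
    split_ifs at hfilter
    · exact hfilter
    · exact List.reverse_injective hfilter
  · intro h
    refine List.ofFn_injective (eq_of_sorted_of_filter_eq (hsorted l) (hsorted l') fun v => ?_)
    rw [filter_ofFn_lineWord, filter_ofFn_lineWord, h]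

end LineSort

/-! ### Matched words -/

/-- The words of length `n` over `A` whose letters are sorted by `f`. -/
def sortedWords {E V : Type*} [LinearOrder V] (f : E → V) (A : Set E) (n : ℕ) :
    Set (Fin n → E) :=
  {ω | Monotone (f ∘ ω) ∧ ∀ p, ω p ∈ A}

theorem sum_sortedWords_prod_le {E V : Type*} [LinearOrder V] [Finite V] [Fintype E] {f : E → V}
    {A : Set E} {q : E → ℝ} (hq : ∀ v, ∑ e with e ∈ A ∧ f e = v, q e = 1) (n : ℕ) :
    ∑ ω with ω ∈ sortedWords f A n, ∏ p, q (ω p) ≤ ((n : ℝ) + 1) ^ Nat.card V := by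
  have := Fintype.ofFinite V
  calc ∑ ω with ω ∈ sortedWords f A n, ∏ p, q (ω p)
      = ∑ γ : Fin n → V with Monotone γ,
          ∑ ω ∈ Fintype.piFinset fun p => {e | e ∈ A ∧ f e = γ p}, ∏ p, q (ω p) := by
        rw [← Finset.sum_fiberwise_of_maps_to (g := fun ω => f ∘ ω)
          (t := {γ : Fin n → V | Monotone γ})
          fun ω hω => Finset.mem_filter.2 ⟨Finset.mem_univ _, (Finset.mem_filter.1 hω).2.1⟩]
        refine Finset.sum_congr rfl fun γ hγ => Finset.sum_congr ?_ fun _ _ => rfl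
        ext ω
        simp only [Finset.mem_filter, Finset.mem_univ, true_and, Fintype.mem_piFinset] at hγ ⊢
        constructor
        · rintro ⟨⟨-, hA⟩, rfl⟩ p
          exact ⟨hA p, rfl⟩
        · intro h
          obtain rfl : f ∘ ω = γ := funext fun p => (h p).2
          exact ⟨⟨hγ, fun p => (h p).1⟩, rfl⟩
    _ = ({γ : Fin n → V | Monotone γ}.ncard : ℝ) := by
        simp only [← Finset.prod_univ_sum, hq, Finset.prod_const_one, Finset.sum_const,
          nsmul_one, Set.ncard_eq_toFinset_card', Set.toFinset_ofPred]
    _ ≤ ((n : ℝ) + 1) ^ Nat.card V := mod_cast ncard_monotone_le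

section Matched

variable {κ η : Type*} [LinearOrder κ] [LinearOrder η]

/-- The pairs consisting of a column-sorted and a row-sorted word over the cells `A` with the same
content. -/
def matchedWords (A : Set (κ × η)) (n : ℕ) : Set ((Fin n → κ × η) × (Fin n → κ × η)) :=
  {w | content w.1 = content w.2 ∧ w.1 ∈ sortedWords Prod.fst A n ∧
    w.2 ∈ sortedWords Prod.snd A n}

theorem ncard_sortedWords_mul_le [Finite κ] [Finite η] {n : ℕ} (A : Set (κ × η))
    (b : κ × η → ℕ) :
    {ω ∈ sortedWords Prod.fst A n | content ω = b}.ncard *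
      {θ ∈ sortedWords Prod.snd A n | content θ = b}.ncard ≤ (matchedWords A n).ncard := by
  rw [← Set.ncard_prod]
  refine Set.ncard_le_ncard ?_ (Set.toFinite _)
  rintro w ⟨⟨hω, hωb⟩, hθ, hθb⟩
  exact ⟨hωb.trans hθb.symm, hω, hθ⟩

variable [Fintype κ] [Fintype η] {A : Set (κ × η)}

theorem ncard_matchedWords_le_of_weights {q₁ q₂ : κ × η → ℝ} (hq₁ : ∀ e, 0 ≤ q₁ e)
    (hq₂ : ∀ e, 0 ≤ q₂ e) (hsum₁ : ∀ i, ∑ e with e ∈ A ∧ e.1 = i, q₁ e = 1)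
    (hsum₂ : ∀ j, ∑ e with e ∈ A ∧ e.2 = j, q₂ e = 1) {C : ℝ} (hC : 0 < C)
    (hprod : ∀ e, q₁ e * q₂ e = C⁻¹) (n : ℕ) :
    ((matchedWords A n).ncard : ℝ) ≤ ((n : ℝ) + 1) ^ (Nat.card κ + Nat.card η) * C ^ n := by
  have hweight (w) (hw : w ∈ matchedWords A n) :
      (∏ p, q₁ (w.1 p)) * ∏ p, q₂ (w.2 p) = (C ^ n)⁻¹ := by
    obtain ⟨σ, hσ, -⟩ := exists_perm_of_content_eq hw.1 fun _ => True
    rw [← Equiv.prod_comp σ fun p => q₂ (w.2 p), ← Finset.prod_mul_distrib]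
    simp [hσ, hprod]
  rw [← div_le_iff₀ (by positivity), div_eq_mul_inv]
  calc ((matchedWords A n).ncard : ℝ) * (C ^ n)⁻¹
      = ∑ w with w ∈ matchedWords A n, (∏ p, q₁ (w.1 p)) * ∏ p, q₂ (w.2 p) := by
        rw [Finset.sum_congr rfl fun w hw => hweight w (Finset.mem_filter.1 hw).2,
          Finset.sum_const, nsmul_eq_mul, Set.ncard_eq_toFinset_card',
          Set.filter_mem_univ_eq_toFinset]
    _ ≤ ∑ w ∈ ({ω | ω ∈ sortedWords Prod.fst A n} : Finset (Fin n → κ × η)) ×ˢ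
          ({θ | θ ∈ sortedWords Prod.snd A n} : Finset (Fin n → κ × η)),
          (∏ p, q₁ (w.1 p)) * ∏ p, q₂ (w.2 p) := by
        refine Finset.sum_le_sum_of_subset_of_nonneg (fun w hw => ?_) fun w _ _ =>
          mul_nonneg (Finset.prod_nonneg fun _ _ => hq₁ _) (Finset.prod_nonneg fun _ _ => hq₂ _)
        simpa only [Finset.mem_product, Finset.mem_filter_univ]
          using (Finset.mem_filter.1 hw).2.2
    _ = (∑ ω with ω ∈ sortedWords Prod.fst A n, ∏ p, q₁ (ω p)) *
          ∑ θ with θ ∈ sortedWords Prod.snd A n, ∏ p, q₂ (θ p) := by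
        rw [Finset.sum_mul_sum, Finset.sum_product]
    _ ≤ ((n : ℝ) + 1) ^ (Nat.card κ + Nat.card η) := by
        rw [pow_add]
        exact mul_le_mul (sum_sortedWords_prod_le hsum₁ n) (sum_sortedWords_prod_le hsum₂ n)
          (Finset.sum_nonneg fun _ _ => Finset.prod_nonneg fun _ _ => hq₂ _) (by positivity)

variable {x : κ → ℝ} {y : η → ℝ} {μ : ℝ}

theorem ncard_matchedWords_le (hx : ∀ i, 0 < x i) (hy : ∀ j, 0 < y j) (hμ : 0 < μ)
    (hrow : ∀ i, ∑ j with (i, j) ∈ A, y j = μ * x i)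
    (hcol : ∀ j, ∑ i with (i, j) ∈ A, x i = μ * y j) (n : ℕ) :
    ((matchedWords A n).ncard : ℝ) ≤
      ((n : ℝ) + 1) ^ (Nat.card κ + Nat.card η) * (μ ^ 2) ^ n := by
  refine ncard_matchedWords_le_of_weights (q₁ := fun e => y e.2 / (μ * x e.1))
    (q₂ := fun e => x e.1 / (μ * y e.2))
    (fun e => div_nonneg (hy _).le (mul_pos hμ (hx _)).le)
    (fun e => div_nonneg (hx _).le (mul_pos hμ (hy _)).le)
    (fun i => ?_) (fun j => ?_) (by positivity) (fun e => ?_) n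
  · have hsum : ∑ e with e ∈ A ∧ e.1 = i, y e.2 / (μ * x e.1) =
        ∑ j with (i, j) ∈ A, y j / (μ * x i) :=
      Finset.sum_nbij' Prod.snd (fun j => (i, j)) (by simp; grind) (by simp) (by simp; grind)
        (by simp) (by simp; grind)
    rw [hsum, ← Finset.sum_div, hrow, div_self (mul_pos hμ (hx i)).ne']
  · have hsum : ∑ e with e ∈ A ∧ e.2 = j, x e.1 / (μ * y e.2) =
        ∑ i with (i, j) ∈ A, x i / (μ * y j) :=
      Finset.sum_nbij' Prod.fst (fun i => (i, j)) (by simp; grind) (by simp) (by simp; grind)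
        (by simp) (by simp; grind)
    rw [hsum, ← Finset.sum_div, hcol, div_self (mul_pos hμ (hy j)).ne']
  · have := hx e.1
    have := hy e.2
    field_simp

end Matched

/-! ### Walks between columns and rows -/

section Zigzag

variable {κ η : Type*} {n : ℕ}

/-- The cells at which the walk `c₀, r₀, c₁, r₁, …, cₙ` leaves its columns. -/
def zigzagOut (w : (Fin (n + 1) → κ) × (Fin n → η)) (k : Fin n) : κ × η :=
  (w.1 k.castSucc, w.2 k)

/-- The cells at which the walk `c₀, r₀, c₁, r₁, …, cₙ` leaves its rows. -/
def zigzagIn (w : (Fin (n + 1) → κ) × (Fin n → η)) (k : Fin n) : κ × η :=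
  (w.1 k.succ, w.2 k)

/-- The reversed walk. -/
def zigzagRev (w : (Fin (n + 1) → κ) × (Fin n → η)) : (Fin (n + 1) → κ) × (Fin n → η) :=
  (w.1 ∘ Fin.rev, w.2 ∘ Fin.rev)

theorem zigzagRev_zigzagRev (w : (Fin (n + 1) → κ) × (Fin n → η)) : zigzagRev (zigzagRev w) = w :=
  Prod.ext (funext fun k => congrArg w.1 k.rev_rev) (funext fun k => congrArg w.2 k.rev_rev)

theorem zigzagOut_zigzagRev (w : (Fin (n + 1) → κ) × (Fin n → η)) :
    zigzagOut (zigzagRev w) = zigzagIn w ∘ Fin.revPerm :=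
  funext fun k => by simp [zigzagOut, zigzagIn, zigzagRev, Fin.rev_castSucc]

theorem zigzagIn_zigzagRev (w : (Fin (n + 1) → κ) × (Fin n → η)) :
    zigzagIn (zigzagRev w) = zigzagOut w ∘ Fin.revPerm :=
  funext fun k => by simp [zigzagOut, zigzagIn, zigzagRev, Fin.rev_succ]

theorem zigzag_eq_of_filter_eq {w w' : (Fin (n + 1) → κ) × (Fin n → η)} (hstart : w.1 0 = w'.1 0)
    (hout : ∀ i, (List.ofFn (zigzagOut w)).filter (·.1 = i) =
      (List.ofFn (zigzagOut w')).filter (·.1 = i))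
    (hin : ∀ j, (List.ofFn (zigzagIn w)).filter (·.2 = j) =
      (List.ofFn (zigzagIn w')).filter (·.2 = j)) : w = w' := by
  induction n with
  | zero => exact Prod.ext (funext fun k => by rwa [Fin.fin_one_eq_zero k]) (Subsingleton.elim _ _)
  | succ n ih =>
    simp only [List.ofFn_succ] at hout hin
    have hrow : w.2 0 = w'.2 0 := by
      have h := hout (w.1 0)
      rw [List.filter_cons_of_pos (by simp [zigzagOut]),
        List.filter_cons_of_pos (by simp [zigzagOut, hstart])] at h
      exact congrArg Prod.snd (List.cons.inj h).1
    have hcol : w.1 1 = w'.1 1 := by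
      have h := hin (w.2 0)
      rw [List.filter_cons_of_pos (by simp [zigzagIn]),
        List.filter_cons_of_pos (by simp [zigzagIn, hrow])] at h
      exact congrArg Prod.fst (List.cons.inj h).1
    have hout₀ : zigzagOut w 0 = zigzagOut w' 0 := Prod.ext hstart hrow
    have hin₀ : zigzagIn w 0 = zigzagIn w' 0 := Prod.ext hcol hrow
    rw [hout₀] at hout
    rw [hin₀] at hin
    have htail : (Fin.tail w.1, Fin.tail w.2) = (Fin.tail w'.1, Fin.tail w'.2) :=
      ih hcol (fun i => filter_eq_of_cons_filter_eq (hout i))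
        (fun j => filter_eq_of_cons_filter_eq (hin j))
    obtain ⟨htail₁, htail₂⟩ := Prod.mk.inj htail
    refine Prod.ext ?_ ?_
    · rw [← Fin.cons_self_tail w.1, ← Fin.cons_self_tail w'.1, hstart, htail₁]
    · rw [← Fin.cons_self_tail w.2, ← Fin.cons_self_tail w'.2, hrow, htail₂]

variable [Fintype κ] [Fintype η] {A : Set (κ × η)} {x : κ → ℝ} {y : η → ℝ} {μ : ℝ}

/-- The pairs `(c, r)` of sequences such that `c₀, r₀, c₁, r₁, …, cₙ` is a walk in the bipartite
graph on columns and rows whose edges are the cells `A`. -/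
def zigzags (A : Set (κ × η)) (n : ℕ) : Finset ((Fin (n + 1) → κ) × (Fin n → η)) :=
  {w | ∀ k, (w.1 k.castSucc, w.2 k) ∈ A ∧ (w.1 k.succ, w.2 k) ∈ A}

theorem sum_zigzags (hrow : ∀ i, ∑ j with (i, j) ∈ A, y j = μ * x i)
    (hcol : ∀ j, ∑ i with (i, j) ∈ A, x i = μ * y j) (n : ℕ) :
    ∑ w ∈ zigzags A n, x (w.1 (Fin.last n)) = (μ ^ 2) ^ n * ∑ i, x i := by
  induction n with
  | zero =>
    rw [pow_zero, one_mul]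
    exact Finset.sum_nbij' (fun w => w.1 0) (fun i => (fun _ => i, Fin.elim0)) (by simp)
      (by simp [zigzags])
      (fun w _ => Prod.ext (funext fun k => by rw [Fin.fin_one_eq_zero k]) (Subsingleton.elim _ _))
      (by simp) (by simp)
  | succ n ih =>
    have hsum : ∑ w ∈ zigzags A (n + 1), x (w.1 (Fin.last (n + 1))) =
        ∑ w ∈ (zigzags A n).sigma fun w => {e | (w.1 (Fin.last n), e.2) ∈ A ∧ e ∈ A}, x w.2.1 := by
      refine Finset.sum_nbij'
        (fun w => ⟨(Fin.init w.1, Fin.init w.2), (w.1 (Fin.last (n + 1)), w.2 (Fin.last n))⟩)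
        (fun w => (Fin.snoc w.1.1 w.2.1, Fin.snoc w.1.2 w.2.2)) ?_ ?_ ?_ ?_ ?_
      · intro w hw
        have hcells := (Finset.mem_filter_univ _).1 hw
        exact Finset.mem_sigma.2 ⟨(Finset.mem_filter_univ _).2 fun k => hcells k.castSucc,
          (Finset.mem_filter_univ _).2 (hcells (Fin.last n))⟩
      · rintro ⟨w, i, j⟩ hw
        simp only [Finset.mem_sigma, zigzags, Finset.mem_filter_univ] at hw ⊢
        rw [Fin.forall_fin_succ']
        simpa [← Fin.castSucc_succ] using hw
      · simp
      · simp
      · simp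
    rw [hsum, Finset.sum_sigma]
    calc _ = ∑ w ∈ zigzags A n, μ ^ 2 * x (w.1 (Fin.last n)) := by
          refine Finset.sum_congr rfl fun w _ => ?_
          simp only [Finset.sum_filter, Fintype.sum_prod_type_right, ite_and]
          simp only [Finset.sum_ite_irrel, ← Finset.sum_filter, hcol, Finset.sum_const_zero]
          rw [← Finset.mul_sum, hrow]
          ring
      _ = (μ ^ 2) ^ (n + 1) * ∑ i, x i := by rw [← Finset.mul_sum, ih]; ring

theorem pow_le_card_zigzags [Nonempty κ] (hx : ∀ i, 0 < x i)
    (hrow : ∀ i, ∑ j with (i, j) ∈ A, y j = μ * x i)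
    (hcol : ∀ j, ∑ i with (i, j) ∈ A, x i = μ * y j) (n : ℕ) :
    (μ ^ 2) ^ n ≤ ((zigzags A n).card : ℝ) := by
  have hpos : 0 < ∑ i, x i := Finset.sum_pos (fun i _ => hx i) Finset.univ_nonempty
  refine le_of_mul_le_mul_right ?_ hpos
  rw [← sum_zigzags hrow hcol, ← nsmul_eq_mul]
  exact Finset.sum_le_card_nsmul _ _ _ fun w _ =>
    Finset.single_le_sum (fun i _ => (hx i).le) (Finset.mem_univ _)

variable [LinearOrder κ] [LinearOrder η]

theorem card_zigzags_content_le (A : Set (κ × η)) (b b' : κ × η → ℕ) :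
    Finset.card {w ∈ zigzags A n | content (zigzagOut w) = b ∧ content (zigzagIn w) = b'} ≤
      Nat.card κ * ({ω ∈ sortedWords Prod.fst A n | content ω = b}.ncard *
        {θ ∈ sortedWords Prod.snd A n | content θ = b'}.ncard) := by
  rw [← Set.ncard_univ, ← Set.ncard_prod, ← Set.ncard_prod, ← Set.ncard_coe_finset]
  refine Set.ncard_le_ncard_of_injOn
    (fun w => (w.1 0, lineWord (fun _ => True) Prod.fst (zigzagOut w),
      lineWord (fun _ => True) Prod.snd (zigzagIn w))) (fun w hw => ?_)
    (fun w _ w' _ h => ?_) (Set.toFinite _)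
  · obtain ⟨hw, hout, hin⟩ := Finset.mem_filter.1 hw
    have hcells := (Finset.mem_filter_univ _).1 hw
    refine ⟨Set.mem_univ _, ⟨⟨monotone_comp_lineSort (fun _ => True) (Prod.fst ∘ zigzagOut w),
      fun p => (hcells _).1⟩, ?_⟩,
      ⟨monotone_comp_lineSort (fun _ => True) (Prod.snd ∘ zigzagIn w), fun p => (hcells _).2⟩, ?_⟩
    · exact (content_comp_perm _ _).trans hout
    · exact (content_comp_perm _ _).trans hin
  · simp only [Prod.mk.injEq, lineWord_eq_iff] at h
    refine zigzag_eq_of_filter_eq h.1 (fun i => ?_) fun j => ?_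
    · convert h.2.1 i
    · convert h.2.2 j

/-- Reversing a walk exchanges the two contents, so the words counted for a walk and for its
reversal can be recombined into two matched pairs. -/
theorem card_zigzags_content_le_ncard_matchedWords (A : Set (κ × η)) (b b' : κ × η → ℕ) :
    Finset.card {w ∈ zigzags A n | content (zigzagOut w) = b ∧ content (zigzagIn w) = b'} ≤
      Nat.card κ * (matchedWords A n).ncard := by
  have hrev : Finset.card {w ∈ zigzags A n | content (zigzagOut w) = b ∧
        content (zigzagIn w) = b'} ≤
      Finset.card {w ∈ zigzags A n | content (zigzagOut w) = b' ∧ content (zigzagIn w) = b} := by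
    refine Finset.card_le_card_of_injOn zigzagRev (fun w hw => ?_)
      (Function.LeftInverse.injective zigzagRev_zigzagRev).injOn
    obtain ⟨hw, hout, hin⟩ := Finset.mem_filter.1 hw
    refine Finset.mem_filter.2 ⟨?_, ?_, ?_⟩
    · have hcells := (Finset.mem_filter_univ _).1 hw
      refine (Finset.mem_filter_univ _).2 fun k => ?_
      simpa [zigzagRev, Fin.rev_castSucc, Fin.rev_succ] using (hcells k.rev).symm
    · rw [zigzagOut_zigzagRev, content_comp_perm, hin]
    · rw [zigzagIn_zigzagRev, content_comp_perm, hout]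
  rw [← Nat.mul_self_le_mul_self_iff]
  calc _ ≤ _ := Nat.mul_le_mul (card_zigzags_content_le A b b')
        (hrev.trans (card_zigzags_content_le A b' b))
    _ = (Nat.card κ * ({ω ∈ sortedWords Prod.fst A n | content ω = b}.ncard *
          {θ ∈ sortedWords Prod.snd A n | content θ = b}.ncard)) *
        (Nat.card κ * ({ω ∈ sortedWords Prod.fst A n | content ω = b'}.ncard *
          {θ ∈ sortedWords Prod.snd A n | content θ = b'}.ncard)) := by ring
    _ ≤ _ := by gcongr <;> exact ncard_sortedWords_mul_le A _

theorem card_zigzags_le (A : Set (κ × η)) (n : ℕ) :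
    (zigzags A n).card ≤
      Nat.card κ * (n + 1) ^ (2 * Nat.card (κ × η)) * (matchedWords A n).ncard := by
  have himage : ((zigzags A n).image fun w => (content (zigzagOut w), content (zigzagIn w))).card ≤
      (n + 1) ^ (2 * Nat.card (κ × η)) := by
    have hfin : (Set.range (content : (Fin n → κ × η) → κ × η → ℕ)).Finite := Set.finite_range _
    rw [two_mul, pow_add, ← Set.ncard_coe_finset]
    refine (Set.ncard_le_ncard (t := Set.range content ×ˢ Set.range content) ?_
      (hfin.prod hfin)).trans ?_
    · rintro _ hb
      obtain ⟨w, -, rfl⟩ := Finset.mem_image.1 hb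
      exact ⟨Set.mem_range_self _, Set.mem_range_self _⟩
    · rw [Set.ncard_prod]
      exact Nat.mul_le_mul ncard_range_content_le ncard_range_content_le
  calc (zigzags A n).card
      ≤ Nat.card κ * (matchedWords A n).ncard *
        ((zigzags A n).image fun w => (content (zigzagOut w), content (zigzagIn w))).card := by
        refine Finset.card_le_mul_card_image _ _ fun b _ => ?_
        simpa only [Prod.ext_iff] using card_zigzags_content_le_ncard_matchedWords A b.1 b.2
    _ ≤ Nat.card κ * (matchedWords A n).ncard * (n + 1) ^ (2 * Nat.card (κ × η)) := by gcongr
    _ = _ := by ring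

theorem hasGrowthRate_matchedWords [Nonempty κ] (hx : ∀ i, 0 < x i) (hy : ∀ j, 0 < y j)
    (hμ : 0 < μ) (hrow : ∀ i, ∑ j with (i, j) ∈ A, y j = μ * x i)
    (hcol : ∀ j, ∑ i with (i, j) ∈ A, x i = μ * y j) :
    HasGrowthRate (fun n => ((matchedWords A n).ncard : ℝ)) (μ ^ 2) := by
  refine (HasGrowthRate.const_pow (sq_nonneg μ)).of_polyLE (fun n => Nat.cast_nonneg _)
    (fun n => by positivity) (.of_le_pow_mul _ (ncard_matchedWords_le hx hy hμ hrow hcol))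
    ⟨Nat.card κ, mod_cast Nat.card_pos, 2 * Nat.card (κ × η), fun n => ?_⟩
  have hcard : ((zigzags A n).card : ℝ) ≤ _ := Nat.cast_le.2 (card_zigzags_le A n)
  exact (pow_le_card_zigzags hx hrow hcol n).trans (hcard.trans_eq (by push_cast; rfl))

end Zigzag

/-! ### Grid classes -/

section Dividers

variable {t k : ℕ}

theorem exists_monotone_of_dividers {c : Fin (t + 1) → ℕ} (hc : Monotone c) (h₀ : c 0 = 0)
    (hlast : c (Fin.last t) = k) :
    ∃ γ : Fin k → Fin t, Monotone γ ∧ ∀ p, c (γ p).castSucc ≤ p ∧ p < c (γ p).succ := by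
  have hblock (p : Fin k) : ∃ i : Fin t, c i.castSucc ≤ p ∧ p < c i.succ := by
    by_contra! h
    have hle (i : Fin (t + 1)) : c i ≤ p := by
      induction i using Fin.induction with
      | zero => exact h₀.le.trans (Nat.zero_le _)
      | succ i ih => exact h i ih
    exact (hlast ▸ hle (Fin.last t)).not_gt p.isLt
  choose γ hγ using hblock
  refine ⟨γ, fun p q hpq => ?_, hγ⟩
  by_contra! hlt
  have hcq := hc (Fin.succ_le_castSucc_iff.2 hlt)
  have hp : c (γ p).castSucc ≤ q := (hγ p).1.trans hpq
  exact ((hγ q).2.trans_le (hcq.trans hp)).false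

theorem exists_dividers_of_monotone {γ : Fin k → Fin t} (hγ : Monotone γ) :
    ∃ c : Fin (t + 1) → ℕ, Monotone c ∧ c 0 = 0 ∧ c (Fin.last t) = k ∧
      ∀ i (p : Fin k), c i.castSucc ≤ p → p < c i.succ → γ p = i := by
  have hlt (m : Fin (t + 1)) (p : Fin k) :
      (p : ℕ) < Finset.card {q | (γ q).succ ≤ m} ↔ (γ p).succ ≤ m :=
    Tuple.lt_card_le_iff_apply_le_of_monotone (Fin.strictMono_succ.monotone.comp hγ)
  refine ⟨fun m => Finset.card {q | (γ q).succ ≤ m}, fun m m' hm => ?_, by simp,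
    by simp [Fin.le_last], fun i p hle hp => ?_⟩
  · exact Finset.card_le_card (Finset.monotone_filter_right _ fun q _ hq => le_trans hq hm)
  · refine le_antisymm (Fin.succ_le_succ_iff.1 ((hlt _ p).1 hp)) (le_of_not_gt fun hγi => ?_)
    exact hle.not_gt ((hlt _ p).2 (Fin.succ_le_castSucc_iff.2 hγi))

end Dividers

section GridClass

variable {t u n : ℕ} {M : Fin t → Fin u → ℤ} {σ : Equiv.Perm (Fin n)}

theorem InGridClass.exists_isGriddedBy (hM : ∀ i j, M i j = 0 ∨ M i j = 1 ∨ M i j = -1)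
    (hσ : InGridClass M σ) :
    ∃ ω θ, (∀ p, M (ω p).1 (ω p).2 ≠ 0) ∧ IsGriddedBy (fun e => M e.1 e.2 = 1) σ ω θ := by
  obtain ⟨c, r, hc, hr, hc₀, hc_last, hr₀, hr_last, hcell⟩ := hσ
  obtain ⟨γ, hγ, hcγ⟩ := exists_monotone_of_dividers hc hc₀ hc_last
  obtain ⟨ρ, hρ, hrρ⟩ := exists_monotone_of_dividers hr hr₀ hr_last
  have hin (p : Fin n) : InCell σ c r (γ p) (ρ (σ p)) p :=
    ⟨(hcγ p).1, (hcγ p).2, (hrρ (σ p)).1, (hrρ (σ p)).2⟩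
  have hne (p : Fin n) : M (γ p) (ρ (σ p)) ≠ 0 := fun h => (hcell _ _).1 h p (hin p)
  refine ⟨fun p => (γ p, ρ (σ p)), fun v => (γ (σ.symm v), ρ v), hne, hγ, hρ, fun p => by simp,
    fun p q hpq hpq' => ⟨fun h => ?_, fun h => ?_⟩⟩
  all_goals
    obtain ⟨hγpq, hρpq⟩ := Prod.mk.inj hpq'
    have hinq := hin q
    rw [← hγpq, ← hρpq] at hinq
  · by_contra hone
    have hneg := ((hM _ _).resolve_left (hne p)).resolve_left hone
    exact h.not_gt ((hcell _ _).2.2 hneg p q (hin p) hinq hpq)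
  · exact (hcell _ _).2.1 h p q (hin p) hinq hpq

theorem IsGriddedBy.inGridClass {ω θ : Fin n → Fin t × Fin u} (hω : ∀ p, M (ω p).1 (ω p).2 ≠ 0)
    (h : IsGriddedBy (fun e => M e.1 e.2 = 1) σ ω θ) : InGridClass M σ := by
  obtain ⟨c, hc, hc₀, hc_last, hcω⟩ := exists_dividers_of_monotone h.col_mono
  obtain ⟨r, hr, hr₀, hr_last, hrθ⟩ := exists_dividers_of_monotone h.row_mono
  have hcell {i j p} (hp : InCell σ c r i j p) : ω p = (i, j) :=
    Prod.ext (hcω i p hp.1 hp.2.1) (h.apply_eq p ▸ hrθ j (σ p) hp.2.2.1 hp.2.2.2)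
  have hlt {i j p q} (hp : InCell σ c r i j p) (hq : InCell σ c r i j q) (hpq : p < q) :
      σ p < σ q ↔ M i j = 1 := by
    simpa only [hcell hp] using h.lt_iff p q hpq ((hcell hp).trans (hcell hq).symm)
  refine ⟨c, r, hc, hr, hc₀, hc_last, hr₀, hr_last, fun i j => ⟨fun hij p hp => ?_,
    fun hij p q hp hq hpq => (hlt hp hq hpq).2 hij, fun hij p q hp hq hpq => ?_⟩⟩
  · exact hω p (by rwa [hcell hp])
  · have hnot : ¬ σ p < σ q := fun hσ => by simp [(hlt hp hq hpq).1 hσ] at hij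
    exact (not_lt.1 hnot).lt_of_ne (σ.injective.ne hpq.ne')

theorem inGridClass_iff (hM : ∀ i j, M i j = 0 ∨ M i j = 1 ∨ M i j = -1) :
    InGridClass M σ ↔ ∃ w ∈ matchedWords {e | M e.1 e.2 ≠ 0} n,
      IsGriddedBy (fun e => M e.1 e.2 = 1) σ w.1 w.2 := by
  constructor
  · intro hσ
    obtain ⟨ω, θ, hω, h⟩ := hσ.exists_isGriddedBy hM
    have hθ (p : Fin n) : M (θ p).1 (θ p).2 ≠ 0 := by
      rw [← σ.apply_symm_apply p, h.apply_eq]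
      exact hω _
    exact ⟨(ω, θ), ⟨h.content_eq, ⟨h.col_mono, hω⟩, h.row_mono, hθ⟩, h⟩
  · rintro ⟨w, hw, h⟩
    exact h.inGridClass hw.2.1.2

theorem hasGrowthRate_gridCount (ht : 0 < t)
    (hM : ∀ i j, M i j = 0 ∨ M i j = 1 ∨ M i j = -1) {x : Fin t → ℝ} {y : Fin u → ℝ} {μ : ℝ}
    (hx : ∀ i, 0 < x i) (hy : ∀ j, 0 < y j) (hμ : 0 < μ)
    (hrow : ∀ i, ∑ j with M i j ≠ 0, y j = μ * x i)
    (hcol : ∀ j, ∑ i with M i j ≠ 0, x i = μ * y j) :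
    HasGrowthRate (fun n => (gridCount M n : ℝ)) (μ ^ 2) := by
  have := Fin.pos_iff_nonempty.1 ht
  have hcount (n : ℕ) : gridCount M n = {σ | ∃ w ∈ matchedWords {e | M e.1 e.2 ≠ 0} n,
      IsGriddedBy (fun e => M e.1 e.2 = 1) σ w.1 w.2}.ncard :=
    congrArg Set.ncard (Set.ext fun σ => inGridClass_iff hM)
  refine (hasGrowthRate_matchedWords (A := {e | M e.1 e.2 ≠ 0}) hx hy hμ
    (fun i => by simpa using hrow i) fun j => by simpa using hcol j).of_polyLE
    (fun n => Nat.cast_nonneg _) (fun n => Nat.cast_nonneg _)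
    (.of_le fun n => ?_) (.of_le_pow_mul (Nat.card (Fin t) + Nat.card (Fin u)) fun n => ?_)
  · rw [hcount]
    exact mod_cast ncard_perm_le_ncard_words
  · rw [hcount]
    exact mod_cast ncard_words_le_ncard_perm fun w hw =>
      exists_isGriddedBy _ hw.2.1.1 hw.2.2.1 hw.1

end GridClass

/-! ### Geometric grid classes -/

/-- The halves of the unit intervals `(i, i + 1)` with `i < m`, in their order on the real line:
`(i, false)` is the half below the midpoint and `(i, true)` the half above it. -/
abbrev HalfInterval (m : ℕ) : Type :=
  Fin m ×ₗ Bool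

namespace HalfInterval

variable {m : ℕ} {v w : HalfInterval m} {x y : ℝ}

/-- The half interval lies above the midpoint, so that coordinates increase with the distance from
the midpoint. -/
def IsUpper (v : HalfInterval m) : Prop :=
  (ofLex v).2

/-- The coordinate of the point of the half interval `v` at distance `x` from the midpoint. -/
def coord (v : HalfInterval m) (x : ℝ) : ℝ :=
  (ofLex v).1 + 1 / 2 + if v.IsUpper then x else -x

theorem coord_lt_coord_iff : v.coord x < v.coord y ↔ if v.IsUpper then x < y else y < x := by
  rw [coord, coord, add_lt_add_iff_left]
  split_ifs
  · rfl
  · exact neg_lt_neg_iff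

theorem lt_iff : v < w ↔ (ofLex v).1 < (ofLex w).1 ∨
    (ofLex v).1 = (ofLex w).1 ∧ ¬ v.IsUpper ∧ w.IsUpper := by
  rw [Prod.Lex.lt_iff, Bool.lt_iff, IsUpper, IsUpper, Bool.not_eq_true]

theorem coord_le_coord_of_lt (hvw : v < w) (hx : x ∈ Set.Ico 0 (1 / 2))
    (hy : y ∈ Set.Ico 0 (1 / 2)) : v.coord x ≤ w.coord y := by
  obtain ⟨hx₀, hx₁⟩ := hx
  obtain ⟨hy₀, hy₁⟩ := hy
  rcases lt_iff.1 hvw with h | ⟨h, hv, hw⟩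
  · have h : ((ofLex v).1 : ℝ) + 1 ≤ (ofLex w).1 := mod_cast h
    simp only [coord]
    split_ifs <;> linarith
  · simp only [coord, h, if_neg hv, if_pos hw]
    linarith

theorem coord_lt_coord_of_lt (hvw : v < w) (hx : x ∈ Set.Ioo 0 (1 / 2))
    (hy : y ∈ Set.Ioo 0 (1 / 2)) : v.coord x < w.coord y := by
  obtain ⟨hx₀, hx₁⟩ := hx
  obtain ⟨hy₀, hy₁⟩ := hy
  rcases lt_iff.1 hvw with h | ⟨h, hv, hw⟩
  · have h : ((ofLex v).1 : ℝ) + 1 ≤ (ofLex w).1 := mod_cast h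
    simp only [coord]
    split_ifs <;> linarith
  · simp only [coord, h, if_neg hv, if_pos hw]
    linarith

theorem coord_lt_coord_of_lineKey_lt {δ : ℕ → ℝ} (hδ : StrictMono δ)
    (hmem : ∀ d, δ d ∈ Set.Ioo 0 (1 / 2)) {d d' : ℕ}
    (h : lineKey IsUpper v d < lineKey IsUpper w d') : v.coord (δ d) < w.coord (δ d') := by
  rcases Prod.Lex.toLex_lt_toLex.1 h with hlt | ⟨heq, -⟩
  · exact coord_lt_coord_of_lt hlt (hmem d) (hmem d')
  · obtain rfl : v = w := heq
    simpa only [coord_lt_coord_iff, lineKey_lt_iff_of_eq, hδ.lt_iff_lt] using h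

theorem lineKey_lt_of_coord_lt {n : ℕ} {δ : Fin n → ℝ} (hδ : Monotone δ)
    (hmem : ∀ k, δ k ∈ Set.Ico 0 (1 / 2)) {k k' : Fin n} (h : v.coord (δ k) < w.coord (δ k')) :
    lineKey IsUpper v k < lineKey IsUpper w k' := by
  rcases lt_trichotomy v w with hlt | rfl | hlt
  · exact Prod.Lex.toLex_lt_toLex.2 (.inl hlt)
  · rw [coord_lt_coord_iff] at h
    rw [lineKey_lt_iff_of_eq rfl]
    split_ifs at h ⊢ <;> exact hδ.reflect_lt h
  · exact absurd h (coord_le_coord_of_lt hlt (hmem k') (hmem k)).not_gt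

end HalfInterval

section HalfCells

variable {t u n : ℕ} {M : Fin t → Fin u → ℤ} {σ : Equiv.Perm (Fin n)}

/-- The two halves of each segment of the standard figure, cut at its midpoint and given by their
projections to the axes. -/
def halfCells (M : Fin t → Fin u → ℤ) : Set (HalfInterval t × HalfInterval u) :=
  {e | M (ofLex e.1).1 (ofLex e.2).1 ≠ 0 ∧
    ((e.1.IsUpper ↔ e.2.IsUpper) ↔ M (ofLex e.1).1 (ofLex e.2).1 = 1)}

theorem coord_mem_stdFigure (hM : ∀ i j, M i j = 0 ∨ M i j = 1 ∨ M i j = -1)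
    {e : HalfInterval t × HalfInterval u} (he : e ∈ halfCells M) {x : ℝ}
    (hx : x ∈ Set.Ico 0 (1 / 2)) : (e.1.coord x, e.2.coord x) ∈ stdFigure M := by
  obtain ⟨hx₀, hx₁⟩ := hx
  obtain ⟨hne, hsign⟩ := he
  refine ⟨(ofLex e.1).1, (ofLex e.2).1, 1 / 2 + if e.1.IsUpper then x else -x, ?_, ?_, ?_⟩
  · split_ifs <;> linarith
  · split_ifs <;> linarith
  · rcases (hM _ _).resolve_left hne with h | h
    · refine .inl ⟨h, Prod.ext (add_assoc ..) ?_⟩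
      simp only [HalfInterval.coord, ← hsign.2 h, add_assoc]
    · refine .inr ⟨h, Prod.ext (add_assoc ..) ?_⟩
      have hiff : ¬ (e.1.IsUpper ↔ e.2.IsUpper) := by simp [hsign, h]
      by_cases h₁ : e.1.IsUpper <;> by_cases h₂ : e.2.IsUpper <;>
        simp [h₁, h₂, HalfInterval.coord] at hiff ⊢ <;> ring

theorem exists_coord_of_mem_stdFigure {z : ℝ × ℝ} (hz : z ∈ stdFigure M) :
    ∃ e ∈ halfCells M, ∃ x ∈ Set.Ico (0 : ℝ) (1 / 2), z = (e.1.coord x, e.2.coord x) := by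
  obtain ⟨i, j, s, hs₀, hs₁, hz⟩ := hz
  obtain ⟨b, x, hx, rfl⟩ : ∃ b : Bool, ∃ x ∈ Set.Ico (0 : ℝ) (1 / 2),
      s = 1 / 2 + if b then x else -x := by
    rcases le_or_gt (1 / 2) s with hs | hs
    · exact ⟨true, s - 1 / 2, ⟨by linarith, by linarith⟩, by simp⟩
    · exact ⟨false, 1 / 2 - s, ⟨by linarith, by linarith⟩, by simp⟩
  rcases hz with ⟨h, rfl⟩ | ⟨h, rfl⟩
  · exact ⟨(toLex (i, b), toLex (j, b)), by simp [halfCells, HalfInterval.IsUpper, h], x, hx,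
      by cases b <;> simp [HalfInterval.coord, HalfInterval.IsUpper, add_assoc]⟩
  · refine ⟨(toLex (i, b), toLex (j, !b)), by simp [halfCells, HalfInterval.IsUpper, h], x, hx,
      Prod.ext ?_ ?_⟩ <;>
      cases b <;> simp [HalfInterval.coord, HalfInterval.IsUpper] <;> ring

/-- The times `d` order the points by their distance from the midpoints of the segments. -/
theorem inGeomClass_of_times (hM : ∀ i j, M i j = 0 ∨ M i j = 1 ∨ M i j = -1)
    {e : Fin n → HalfInterval t × HalfInterval u} (he : ∀ p, e p ∈ halfCells M) {d : Fin n → ℕ}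
    (hcol : ∀ p q, p < q → lineKey HalfInterval.IsUpper (e p).1 (d p) <
      lineKey HalfInterval.IsUpper (e q).1 (d q))
    (hrow : ∀ p q, σ p < σ q → lineKey HalfInterval.IsUpper (e p).2 (d p) <
      lineKey HalfInterval.IsUpper (e q).2 (d q)) : InGeomClass M σ := by
  let δ (k : ℕ) : ℝ := 1 / 2 - 1 / (k + 3)
  have hδ : StrictMono δ := fun k k' hkk' => by
    have hkk' : (k : ℝ) < k' := mod_cast hkk'
    exact sub_lt_sub_left (one_div_lt_one_div_of_lt (by positivity) (by linarith)) _
  have hmem (k : ℕ) : δ k ∈ Set.Ioo 0 (1 / 2) := by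
    have hlt : 1 / ((k : ℝ) + 3) < 1 / 2 := one_div_lt_one_div_of_lt two_pos (by linarith)
    exact ⟨sub_pos.2 hlt, sub_lt_self _ (by positivity)⟩
  have hrow_lt {p q} (hpq : σ p < σ q) : (e p).2.coord (δ (d p)) < (e q).2.coord (δ (d q)) :=
    HalfInterval.coord_lt_coord_of_lineKey_lt hδ hmem (hrow p q hpq)
  refine ⟨fun p => ((e p).1.coord (δ (d p)), (e p).2.coord (δ (d p))),
    fun p => coord_mem_stdFigure hM (he p) ⟨(hmem _).1.le, (hmem _).2⟩,
    fun p q hpq => HalfInterval.coord_lt_coord_of_lineKey_lt hδ hmem (hcol p q hpq),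
    fun p q => ⟨fun h => ?_, hrow_lt⟩⟩
  by_contra! hle
  rcases hle.eq_or_lt with heq | hlt
  · exact h.ne (by rw [σ.injective heq])
  · exact h.not_gt (hrow_lt hlt)

theorem InGeomClass.exists_times (hσ : InGeomClass M σ) :
    ∃ (e : Fin n → HalfInterval t × HalfInterval u) (τ : Equiv.Perm (Fin n)),
      (∀ p, e p ∈ halfCells M) ∧
      (∀ p q, p < q → lineKey HalfInterval.IsUpper (e p).1 (τ p) <
        lineKey HalfInterval.IsUpper (e q).1 (τ q)) ∧
      ∀ p q, σ p < σ q → lineKey HalfInterval.IsUpper (e p).2 (τ p) <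
        lineKey HalfInterval.IsUpper (e q).2 (τ q) := by
  obtain ⟨f, hf, hcol, hrow⟩ := hσ
  choose e he x hx hfe using fun p => exists_coord_of_mem_stdFigure (hf p)
  have hsort := Tuple.monotone_sort x
  have hmem (k : Fin n) : (x ∘ Tuple.sort x) k ∈ Set.Ico 0 (1 / 2) := hx _
  refine ⟨e, (Tuple.sort x).symm, he, fun p q hpq => ?_, fun p q hpq => ?_⟩ <;>
    apply HalfInterval.lineKey_lt_of_coord_lt hsort hmem
  · simpa [hfe] using hcol p q hpq
  · simpa [hfe] using (hrow p q).2 hpq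

end HalfCells

/-! ### Words for geometric grid classes -/

section DrawnPerm

variable {t u n : ℕ}

/-- The permutation formed by points `k : Fin n` at distance increasing with `k` from the midpoint
of their segment, the point `k` being on the half segment with projections `l k`. -/
def drawnPerm (l : Fin n → HalfInterval t × HalfInterval u) : Equiv.Perm (Fin n) :=
  (lineSort HalfInterval.IsUpper (Prod.fst ∘ l)).trans
    (lineSort HalfInterval.IsUpper (Prod.snd ∘ l)).symm

theorem isGriddedBy_drawnPerm (l : Fin n → HalfInterval t × HalfInterval u) :
    IsGriddedBy (fun e => e.1.IsUpper ↔ e.2.IsUpper) (drawnPerm l)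
      (lineWord HalfInterval.IsUpper Prod.fst l) (lineWord HalfInterval.IsUpper Prod.snd l) := by
  set γ := lineSort HalfInterval.IsUpper (Prod.fst ∘ l)
  set ρ := lineSort HalfInterval.IsUpper (Prod.snd ∘ l)
  have hσ (p : Fin n) : ρ (drawnPerm l p) = γ p := ρ.apply_symm_apply _
  refine ⟨monotone_comp_lineSort HalfInterval.IsUpper (Prod.fst ∘ l),
    monotone_comp_lineSort HalfInterval.IsUpper (Prod.snd ∘ l), fun p => congrArg l (hσ p),
    fun p q hpq heq => ?_⟩
  replace heq : l (γ p) = l (γ q) := heq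
  have hcol : γ p < γ q ↔ (l (γ p)).1.IsUpper := lineSort_lt_iff _ _ hpq (congrArg Prod.fst heq)
  have hrow {p q} (hpq : drawnPerm l p < drawnPerm l q) (heq : l (γ p) = l (γ q)) :
      γ p < γ q ↔ (l (γ p)).2.IsUpper := by
    rw [← hσ p, ← hσ q] at heq ⊢
    exact lineSort_lt_iff _ _ hpq (congrArg Prod.snd heq)
  change _ ↔ ((l (γ p)).1.IsUpper ↔ (l (γ p)).2.IsUpper)
  rcases lt_or_gt_of_ne ((drawnPerm l).injective.ne hpq.ne) with h | h
  · exact iff_of_true h (hcol.symm.trans (hrow h heq))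
  · refine iff_of_false h.not_gt fun hiff => ?_
    have hswap := hrow h heq.symm
    rw [← heq, ← hiff, ← hcol] at hswap
    exact (γ.injective.ne hpq.ne).lt_or_gt.elim (fun hlt => (hswap.2 hlt).not_gt hlt)
      fun hgt => (hswap.1 hgt).not_gt hgt

variable {M : Fin t → Fin u → ℤ} {σ : Equiv.Perm (Fin n)}

theorem inGeomClass_iff_exists_drawnPerm (hM : ∀ i j, M i j = 0 ∨ M i j = 1 ∨ M i j = -1) :
    InGeomClass M σ ↔ ∃ l, (∀ k, l k ∈ halfCells M) ∧ drawnPerm l = σ := by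
  constructor
  · intro hσ
    obtain ⟨e, τ, he, hcol, hrow⟩ := hσ.exists_times
    refine ⟨e ∘ τ.symm, fun k => he _, ?_⟩
    have hτ : τ = lineSort HalfInterval.IsUpper (Prod.fst ∘ e ∘ τ.symm) :=
      eq_lineSort fun p q hpq => by simpa using hcol p q hpq
    have hστ : σ.symm.trans τ = lineSort HalfInterval.IsUpper (Prod.snd ∘ e ∘ τ.symm) :=
      eq_lineSort fun p q hpq => by simpa using hrow (σ.symm p) (σ.symm q) (by simpa using hpq)
    ext1 p
    simp [drawnPerm, ← hτ, ← hστ]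
  · rintro ⟨l, hl, rfl⟩
    refine inGeomClass_of_times hM (e := l ∘ lineSort HalfInterval.IsUpper (Prod.fst ∘ l))
      (d := fun p => lineSort HalfInterval.IsUpper (Prod.fst ∘ l) p) (fun p => hl _)
      (fun p q hpq => strictMono_lineKey_lineSort _ (Prod.fst ∘ l) hpq) fun p q hpq => ?_
    simpa [drawnPerm] using strictMono_lineKey_lineSort HalfInterval.IsUpper (Prod.snd ∘ l) hpq

/-- The words by columns and by rows of the permutations drawn on the standard figure. -/
def drawnWords (M : Fin t → Fin u → ℤ) (n : ℕ) :
    Set ((Fin n → HalfInterval t × HalfInterval u) × (Fin n → HalfInterval t × HalfInterval u)) :=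
  (fun l => (lineWord HalfInterval.IsUpper Prod.fst l, lineWord HalfInterval.IsUpper Prod.snd l)) ''
    {l | ∀ k, l k ∈ halfCells M}

theorem inGeomClass_iff (hM : ∀ i j, M i j = 0 ∨ M i j = 1 ∨ M i j = -1) :
    InGeomClass M σ ↔ ∃ w ∈ drawnWords M n,
      IsGriddedBy (fun e => e.1.IsUpper ↔ e.2.IsUpper) σ w.1 w.2 := by
  rw [inGeomClass_iff_exists_drawnPerm hM]
  constructor
  · rintro ⟨l, hl, rfl⟩
    exact ⟨_, ⟨l, hl, rfl⟩, isGriddedBy_drawnPerm l⟩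
  · rintro ⟨_, ⟨l, hl, rfl⟩, hσ⟩
    exact ⟨l, hl, (isGriddedBy_drawnPerm l).perm_unique hσ⟩

end DrawnPerm

section HalfCellGraph

variable {t u n : ℕ} {M : Fin t → Fin u → ℤ}

theorem rowColGraph_adj_inl_inr {i : Fin t} {j : Fin u} :
    (rowColGraph M).Adj (.inl i) (.inr j) ↔ M i j ≠ 0 := by
  simp [rowColGraph, SimpleGraph.fromRel_adj]

theorem exists_eq_of_rowColGraph_adj {v w : Fin t ⊕ Fin u} (h : (rowColGraph M).Adj v w) :
    ∃ i j, (v = .inl i ∧ w = .inr j) ∨ (v = .inr j ∧ w = .inl i) := by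
  obtain ⟨-, ⟨i, j, hv, hw, -⟩ | ⟨i, j, hw, hv, -⟩⟩ := h
  · exact ⟨i, j, .inl ⟨hv, hw⟩⟩
  · exact ⟨i, j, .inr ⟨hv, hw⟩⟩

/-- The edges of the row-column graph at the entries `1` of `M`. -/
def increasingCells (M : Fin t → Fin u → ℤ) : Set (Sym2 (Fin t ⊕ Fin u)) :=
  {e | ∃ i j, M i j = 1 ∧ e = s(.inl i, .inr j)}

theorem mk_mem_increasingCells {i : Fin t} {j : Fin u} :
    s(.inl i, .inr j) ∈ increasingCells M ↔ M i j = 1 := by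
  simp [increasingCells]

/-- A half cell as an edge between its two projections. -/
def halfCellEdge (e : HalfInterval t × HalfInterval u) : Sym2 ((Fin t ⊕ Fin u) × Bool) :=
  s((.inl (ofLex e.1).1, (ofLex e.1).2), (.inr (ofLex e.2).1, (ofLex e.2).2))

theorem halfCellEdge_injective :
    Function.Injective (halfCellEdge : HalfInterval t × HalfInterval u → _) := by
  intro e e' h
  simpa [halfCellEdge, ← Prod.ext_iff] using h

theorem halfCellEdge_mem_edgeSet {e : HalfInterval t × HalfInterval u} :
    halfCellEdge e ∈ (signedCover (rowColGraph M) (increasingCells M)).edgeSet ↔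
      e ∈ halfCells M :=
  and_congr rowColGraph_adj_inl_inr (iff_congr Bool.eq_iff_iff mk_mem_increasingCells)

theorem exists_halfCellEdge_eq {g : Sym2 ((Fin t ⊕ Fin u) × Bool)}
    (hg : g ∈ (signedCover (rowColGraph M) (increasingCells M)).edgeSet) :
    ∃ e ∈ halfCells M, halfCellEdge e = g := by
  have hedge : ∃ e : HalfInterval t × HalfInterval u, halfCellEdge e = g := by
    induction g with | _ v w =>
    obtain ⟨v, b⟩ := v
    obtain ⟨w, c⟩ := w
    obtain ⟨i, j, ⟨rfl, rfl⟩ | ⟨rfl, rfl⟩⟩ := exists_eq_of_rowColGraph_adj hg.1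
    · exact ⟨(toLex (i, b), toLex (j, c)), rfl⟩
    · exact ⟨(toLex (i, c), toLex (j, b)), Sym2.eq_swap⟩
  obtain ⟨e, rfl⟩ := hedge
  exact ⟨e, halfCellEdge_mem_edgeSet.1 hg, rfl⟩

theorem traces_eq_image_halfCells :
    traces (signedCover (rowColGraph M) (increasingCells M)) n =
      (fun l => trace (List.ofFn (halfCellEdge ∘ l))) ''
        {l : Fin n → _ | ∀ k, l k ∈ halfCells M} := by
  ext θ
  constructor
  · rintro ⟨m, ⟨hm, rfl⟩, rfl⟩
    choose l hl hlm using fun k : Fin m.length => exists_halfCellEdge_eq (hm _ (m.get_mem k)).1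
    refine ⟨l, hl, congrArg trace ?_⟩
    exact (congrArg List.ofFn (funext hlm)).trans (List.ofFn_get m)
  · rintro ⟨l, hl, rfl⟩
    refine ⟨_, ⟨fun e he => ⟨?_, fun v _ => Set.mem_univ v⟩, List.length_ofFn⟩, rfl⟩
    obtain ⟨k, rfl⟩ := List.mem_ofFn.1 he
    exact halfCellEdge_mem_edgeSet.2 (hl k)

theorem trace_ofFn_halfCellEdge_eq_iff (l l' : Fin n → HalfInterval t × HalfInterval u) :
    trace (List.ofFn (halfCellEdge ∘ l)) = trace (List.ofFn (halfCellEdge ∘ l')) ↔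
      (∀ v, (List.ofFn l).filter (·.1 = v) = (List.ofFn l').filter (·.1 = v)) ∧
      ∀ w, (List.ofFn l).filter (·.2 = w) = (List.ofFn l').filter (·.2 = w) := by
  have hcol (m : Fin n → HalfInterval t × HalfInterval u) (v : HalfInterval t) :
      trace (List.ofFn (halfCellEdge ∘ m)) (.inl (ofLex v).1, (ofLex v).2) =
        ((List.ofFn m).filter (·.1 = v)).map halfCellEdge := by
    rw [trace, ← List.map_ofFn, List.filter_map]
    refine congrArg _ (List.filter_congr fun e _ => ?_)
    simp [halfCellEdge, ← Prod.ext_iff, eq_comm (a := v)]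
  have hrow (m : Fin n → HalfInterval t × HalfInterval u) (w : HalfInterval u) :
      trace (List.ofFn (halfCellEdge ∘ m)) (.inr (ofLex w).1, (ofLex w).2) =
        ((List.ofFn m).filter (·.2 = w)).map halfCellEdge := by
    rw [trace, ← List.map_ofFn, List.filter_map]
    refine congrArg _ (List.filter_congr fun e _ => ?_)
    simp [halfCellEdge, ← Prod.ext_iff, eq_comm (a := w)]
  have hmap := List.map_injective_iff.2 (halfCellEdge_injective (t := t) (u := u))
  refine ⟨fun h => ⟨fun v => hmap ?_, fun w => hmap ?_⟩, fun ⟨hv, hw⟩ => funext ?_⟩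
  · rw [← hcol, ← hcol, h]
  · rw [← hrow, ← hrow, h]
  · rintro ⟨i | j, b⟩
    · exact (hcol l (toLex (i, b))).trans ((congrArg _ (hv _)).trans (hcol l' (toLex (i, b))).symm)
    · exact (hrow l (toLex (j, b))).trans ((congrArg _ (hw _)).trans (hrow l' (toLex (j, b))).symm)

theorem ncard_image_eq_of_ker_eq {α β γ : Type*} {φ : α → β} {ψ : α → γ}
    (h : ∀ a a', φ a = φ a' ↔ ψ a = ψ a') (S : Set α) : (φ '' S).ncard = (ψ '' S).ncard := by
  have hfst : Set.InjOn Prod.fst ((fun a => (φ a, ψ a)) '' S) := by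
    rintro _ ⟨a, -, rfl⟩ _ ⟨a', -, rfl⟩ haa'
    exact Prod.ext haa' ((h a a').1 haa')
  have hsnd : Set.InjOn Prod.snd ((fun a => (φ a, ψ a)) '' S) := by
    rintro _ ⟨a, -, rfl⟩ _ ⟨a', -, rfl⟩ haa'
    exact Prod.ext ((h a a').2 haa') haa'
  have hcard := hfst.ncard_image.trans hsnd.ncard_image.symm
  rwa [Set.image_image, Set.image_image] at hcard

theorem ncard_drawnWords :
    (drawnWords M n).ncard =
      (traces (signedCover (rowColGraph M) (increasingCells M)) n).ncard := by
  rw [traces_eq_image_halfCells, drawnWords]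
  refine ncard_image_eq_of_ker_eq (fun l l' => ?_) _
  rw [Prod.mk.injEq, lineWord_eq_iff, lineWord_eq_iff, trace_ofFn_halfCellEdge_eq_iff]

theorem hasGrowthRate_geomCount (hM : ∀ i j, M i j = 0 ∨ M i j = 1 ∨ M i j = -1) {L : ℝ}
    (hL : HasGrowthRate
      (fun n => (traces (signedCover (rowColGraph M) (increasingCells M)) n).ncard) L) :
    HasGrowthRate (fun n => (geomCount M n : ℝ)) L := by
  have hcount (n : ℕ) : geomCount M n = {σ | ∃ w ∈ drawnWords M n,
      IsGriddedBy (fun e => e.1.IsUpper ↔ e.2.IsUpper) σ w.1 w.2}.ncard :=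
    congrArg Set.ncard (Set.ext fun σ => inGeomClass_iff hM)
  refine hL.of_polyLE (fun n => Nat.cast_nonneg _) (fun n => Nat.cast_nonneg _)
    (.of_le fun n => ?_) (.of_le_pow_mul
      (Nat.card (HalfInterval t) + Nat.card (HalfInterval u)) fun n => ?_) <;>
    rw [hcount, ← ncard_drawnWords]
  · exact mod_cast ncard_perm_le_ncard_words
  · refine mod_cast ncard_words_le_ncard_perm ?_
    rintro _ ⟨l, -, rfl⟩
    exact ⟨_, isGriddedBy_drawnPerm l⟩

end HalfCellGraph

/-! ### Grid classes of forests -/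

section Acyclic

variable {t u n : ℕ} {M : Fin t → Fin u → ℤ} {σ : Equiv.Perm (Fin n)}
  {ω θ : Fin n → Fin t × Fin u} {ε : Fin t ⊕ Fin u → Bool}

theorem signed_lt_iff {c r : Bool} {x x' y y' : ℤ} (heq : x = x' ↔ y = y')
    (hlt : x < x' → (y < y' ↔ c = r)) (hgt : x' < x → (y' < y ↔ c = r)) :
    ((if c then x else -x) < if c then x' else -x') ↔
      (if r then y else -y) < if r then y' else -y' := by
  cases c <;> cases r <;> simp at hlt hgt ⊢ <;> omega

theorem IsGriddedBy.exists_times_of_isAcyclic (hG : (rowColGraph M).IsAcyclic)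
    (hε : ∀ i j, M i j ≠ 0 → (ε (.inl i) = ε (.inr j) ↔ M i j = 1))
    (hω : ∀ p, M (ω p).1 (ω p).2 ≠ 0) (h : IsGriddedBy (fun e => M e.1 e.2 = 1) σ ω θ) :
    ∃ d : Fin n → ℕ,
      (∀ p q, p < q → (ω p).1 = (ω q).1 → if ε (.inl (ω p).1) then d p < d q else d q < d p) ∧
      ∀ p q, σ p < σ q → (ω p).2 = (ω q).2 → if ε (.inr (ω p).2) then d p < d q else d q < d p := by
  let line (b : Bool) (p : Fin n) : Fin t ⊕ Fin u := if b then .inl (ω p).1 else .inr (ω p).2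
  let pos (b : Bool) (p : Fin n) : ℤ := if b then (p : ℕ) else (σ p : ℕ)
  let key (b : Bool) (p : Fin n) : ℤ := if ε (line b p) then pos b p else -pos b p
  have hpos {p q : Fin n} (hpq : ω p = ω q) (hlt : p < q) :
      σ p < σ q ↔ (ε (.inl (ω p).1) = ε (.inr (ω p).2)) :=
    (h.lt_iff p q hlt hpq).trans (hε _ _ (hω p)).symm
  have hadj (b : Bool) (p : Fin n) : (rowColGraph M).Adj (line b p) (line (!b) p) := by
    have hadj := rowColGraph_adj_inl_inr.2 (hω p)
    cases b
    · exact hadj.symm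
    · exact hadj
  have hkey (b : Bool) (p q : Fin n) (hb : line b p = line b q) (hb' : line (!b) p = line (!b) q)
      (hlt : key b p < key b q) : key (!b) p < key (!b) q := by
    have hpq : ω p = ω q := by
      cases b
      · exact Prod.ext (Sum.inl.inj hb') (Sum.inr.inj hb)
      · exact Prod.ext (Sum.inl.inj hb) (Sum.inr.inj hb')
    have hforward := hpos (p := p) (q := q) hpq
    have hbackward := hpos (p := q) (q := p) hpq.symm
    rw [← hpq] at hbackward
    have hiff : key true p < key true q ↔ key false p < key false q := by
      simp only [key, line, if_true, Bool.false_eq_true, if_false, ← hpq]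
      exact signed_lt_iff (by simp [pos, Fin.val_inj]) (by simpa [pos] using hforward)
        (by simpa [pos] using hbackward)
    cases b
    · exact hiff.2 hlt
    · exact hiff.1 hlt
  obtain ⟨d, hd⟩ := exists_rank_of_wellFounded (wellFounded_precedes hG hadj hkey)
  have hrank (b : Bool) (p q : Fin n) (hlt : pos b p < pos b q) (hline : line b p = line b q) :
      if ε (line b p) then d p < d q else d q < d p := by
    split_ifs with hεb
    · exact hd p q ⟨b, hline, by simpa [key, ← hline, hεb] using hlt⟩
    · exact hd q p ⟨b, hline.symm, by simpa [key, ← hline, hεb] using hlt⟩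
  exact ⟨d, fun p q hpq heq => hrank true p q (by simpa [pos] using hpq) (congrArg Sum.inl heq),
    fun p q hpq heq => hrank false p q (by simpa [pos] using hpq) (congrArg Sum.inr heq)⟩

theorem lineKey_lt_of_le {m : ℕ} {i i' : Fin m} (c : Fin m → Bool) {d d' : ℕ} (hle : i ≤ i')
    (hd : i = i' → if c i then d < d' else d' < d) :
    lineKey HalfInterval.IsUpper (toLex (i, c i)) d <
      lineKey HalfInterval.IsUpper (toLex (i', c i')) d' := by
  rcases hle.lt_or_eq with hlt | rfl
  · exact Prod.Lex.toLex_lt_toLex.2 (.inl (Prod.Lex.toLex_lt_toLex.2 (.inl hlt)))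
  · exact (lineKey_lt_iff_of_eq rfl).2 (by convert hd rfl; rfl)

theorem InGridClass.inGeomClass_of_isAcyclic (hM : ∀ i j, M i j = 0 ∨ M i j = 1 ∨ M i j = -1)
    (hconn : (rowColGraph M).Connected) (hG : (rowColGraph M).IsAcyclic) (hσ : InGridClass M σ) :
    InGeomClass M σ := by
  obtain ⟨ε, hε⟩ := exists_balanced_coloring hconn hG (increasingCells M)
  replace hε (i j) (hij : M i j ≠ 0) : ε (.inl i) = ε (.inr j) ↔ M i j = 1 :=
    (hε _ _ (rowColGraph_adj_inl_inr.2 hij)).trans mk_mem_increasingCells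
  obtain ⟨ω, θ, hω, h⟩ := hσ.exists_isGriddedBy hM
  obtain ⟨d, hcol, hrow⟩ := h.exists_times_of_isAcyclic hG hε hω
  refine inGeomClass_of_times hM
    (e := fun p => (toLex ((ω p).1, ε (.inl (ω p).1)), toLex ((ω p).2, ε (.inr (ω p).2))))
    (d := d) (fun p => ⟨hω p, Bool.eq_iff_iff.symm.trans (hε _ _ (hω p))⟩)
    (fun p q hpq => lineKey_lt_of_le (ε ∘ .inl) (h.col_mono hpq.le) (hcol p q hpq))
    fun p q hpq => lineKey_lt_of_le (ε ∘ .inr) ?_ (hrow p q hpq)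
  rw [← h.apply_eq, ← h.apply_eq]
  exact h.row_mono hpq.le

theorem gridCount_le_geomCount_of_isAcyclic (hM : ∀ i j, M i j = 0 ∨ M i j = 1 ∨ M i j = -1)
    (hconn : (rowColGraph M).Connected) (hG : (rowColGraph M).IsAcyclic) (n : ℕ) :
    gridCount M n ≤ geomCount M n :=
  Nat.card_mono (Set.toFinite {σ | InGeomClass M σ})
    fun _ hσ => InGridClass.inGeomClass_of_isAcyclic hM hconn hG hσ

end Acyclic

section RowColSums

variable {t u : ℕ} {M : Fin t → Fin u → ℤ} (x : Fin t ⊕ Fin u → ℝ)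

theorem sum_rowColGraph_adj_inl (i : Fin t) :
    ∑ w with (rowColGraph M).Adj (.inl i) w, x w = ∑ j with M i j ≠ 0, x (.inr j) := by
  simp [Finset.sum_filter, rowColGraph]

theorem sum_rowColGraph_adj_inr (j : Fin u) :
    ∑ w with (rowColGraph M).Adj (.inr j) w, x w = ∑ i with M i j ≠ 0, x (.inl i) := by
  simp [Finset.sum_filter, rowColGraph]

end RowColSums

/-- If `G(M)` is connected, then the growth rates of `Geom(M)` and `Grid(M)` both exist, and
the former is strictly smaller iff `G(M)` contains a cycle. -/
theorem geom_lt_grid_iff_cyclic {t u : ℕ} (ht : 1 ≤ t) (hu : 1 ≤ u)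
    (M : Fin t → Fin u → ℤ) (hM : ∀ i j, M i j = 0 ∨ M i j = 1 ∨ M i j = -1)
    (hconn : (rowColGraph M).Connected) :
    ∃ gGeom gGrid : ℝ,
      Tendsto (fun n : ℕ => (geomCount M n : ℝ) ^ (1 / (n : ℝ))) atTop (nhds gGeom) ∧
      Tendsto (fun n : ℕ => (gridCount M n : ℝ) ^ (1 / (n : ℝ))) atTop (nhds gGrid) ∧
      (gGeom < gGrid ↔ ¬ (rowColGraph M).IsAcyclic) := by
  obtain ⟨i₀⟩ : Nonempty (Fin t) := ⟨⟨0, ht⟩⟩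
  obtain ⟨j₀⟩ : Nonempty (Fin u) := ⟨⟨0, hu⟩⟩
  have : Nontrivial (Fin t ⊕ Fin u) := ⟨.inl i₀, .inr j₀, Sum.inl_ne_inr⟩
  obtain ⟨x, μ, hx, hμ, heigen⟩ := exists_perron_eigenvector hconn
  have hgrid : HasGrowthRate (fun n => (gridCount M n : ℝ)) (μ ^ 2) :=
    hasGrowthRate_gridCount ht hM (fun i => hx (.inl i)) (fun j => hx (.inr j)) hμ
      (fun i => (sum_rowColGraph_adj_inl x i).symm.trans (heigen _))
      fun j => (sum_rowColGraph_adj_inr x j).symm.trans (heigen _)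
  obtain ⟨_, hw⟩ := hconn.preconnected.exists_adj_of_nontrivial (.inl i₀)
  have hedge := signedCover_edgeSet_nonempty (P := increasingCells M) hw
  obtain ⟨L, hL⟩ := exists_hasGrowthRate_traces hedge
  have hgeom := hasGrowthRate_geomCount hM hL
  refine ⟨L, μ ^ 2, hgeom, hgrid, fun hlt hG => ?_, fun hcyclic => ?_⟩
  · exact hlt.not_ge (hgrid.mono hgeom (fun _ => Nat.cast_nonneg _)
      fun n => Nat.cast_le.2 (gridCount_le_geomCount_of_isAcyclic hM hconn hG n))
  · refine growthRate_traces_lt hedge hL (fun v => ?_) (fun v => hx v.1) hμ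
      fun v => (sum_signedCover_adj x v).trans (heigen v.1)
    obtain ⟨f, hf, hfv⟩ := IsRay.exists_start hconn hcyclic v.1
    exact hf.lift_signedCover hfv
end
end

section
/- Let G be a finite connected simple graph and let H be a proper subgraph of G having at least one vertex (a subgraph of G with H ≠ G). Then the matching polynomials μ_H and μ_G each have at least one real root, and the greatest real root of μ_H is strictly smaller than the greatest real root of μ_G; that is, λ(H) < λ(G). -/
noncomputable section

/-- `m_k(G)`: the number of `k`-matchings of `G` (sets of `k` edges, pairwise disjoint). -/
def matchingNumber {V : Type*} [Fintype V] [DecidableEq V] (G : SimpleGraph V) (k : ℕ) : ℕ :=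
  Nat.card {s : Finset (Sym2 V) // s.card = k ∧ (∀ e ∈ s, e ∈ G.edgeSet) ∧
    ∀ e ∈ s, ∀ f ∈ s, e ≠ f → ∀ v : V, ¬(v ∈ e ∧ v ∈ f)}

/-- The matching polynomial `μ_G(z) = Σ_k (-1)^k m_k(G) z^(n-2k)`. -/
def matchingPoly {V : Type*} [Fintype V] [DecidableEq V] (G : SimpleGraph V) : Polynomial ℝ :=
  ∑ k ∈ Finset.range (Fintype.card V / 2 + 1),
    Polynomial.C ((-1 : ℝ) ^ k * (matchingNumber G k : ℝ)) *
      Polynomial.X ^ (Fintype.card V - 2 * k)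

/-- The matching polynomial of a subgraph `H` of `G` (viewed as a simple graph on its
vertex set). -/
def matchingPolySub {V : Type*} [Fintype V] [DecidableEq V] {G : SimpleGraph V}
    (H : G.Subgraph) : Polynomial ℝ :=
  letI : Fintype ↥H.verts := Fintype.ofFinite ↥H.verts
  matchingPoly H.coe

/-!
For a graph `L` and a set `S` of its vertices, let `I(S, t)` be the independence polynomial of
`L[S]` at `-t`. If `L` is the line graph of `G`, then `μ_G(x) = xⁿ I(V(L), x⁻²)`, and the edges
of a subgraph `H` form a set `S` with `μ_H(x) = xᵐ I(S, x⁻²)`. Let `β` be the least `t ≥ 0` at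
which `I(S, t) ≤ 0` for some `S`. The recursion `I(S ∪ {e}, t) = I(S, t) - t I(S \ N(e), t)`
makes `I(·, β)` antitone, so `I(V(L), β) = 0` and `λ(G) = β^(-1/2)`. If `L` is connected and `S`
is a proper subset, some `e ∉ S` has a neighbour in `S`, so `I(S, β) ≥ β I(S \ N(e), β)` with
`S \ N(e)` strictly smaller than `S`; by induction `I(S, β) > 0`. As `G` is connected, a nonempty
proper subgraph `H` misses an edge, hence `μ_H` is positive on `[λ(G), ∞)`.
-/

open Finset Polynomial SimpleGraph

section IndepSum

variable {E F R : Type*} {L : SimpleGraph E} {K : SimpleGraph F}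

open Classical in
/-- The independent sets of `L` contained in `S`, as the index set of the independence polynomial of
`L[S]`. -/
def indepSets (L : SimpleGraph E) (S : Finset E) : Finset (Finset E) :=
  S.powerset.filter fun M => L.IsIndepSet (M : Set E)

@[simp]
lemma mem_indepSets {S M : Finset E} :
    M ∈ indepSets L S ↔ M ⊆ S ∧ L.IsIndepSet (M : Set E) := by
  simp [indepSets]

lemma insert_mem_indepSets_insert [DecidableEq E] [DecidableRel L.Adj] {S M : Finset E} {e : E}
    (he : e ∉ S) (hM : M ⊆ S) :
    insert e M ∈ indepSets L (insert e S) ↔ M ∈ indepSets L {f ∈ S | ¬ L.Adj e f} := by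
  have : Std.Symm fun v w => ¬ L.Adj v w := ⟨fun _ _ h h' => h h'.symm⟩
  have heM : e ∉ (M : Set E) := fun h => he (hM h)
  simp only [mem_indepSets, coe_insert, IsIndepSet, Set.pairwise_insert_of_symm_of_notMem heM,
    insert_subset_insert_iff (fun h => he (hM h)), subset_iff, mem_filter, mem_coe]
  grind

lemma map_mem_indepSets_map (φ : L ↪g K) {S M : Finset E} :
    M.map φ.toEmbedding ∈ indepSets K (S.map φ.toEmbedding) ↔ M ∈ indepSets L S := by
  simp only [mem_indepSets, map_subset_map, coe_map, IsIndepSet]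
  rw [φ.toEmbedding.injective.injOn.pairwise_image]
  simp [Set.Pairwise, Function.onFun]

/-- The independence polynomial of the subgraph of `L` induced on `S`, evaluated at `-t`; for a line
graph `L` it is the matching polynomial up to a change of variable. The sign is built in because the
zeros of interest are at `t > 0`. -/
def indepSum [CommRing R] (L : SimpleGraph E) (S : Finset E) (t : R) : R :=
  ∑ M ∈ indepSets L S, (-t) ^ #M

section CommRing

variable [CommRing R]

@[simp]
lemma indepSum_empty (t : R) : indepSum L ∅ t = 1 := by
  simp [indepSum, indepSets, sum_filter]

@[simp]
lemma indepSum_zero (S : Finset E) : indepSum L S (0 : R) = 1 := by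
  rw [indepSum, sum_eq_single ∅ (fun M _ hM => ?_) (fun h => ?_)]
  · simp
  · simp [hM]
  · simp at h

lemma indepSum_insert [DecidableEq E] [DecidableRel L.Adj] {S : Finset E} {e : E} (he : e ∉ S)
    (t : R) :
    indepSum L (insert e S) t = indepSum L S t - t * indepSum L {f ∈ S | ¬ L.Adj e f} t := by
  classical
  have sum_insert : ∑ M ∈ S.powerset with insert e M ∈ indepSets L (insert e S),
      (-t) ^ #(insert e M) = -t * indepSum L {f ∈ S | ¬ L.Adj e f} t := by
    rw [indepSum, mul_sum]
    refine sum_congr ?_ fun M hM => ?_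
    · ext M
      have : M ∈ indepSets L {f ∈ S | ¬ L.Adj e f} → M ⊆ S := fun hM =>
        (mem_indepSets.1 hM).1.trans (filter_subset _ _)
      grind [insert_mem_indepSets_insert]
    · have heM : e ∉ M := fun h => he (filter_subset _ _ ((mem_indepSets.1 hM).1 h))
      rw [card_insert_of_notMem heM, pow_succ']
  have sum_self : ∑ M ∈ S.powerset with M ∈ indepSets L (insert e S), (-t) ^ #M =
      indepSum L S t := by
    refine sum_congr ?_ fun _ _ => rfl
    ext M
    grind [mem_indepSets]
  have eq_filter : indepSets L (insert e S) =
      {M ∈ (insert e S).powerset | M ∈ indepSets L (insert e S)} := by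
    grind [mem_indepSets]
  rw [indepSum, eq_filter, sum_filter, sum_powerset_insert he, ← sum_filter,
    ← sum_filter, sum_insert, sum_self, neg_mul, sub_eq_add_neg]

lemma indepSum_map (φ : L ↪g K) (S : Finset E) (t : R) :
    indepSum K (S.map φ.toEmbedding) t = indepSum L S t := by
  symm
  refine sum_bij (fun M _ => M.map φ.toEmbedding) ?_ ?_ ?_ ?_
  · exact fun _ => (map_mem_indepSets_map φ).2
  · exact fun _ _ _ _ h => map_injective _ h
  · intro N hN
    obtain ⟨M, -, rfl⟩ := subset_map_iff.1 (mem_indepSets.1 hN).1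
    exact ⟨M, (map_mem_indepSets_map φ).1 hN, rfl⟩
  · simp

lemma continuous_indepSum [TopologicalSpace R] [IsTopologicalRing R] (S : Finset E) :
    Continuous (indepSum L S : R → R) := by
  unfold indepSum
  fun_prop

lemma indepSum_antitone [PartialOrder R] [IsOrderedRing R] {t : R} (ht : 0 ≤ t)
    (hL : ∀ S, 0 ≤ indepSum L S t) : Antitone fun S => indepSum L S t := by
  classical
  refine antitone_iff_forall_insert_le.2 fun S e he => ?_
  simp only [indepSum_insert he]
  exact sub_le_self _ (mul_nonneg ht (hL _))

lemma indepSum_pos_of_preconnected [PartialOrder R] [IsStrictOrderedRing R] {t : R} (ht : 0 < t)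
    (hL : ∀ S, 0 ≤ indepSum L S t) (hconn : L.Preconnected) {S : Finset E} {e : E} (he : e ∉ S) :
    0 < indepSum L S t := by
  classical
  induction S using Finset.strongInduction generalizing e with
  | H S ih =>
  obtain rfl | ⟨f, hf⟩ := S.eq_empty_or_nonempty
  · simp
  obtain ⟨p⟩ := hconn f e
  obtain ⟨d, -, hfst, hsnd⟩ := p.exists_boundary_dart (S : Set E) hf he
  have hss : {f ∈ S | ¬ L.Adj d.snd f} ⊂ S :=
    filter_ssubset.2 ⟨d.fst, hfst, by simpa using d.adj.symm⟩
  have hpos := mul_pos ht (ih _ hss fun h => hsnd (hss.subset h))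
  have hinsert := hL (insert d.snd S)
  rw [indepSum_insert hsnd, sub_nonneg] at hinsert
  exact hpos.trans_le hinsert

end CommRing

/-- The complement in `[0, ∞)` of the univariate Shearer region of `L`: the parameters at which the
independence polynomial of some finite induced subgraph is not positive. Quantifying over all
subgraphs makes its least element the least zero for `L` itself. -/
def nonShearerSet (L : SimpleGraph E) : Set ℝ :=
  {t | 0 ≤ t ∧ ∃ S, indepSum L S t ≤ 0}

lemma exists_isLeast_nonShearerSet [Finite E] [Nonempty E] : ∃ β, IsLeast (nonShearerSet L) β := by
  classical
  have hclosed : IsClosed (nonShearerSet L) := by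
    simp only [nonShearerSet, Set.ofPred_and, Set.ofPred_exists]
    exact isClosed_Ici.inter (isClosed_iUnion_of_finite fun S =>
      isClosed_le (continuous_indepSum S) continuous_const)
  have hone : (1 : ℝ) ∈ nonShearerSet L := by
    obtain ⟨e⟩ := ‹Nonempty E›
    refine ⟨zero_le_one, {e}, ?_⟩
    rw [← insert_empty_eq, indepSum_insert (notMem_empty e)]
    simp
  have hbdd : BddBelow (nonShearerSet L) := ⟨0, fun _ ht => ht.1⟩
  exact ⟨_, hclosed.isLeast_csInf ⟨1, hone⟩ hbdd⟩

variable {β : ℝ}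

lemma indepSum_pos_of_lt (hβ : IsLeast (nonShearerSet L) β) {t : ℝ} (ht₀ : 0 ≤ t) (ht : t < β)
    (S : Finset E) : 0 < indepSum L S t := by
  by_contra! h
  exact ht.not_ge (hβ.2 ⟨ht₀, S, h⟩)

lemma pos_of_isLeast_nonShearerSet (hβ : IsLeast (nonShearerSet L) β) : 0 < β := by
  obtain ⟨hβ₀, S, hS⟩ := hβ.1
  refine hβ₀.lt_of_ne ?_
  rintro rfl
  simp only [indepSum_zero] at hS
  linarith

lemma indepSum_nonneg_of_isLeast (hβ : IsLeast (nonShearerSet L) β) (S : Finset E) :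
    0 ≤ indepSum L S β := by
  have hlim : Filter.Tendsto (indepSum L S) (nhdsWithin β (Set.Iio β)) (nhds (indepSum L S β)) :=
    (continuous_indepSum S).continuousWithinAt
  refine ge_of_tendsto hlim ?_
  filter_upwards [Ioo_mem_nhdsLT (pos_of_isLeast_nonShearerSet hβ)] with t ht
  exact (indepSum_pos_of_lt hβ ht.1.le ht.2 S).le

lemma indepSum_univ_eq_zero_of_isLeast [Fintype E] (hβ : IsLeast (nonShearerSet L) β) :
    indepSum L univ β = 0 := by
  have hnonneg := indepSum_nonneg_of_isLeast hβ
  obtain ⟨hβ₀, S, hS⟩ := hβ.1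
  exact le_antisymm ((indepSum_antitone hβ₀ hnonneg (subset_univ S)).trans hS) (hnonneg univ)

lemma exists_pos_isLeast_inv_sq_nonShearerSet (L : SimpleGraph E) [Finite E] [Nonempty E] :
    ∃ b > 0, IsLeast (nonShearerSet L) (b ^ 2)⁻¹ := by
  obtain ⟨β, hβ⟩ := exists_isLeast_nonShearerSet (L := L)
  have hpos := pos_of_isLeast_nonShearerSet hβ
  refine ⟨(√β)⁻¹, inv_pos.2 (Real.sqrt_pos.2 hpos), ?_⟩
  rwa [inv_pow, inv_inv, Real.sq_sqrt hpos.le]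

end IndepSum

section LineGraph

variable {V : Type*} {G : SimpleGraph V}

lemma lineGraph_preconnected (hG : G.Preconnected) : G.lineGraph.Preconnected := by
  have reachable_of_mem {e f : G.edgeSet} {v : V} (he : v ∈ e.1) (hf : v ∈ f.1) :
      G.lineGraph.Reachable e f := by
    by_cases h : e = f
    · rw [h]
    · exact Adj.reachable (lineGraph_adj_iff_exists.2 ⟨h, v, he, hf⟩)
  have reachable_of_walk {e f : G.edgeSet} {u v : V} (p : G.Walk u v) (he : u ∈ e.1)
      (hf : v ∈ f.1) : G.lineGraph.Reachable e f := by
    induction p generalizing e with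
    | nil => exact reachable_of_mem he hf
    | @cons u w _ h _ ih =>
      exact (reachable_of_mem (f := ⟨s(u, w), h⟩) he (Sym2.mem_mk_left u w)).trans
        (ih (Sym2.mem_mk_right u w) hf)
  intro e f
  obtain ⟨p⟩ := hG e.1.out.1 f.1.out.1
  exact reachable_of_walk p e.1.out_fst_mem f.1.out_fst_mem

lemma isIndepSet_lineGraph_iff {M : Set G.edgeSet} :
    G.lineGraph.IsIndepSet M ↔
      ∀ e ∈ M, ∀ f ∈ M, e ≠ f → ∀ v, ¬ (v ∈ e.1 ∧ v ∈ f.1) := by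
  simp +contextual [IsIndepSet, Set.Pairwise, lineGraph_adj_iff_exists]

lemma two_mul_card_le_of_isIndepSet_lineGraph [Fintype V] {M : Finset G.edgeSet}
    (hM : G.lineGraph.IsIndepSet (M : Set G.edgeSet)) : 2 * #M ≤ Fintype.card V := by
  classical
  have hdisj : (M : Set G.edgeSet).PairwiseDisjoint fun e => e.1.toFinset :=
    fun e he f hf hne => disjoint_left.2 fun v hve hvf =>
      isIndepSet_lineGraph_iff.1 hM e he f hf hne v
        ⟨Sym2.mem_toFinset.1 hve, Sym2.mem_toFinset.1 hvf⟩
  have hcard : #(M.biUnion fun e => e.1.toFinset) = #M * 2 := by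
    rw [card_biUnion hdisj]
    exact sum_const_nat fun e _ =>
      Sym2.card_toFinset_of_not_isDiag _ (G.not_isDiag_of_mem_edgeSet e.2)
  have := card_le_univ (M.biUnion fun e => e.1.toFinset)
  omega

lemma exists_adj_not_adj_of_ne_top (hG : G.Preconnected) {H : G.Subgraph}
    (hne : H.verts.Nonempty) (hH : H ≠ ⊤) : ∃ u v, G.Adj u v ∧ ¬ H.Adj u v := by
  by_contra! hadj
  obtain ⟨u, hu⟩ := hne
  have hverts : H.verts = Set.univ := Set.eq_univ_of_forall fun v => by
    by_contra hv
    obtain ⟨p⟩ := hG u v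
    obtain ⟨d, -, -, hd⟩ := p.exists_boundary_dart H.verts hu hv
    exact hd (H.edge_vert (hadj _ _ d.adj).symm)
  refine hH (Subgraph.ext hverts ?_)
  ext a b
  exact ⟨H.adj_sub, hadj a b⟩

lemma adj_of_mem_range_coeCopy_toLineGraphEmbedding {H : G.Subgraph} {u v : V}
    (huv : G.Adj u v)
    (h : (⟨s(u, v), huv⟩ : G.edgeSet) ∈ Set.range H.coeCopy.toLineGraphEmbedding) :
    H.Adj u v := by
  obtain ⟨⟨e, he⟩, heq⟩ := h
  induction e with
  | _ x y =>
    have hmap : s((x : V), (y : V)) = s(u, v) := congrArg Subtype.val heq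
    have hxy : s((x : V), (y : V)) ∈ H.edgeSet := he
    rwa [hmap] at hxy

end LineGraph

section MatchingPoly

variable {V W : Type*} [Fintype V] [DecidableEq V]
  {G : SimpleGraph V} {K : SimpleGraph W}

lemma matchingNumber_eq_card_indepSets_lineGraph [Fintype G.edgeSet] (k : ℕ) :
    matchingNumber G k = #{M ∈ indepSets G.lineGraph univ | #M = k} := by
  rw [matchingNumber, ← card_image_of_injective _ (image_injective Subtype.val_injective)]
  refine Nat.subtype_card _ fun s => ?_
  simp only [mem_image, mem_filter, mem_indepSets, subset_univ, true_and,
    isIndepSet_lineGraph_iff, mem_coe]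
  constructor
  · rintro ⟨M, ⟨hM, rfl⟩, rfl⟩
    refine ⟨card_image_of_injective _ Subtype.val_injective, ?_, ?_⟩
    · simp +contextual
    · simpa using hM
  · rintro ⟨rfl, hedge, hdisj⟩
    lift s to Finset G.edgeSet using hedge
    refine ⟨s, ⟨?_, (card_image_of_injective _ Subtype.val_injective).symm⟩, rfl⟩
    simpa using hdisj

lemma eval_matchingPoly [Fintype G.edgeSet] {x : ℝ} (hx : x ≠ 0) :
    (matchingPoly G).eval x = x ^ Fintype.card V * indepSum G.lineGraph univ (x ^ 2)⁻¹ := by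
  have hmaps : ∀ M ∈ indepSets G.lineGraph univ, #M ∈ range (Fintype.card V / 2 + 1) :=
    fun M hM => by
      have := two_mul_card_le_of_isIndepSet_lineGraph (mem_indepSets.1 hM).2
      rw [mem_range]
      omega
  have hpow {k : ℕ} (hk : k < Fintype.card V / 2 + 1) :
      x ^ Fintype.card V * (-(x ^ 2)⁻¹) ^ k = (-1) ^ k * x ^ (Fintype.card V - 2 * k) := by
    have hsplit : x ^ Fintype.card V = x ^ (Fintype.card V - 2 * k) * x ^ (2 * k) := by
      rw [← pow_add]
      congr 1
      omega
    rw [hsplit, mul_assoc, pow_mul, ← mul_pow, mul_neg, mul_inv_cancel₀ (pow_ne_zero 2 hx),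
      mul_comm]
  rw [matchingPoly, eval_finsetSum, indepSum, ← sum_fiberwise_of_maps_to hmaps, mul_sum]
  refine sum_congr rfl fun k hk => ?_
  have hfiber : ∑ M ∈ indepSets G.lineGraph univ with #M = k, (-(x ^ 2)⁻¹) ^ #M =
      matchingNumber G k * (-(x ^ 2)⁻¹) ^ k := by
    rw [sum_congr rfl fun M hM => by rw [(mem_filter.1 hM).2], sum_const, nsmul_eq_mul,
      matchingNumber_eq_card_indepSets_lineGraph]
  rw [hfiber, mul_left_comm, hpow (mem_range.1 hk)]
  simp only [eval_mul, eval_C, eval_pow, eval_X]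
  ring

lemma matchingPoly_eq_X_pow_card [IsEmpty G.edgeSet] : matchingPoly G = X ^ Fintype.card V := by
  have := Fintype.ofIsEmpty (α := G.edgeSet)
  refine eq_of_infinite_eval_eq _ _ ((Set.Ioi_infinite (0 : ℝ)).mono fun x hx => ?_)
  have hx : x ≠ 0 := (Set.mem_Ioi.1 hx).ne'
  simp [eval_matchingPoly hx, univ_eq_empty]

lemma eval_matchingPoly_of_copy [Fintype G.edgeSet] (f : Copy G K) {x : ℝ} (hx : x ≠ 0) :
    (matchingPoly G).eval x = x ^ Fintype.card V *
      indepSum K.lineGraph (univ.map f.toLineGraphEmbedding.toEmbedding) (x ^ 2)⁻¹ := by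
  rw [eval_matchingPoly hx, indepSum_map]

variable {b : ℝ}

lemma eval_matchingPoly_pos_of_copy_of_lt (f : Copy G K) (hb : 0 < b)
    (hleast : IsLeast (nonShearerSet K.lineGraph) (b ^ 2)⁻¹) {x : ℝ} (hx : b < x) :
    0 < (matchingPoly G).eval x := by
  have := Fintype.ofFinite G.edgeSet
  have hx₀ := hb.trans hx
  have hinv : (x ^ 2)⁻¹ < (b ^ 2)⁻¹ := by gcongr
  rw [eval_matchingPoly_of_copy f hx₀.ne']
  exact mul_pos (by positivity) (indepSum_pos_of_lt hleast (by positivity) hinv _)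

lemma eval_matchingPoly_pos_of_copy_of_notMem_range (hK : K.Preconnected) (f : Copy G K)
    {e : K.edgeSet} (he : e ∉ Set.range f.toLineGraphEmbedding) (hb : 0 < b)
    (hleast : IsLeast (nonShearerSet K.lineGraph) (b ^ 2)⁻¹) :
    0 < (matchingPoly G).eval b := by
  have := Fintype.ofFinite G.edgeSet
  rw [eval_matchingPoly_of_copy f hb.ne']
  refine mul_pos (by positivity) (indepSum_pos_of_preconnected
    (pos_of_isLeast_nonShearerSet hleast) (indepSum_nonneg_of_isLeast hleast)
    (lineGraph_preconnected hK) (e := e) ?_)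
  simpa using he

lemma isGreatest_isRoot_matchingPoly (hb : 0 < b)
    (hleast : IsLeast (nonShearerSet G.lineGraph) (b ^ 2)⁻¹) :
    IsGreatest {x : ℝ | (matchingPoly G).IsRoot x} b := by
  have := Fintype.ofFinite G.edgeSet
  constructor
  · change (matchingPoly G).eval b = 0
    rw [eval_matchingPoly hb.ne', indepSum_univ_eq_zero_of_isLeast hleast, mul_zero]
  · intro x hx
    by_contra! hbx
    exact (eval_matchingPoly_pos_of_copy_of_lt (Copy.id G) hb hleast hbx).ne' hx

lemma exists_isGreatest_isRoot_matchingPoly [Nonempty V] (G : SimpleGraph V) :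
    ∃ a, IsGreatest {x : ℝ | (matchingPoly G).IsRoot x} a := by
  obtain _ | _ := isEmpty_or_nonempty G.edgeSet
  · refine ⟨0, ?_⟩
    simp [matchingPoly_eq_X_pow_card]
  · obtain ⟨b, hb, hleast⟩ := exists_pos_isLeast_inv_sq_nonShearerSet G.lineGraph
    exact ⟨b, isGreatest_isRoot_matchingPoly hb hleast⟩

end MatchingPoly

/-- If `H` is a proper subgraph (with at least one vertex) of a finite connected simple
graph `G`, then `μ_H` and `μ_G` each have a greatest real root, and `λ(H) < λ(G)`. -/
theorem matching_root_strictly_monotone {V : Type*} [Fintype V] [DecidableEq V]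
    (G : SimpleGraph V) (hG : G.Connected) (H : G.Subgraph)
    (hne : H.verts.Nonempty) (hproper : H ≠ ⊤) :
    ∃ a b : ℝ,
      IsGreatest {x : ℝ | (matchingPolySub H).IsRoot x} a ∧
      IsGreatest {x : ℝ | (matchingPoly G).IsRoot x} b ∧
      a < b := by
  have : Nonempty H.verts := hne.to_subtype
  let _ : Fintype H.verts := Fintype.ofFinite H.verts
  obtain ⟨u, v, huv, hnot⟩ := exists_adj_not_adj_of_ne_top hG.preconnected hne hproper
  have : Nonempty G.edgeSet := ⟨⟨s(u, v), huv⟩⟩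
  obtain ⟨a, ha⟩ := exists_isGreatest_isRoot_matchingPoly H.coe
  obtain ⟨b, hb, hleast⟩ := exists_pos_isLeast_inv_sq_nonShearerSet G.lineGraph
  refine ⟨a, b, ha, isGreatest_isRoot_matchingPoly hb hleast, ?_⟩
  by_contra! hab
  have hpos : 0 < (matchingPoly H.coe).eval a := by
    obtain rfl | hlt := hab.eq_or_lt
    · exact eval_matchingPoly_pos_of_copy_of_notMem_range hG.preconnected H.coeCopy
        (fun h => hnot (adj_of_mem_range_coeCopy_toLineGraphEmbedding huv h)) hb hleast
    · exact eval_matchingPoly_pos_of_copy_of_lt H.coeCopy hb hleast hlt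
  exact hpos.ne' ha.1
end
end

section
/- Let (A_n)_{n≥1} be a sequence of nonempty finite sets of nonnegative real numbers, and set ℓ_n = min A_n, u_n = max A_n, Δ_n = u_n − ℓ_n, and δ_n = δ(A_n), the largest gap of A_n. Suppose the sequence (u_n) is bounded, β > 1, and for every n, δ_n ≤ Σ_{i=1}^{∞} Δ_{n+i} β^{−i}. Then { Σ_{n=1}^{∞} a_n β^{−n} : a_n ∈ A_n for all n } = [ Σ_{n=1}^{∞} ℓ_n β^{−n}, Σ_{n=1}^{∞} u_n β^{−n} ]. -/
noncomputable section

/-- The largest gap of a finite set of reals: the maximum of `b - a` over pairs `a < b` of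
elements with no element strictly between them (`0` for a singleton). -/
def largestGap (s : Finset ℝ) : ℝ :=
  sSup {d : ℝ | ∃ a ∈ s, ∃ b ∈ s, a < b ∧ (∀ x ∈ s, ¬(a < x ∧ x < b)) ∧ d = b - a}

/-!
Digits are chosen greedily. Let `I n` be the interval from the `n`-th tail of the smallest
expansion to the `n`-th tail of the largest one. The gap condition says that the translates of
`I (n + 1)` by the weighted digits at place `n` leave no holes, so they cover `I n`. Hence a
remainder in `I n` becomes a remainder in `I (n + 1)` after subtracting a suitable digit, and the
remainders tend to `0` because both endpoints of `I n` do.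
-/

open Filter Set Topology

theorem sub_le_largestGap {s : Finset ℝ} {a b : ℝ} (ha : a ∈ s) (hb : b ∈ s) (hab : a < b)
    (hgap : ∀ x ∈ s, ¬(a < x ∧ x < b)) : b - a ≤ largestGap s := by
  refine le_csSup ?_ ⟨a, ha, b, hb, hab, hgap, rfl⟩
  refine ⟨s.max' ⟨a, ha⟩ - s.min' ⟨a, ha⟩, ?_⟩
  rintro _ ⟨p, hp, q, hq, -, -, rfl⟩
  exact sub_le_sub (s.le_max' q hq) (s.min'_le p hp)

theorem exists_gt_sub_le_largestGap {s : Finset ℝ} {a m : ℝ} (ha : a ∈ s) (hm : m ∈ s)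
    (ham : a < m) : ∃ b ∈ s, a < b ∧ b - a ≤ largestGap s := by
  obtain ⟨b, hb, hmin⟩ := (s.filter (a < ·)).exists_min_image id ⟨m, by simp [hm, ham]⟩
  obtain ⟨hbs, hab⟩ := Finset.mem_filter.1 hb
  refine ⟨b, hbs, hab, sub_le_largestGap ha hbs hab ?_⟩
  rintro x hx ⟨hax, hxb⟩
  exact hxb.not_ge (hmin x (Finset.mem_filter.2 ⟨hx, hax⟩))

theorem exists_sub_mem_Icc_of_largestGap_le {s : Finset ℝ} (hs : s.Nonempty) {L U z : ℝ}
    (hgap : largestGap s ≤ U - L) (hz : z ∈ Icc (s.min' hs + L) (s.max' hs + U)) :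
    ∃ a ∈ s, z - a ∈ Icc L U := by
  obtain ⟨a, ha, hmax⟩ := (s.filter (· ≤ z - L)).exists_max_image id
    ⟨s.min' hs, Finset.mem_filter.2 ⟨s.min'_mem hs, le_sub_iff_add_le.2 hz.1⟩⟩
  obtain ⟨has, haz⟩ := Finset.mem_filter.1 ha
  refine ⟨a, has, le_sub_comm.1 haz, ?_⟩
  rcases (s.le_max' a has).eq_or_lt with ha_top | ha_lt
  · linarith [hz.2]
  · obtain ⟨b, hbs, hab, hba⟩ := exists_gt_sub_le_largestGap has (s.max'_mem hs) ha_lt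
    have hzb : z - L < b := by
      by_contra! hbz
      exact hab.not_ge (hmax b (Finset.mem_filter.2 ⟨hbs, hbz⟩))
    linarith

theorem exists_sub_div_mem_Icc_of_largestGap_div_le {s : Finset ℝ} (hs : s.Nonempty)
    {q L U z : ℝ} (hq : 0 < q) (hgap : largestGap s / q ≤ U - L)
    (hz : z ∈ Icc (s.min' hs / q + L) (s.max' hs / q + U)) :
    ∃ a ∈ s, z - a / q ∈ Icc L U := by
  have hgap' : largestGap s ≤ U * q - L * q := by rwa [← sub_mul, ← div_le_iff₀ hq]
  have hz' : z * q ∈ Icc (s.min' hs + L * q) (s.max' hs + U * q) := by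
    have hscale : ∀ c d : ℝ, (c / q + d) * q = c + d * q := fun c d => by
      rw [add_mul, div_mul_cancel₀ _ hq.ne']
    simpa only [hscale, mem_Icc] using And.intro
      (mul_le_mul_of_nonneg_right hz.1 hq.le) (mul_le_mul_of_nonneg_right hz.2 hq.le)
  obtain ⟨a, ha, hza⟩ := exists_sub_mem_Icc_of_largestGap_le hs hgap' hz'
  have hdiv : z - a / q = (z * q - a) / q := by rw [sub_div, mul_div_cancel_right₀ _ hq.ne']
  exact ⟨a, ha, hdiv ▸ ⟨(le_div_iff₀ hq).2 hza.1, (div_le_iff₀ hq).2 hza.2⟩⟩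

theorem exists_tendsto_sum_of_forall_exists_sub_mem {G : Type*} [AddCommGroup G]
    [TopologicalSpace G] [IsTopologicalAddGroup G] {D R : ℕ → Set G}
    (hR : Tendsto R atTop (𝓝 0).smallSets)
    (hstep : ∀ n, ∀ y ∈ R n, ∃ d ∈ D n, y - d ∈ R (n + 1)) {x : G} (hx : x ∈ R 0) :
    ∃ d : ℕ → G, (∀ n, d n ∈ D n) ∧
      Tendsto (fun n => ∑ i ∈ Finset.range n, d i) atTop (𝓝 x) := by
  choose! digit hdigit hsub using hstep
  let y : ℕ → G := fun n => Nat.rec x (fun n y => y - digit n y) n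
  have hy : ∀ n, y n ∈ R n := fun n => by
    induction n with
    | zero => exact hx
    | succ n ih => exact hsub n _ ih
  have hsum : ∀ n, ∑ i ∈ Finset.range n, digit i (y i) = x - y n := fun n => by
    induction n with
    | zero => exact (sub_self x).symm
    | succ n ih =>
      rw [Finset.sum_range_succ, ih]
      change x - y n + digit n (y n) = x - (y n - digit n (y n))
      abel
  have hy_zero : Tendsto y atTop (𝓝 0) := hR.of_smallSets (.of_forall hy)
  refine ⟨fun n => digit n (y n), fun n => hdigit n _ (hy n), ?_⟩
  simpa only [hsum, sub_zero] using hy_zero.const_sub x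

theorem summable_of_le_of_le {ι : Type*} {l f u : ι → ℝ} (hl : Summable l) (hu : Summable u)
    (hlf : ∀ i, l i ≤ f i) (hfu : ∀ i, f i ≤ u i) : Summable f := by
  have hsub : Summable fun i => f i - l i :=
    (hu.sub hl).of_nonneg_of_le (fun i => sub_nonneg.2 (hlf i)) fun i => sub_le_sub_right (hfu i) _
  simpa only [sub_add_cancel] using hsub.add hl

theorem tsum_nat_add_eq_add_tsum {G : Type*} [AddCommGroup G] [TopologicalSpace G]
    [IsTopologicalAddGroup G] [T2Space G] {f : ℕ → G} (hf : Summable f) (n : ℕ) :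
    ∑' i, f (i + n) = f n + ∑' i, f (i + (n + 1)) := by
  rw [((summable_nat_add_iff n).2 hf).tsum_eq_zero_add, zero_add]
  simp only [add_assoc, add_comm 1 n]

theorem setOf_tsum_eq_Icc {D : ℕ → Set ℝ} {l u : ℕ → ℝ} (hl : Summable l) (hu : Summable u)
    (hD : ∀ n, D n ⊆ Icc (l n) (u n))
    (hcover : ∀ n, ∀ z ∈ Icc (l n + ∑' i, l (i + (n + 1))) (u n + ∑' i, u (i + (n + 1))),
      ∃ d ∈ D n, z - d ∈ Icc (∑' i, l (i + (n + 1))) (∑' i, u (i + (n + 1)))) :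
    {x : ℝ | ∃ d : ℕ → ℝ, (∀ n, d n ∈ D n) ∧ x = ∑' n, d n} = Icc (∑' n, l n) (∑' n, u n) := by
  have hsummable : ∀ {d : ℕ → ℝ}, (∀ n, d n ∈ D n) → Summable d := fun hd =>
    summable_of_le_of_le hl hu (fun n => (hD n (hd n)).1) fun n => (hD n (hd n)).2
  refine Subset.antisymm ?_ fun x hx => ?_
  · rintro _ ⟨d, hd, rfl⟩
    exact ⟨hl.tsum_le_tsum (fun n => (hD n (hd n)).1) (hsummable hd),
      (hsummable hd).tsum_le_tsum (fun n => (hD n (hd n)).2) hu⟩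
  · have htails : Tendsto (fun n => Icc (∑' i, l (i + n)) (∑' i, u (i + n))) atTop
        (𝓝 0).smallSets :=
      (tendsto_sum_nat_add l).Icc (tendsto_sum_nat_add u)
    obtain ⟨d, hd, hdx⟩ := exists_tendsto_sum_of_forall_exists_sub_mem (D := D) htails
      (fun n z hz => hcover n z <| by
        rwa [← tsum_nat_add_eq_add_tsum hl, ← tsum_nat_add_eq_add_tsum hu]) hx
    exact ⟨d, hd, tendsto_nhds_unique hdx (hsummable hd).hasSum.tendsto_sum_nat⟩

theorem summable_div_pow_succ {𝕜 : Type*} [NormedField 𝕜] [CompleteSpace 𝕜] {β : 𝕜}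
    (hβ : 1 < ‖β‖) {f : ℕ → 𝕜} {C : ℝ} (hf : ∀ n, ‖f n‖ ≤ C) :
    Summable fun n => f n / β ^ (n + 1) := by
  have hgeom : Summable fun n : ℕ => C * ‖β‖⁻¹ ^ (n + 1) :=
    ((summable_nat_add_iff 1).2 (summable_geometric_of_lt_one (by positivity)
      (inv_lt_one_of_one_lt₀ hβ))).mul_left C
  refine hgeom.of_norm_bounded fun n => ?_
  rw [norm_div, norm_pow, inv_pow, ← div_eq_mul_inv]
  gcongr
  exact hf n

theorem tsum_div_pow_div_pow {𝕜 : Type*} [Semifield 𝕜] [TopologicalSpace 𝕜]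
    [IsTopologicalSemiring 𝕜] [T2Space 𝕜] (f : ℕ → 𝕜) (β : 𝕜) (n : ℕ) :
    (∑' i, f i / β ^ (i + 1)) / β ^ (n + 1) = ∑' i, f i / β ^ (n + i + 1 + 1) := by
  rw [← tsum_div_const]
  refine tsum_congr fun i => ?_
  rw [div_div, ← pow_add, show i + 1 + (n + 1) = n + i + 1 + 1 by ring]

theorem expansions_form_interval_general (A : ℕ → Finset ℝ) (hne : ∀ n, (A n).Nonempty)
    (q : ℕ → ℝ) (hq : ∀ n, 0 < q n)
    (hmin : Summable fun n => (A n).min' (hne n) / q n)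
    (hmax : Summable fun n => (A n).max' (hne n) / q n)
    (hgap : ∀ n, largestGap (A n) / q n ≤
      ∑' i : ℕ,
        ((A (n + i + 1)).max' (hne (n + i + 1)) - (A (n + i + 1)).min' (hne (n + i + 1))) /
          q (n + i + 1)) :
    {x : ℝ | ∃ a : ℕ → ℝ, (∀ n, a n ∈ A n) ∧ x = ∑' n : ℕ, a n / q n} =
      Icc (∑' n : ℕ, (A n).min' (hne n) / q n) (∑' n : ℕ, (A n).max' (hne n) / q n) := by
  set l : ℕ → ℝ := fun n => (A n).min' (hne n) / q n
  set u : ℕ → ℝ := fun n => (A n).max' (hne n) / q n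
  have hwidth : ∀ n, largestGap (A n) / q n ≤
      ∑' i, u (i + (n + 1)) - ∑' i, l (i + (n + 1)) := fun n => by
    rw [← ((summable_nat_add_iff (n + 1)).2 hmax).tsum_sub ((summable_nat_add_iff (n + 1)).2 hmin)]
    refine (hgap n).trans_eq (tsum_congr fun i => ?_)
    rw [show i + (n + 1) = n + i + 1 by ring, sub_div]
  have hdigits : ∀ n, (· / q n) '' (A n : Set ℝ) ⊆ Icc (l n) (u n) := by
    rintro n _ ⟨a, ha, rfl⟩
    exact ⟨div_le_div_of_nonneg_right ((A n).min'_le a ha) (hq n).le,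
      div_le_div_of_nonneg_right ((A n).le_max' a ha) (hq n).le⟩
  rw [← setOf_tsum_eq_Icc hmin hmax hdigits fun n z hz => ?_]
  · ext x
    constructor
    · rintro ⟨a, ha, rfl⟩
      exact ⟨fun n => a n / q n, fun n => ⟨a n, ha n, rfl⟩, rfl⟩
    · rintro ⟨d, hd, rfl⟩
      choose a ha had using hd
      exact ⟨a, ha, tsum_congr fun n => (had n).symm⟩
  · obtain ⟨a, ha, hza⟩ :=
      exists_sub_div_mem_Icc_of_largestGap_div_le (hne n) (hq n) (hwidth n) hz
    exact ⟨a / q n, ⟨a, ha, rfl⟩, hza⟩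

/-- Expansions in a non-integer base `β` with the `n`-th digit drawn from the set `A n`
(here `A n` is the set of allowed `(n+1)`-st digits, weighted by `β^-(n+1)`).  If the
maxima are bounded and `β` satisfies the gap inequalities, then the set of representable
numbers is exactly the closed interval from the smallest to the largest representable
value. -/
theorem expansions_form_interval (A : ℕ → Finset ℝ) (hne : ∀ n, (A n).Nonempty)
    (hnonneg : ∀ n, ∀ x ∈ A n, 0 ≤ x) (C : ℝ)
    (hbd : ∀ n, (A n).max' (hne n) ≤ C) (β : ℝ) (hβ : 1 < β)
    (hgap : ∀ n, largestGap (A n) ≤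
      ∑' i : ℕ,
        ((A (n + i + 1)).max' (hne (n + i + 1)) - (A (n + i + 1)).min' (hne (n + i + 1))) /
          β ^ (i + 1)) :
    {x : ℝ | ∃ a : ℕ → ℝ, (∀ n, a n ∈ A n) ∧ x = ∑' n : ℕ, a n / β ^ (n + 1)} =
      Set.Icc (∑' n : ℕ, (A n).min' (hne n) / β ^ (n + 1))
        (∑' n : ℕ, (A n).max' (hne n) / β ^ (n + 1)) := by
  have hsummable : ∀ {a : ℕ → ℝ}, (∀ n, a n ∈ A n) → Summable fun n => a n / β ^ (n + 1) :=
    fun ha => summable_div_pow_succ (hβ.trans_le (le_abs_self β)) fun n =>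
      (Real.norm_of_nonneg (hnonneg n _ (ha n))).trans_le (((A n).le_max' _ (ha n)).trans (hbd n))
  exact expansions_form_interval_general A hne (fun n => β ^ (n + 1)) (fun n => by positivity)
    (hsummable fun n => (A n).min'_mem _) (hsummable fun n => (A n).max'_mem _) fun n =>
      (div_le_div_of_nonneg_right (hgap n) (by positivity)).trans_eq (tsum_div_pow_div_pow _ β n)
end
end

section
/- Let S be a set of sum-indecomposable permutations that is downward closed among indecomposables (if σ ∈ S, τ is sum-indecomposable, and τ is contained in σ, then τ ∈ S), and suppose there is a constant c such that 1 ≤ |S_n| ≤ c for all n ≥ 1, where S_n is the set of members of S of length n. Then there is a unique real number γ > 1 with Σ_{n≥1} |S_n| γ^{−n} = 1, and the limit lim_{n→∞} |(⊕S)_n|^{1/n} exists and equals this γ, where (⊕S)_n is the set of permutations of length n in the sum closure ⊕S. -/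
noncomputable section

open Filter

/-- The direct sum `σ ⊕ τ` of two permutations: `σ` followed by a shifted copy of `τ`. -/
def permDirectSum {k l : ℕ} (σ : Equiv.Perm (Fin k)) (τ : Equiv.Perm (Fin l)) :
    Equiv.Perm (Fin (k + l)) :=
  finSumFinEquiv.symm.trans ((Equiv.sumCongr σ τ).trans finSumFinEquiv)

/-- A permutation is sum-indecomposable if it is not the direct sum of two shorter
permutations. -/
def SumIndecomposable {n : ℕ} (σ : Equiv.Perm (Fin n)) : Prop :=
  ¬ ∃ (k l : ℕ) (σ₁ : Equiv.Perm (Fin k)) (σ₂ : Equiv.Perm (Fin l)) (h : k + l = n),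
      k < n ∧ l < n ∧ (finCongr h).permCongr (permDirectSum σ₁ σ₂) = σ

/-- Pattern containment: `τ` is contained in `σ`. -/
def PermContains {k n : ℕ} (τ : Equiv.Perm (Fin k)) (σ : Equiv.Perm (Fin n)) : Prop :=
  ∃ f : Fin k → Fin n, StrictMono f ∧ ∀ a b : Fin k, τ a < τ b ↔ σ (f a) < σ (f b)

/-- The sum closure `⊕S` of a family `S` of permutations: all direct sums
`σ₁ ⊕ σ₂ ⊕ ⋯ ⊕ σ_r` with `r ≥ 1` and each `σ_i ∈ S`. -/
inductive InSumClosure (S : ∀ n : ℕ, Set (Equiv.Perm (Fin n))) :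
    ∀ n : ℕ, Equiv.Perm (Fin n) → Prop
  | single {n : ℕ} (σ : Equiv.Perm (Fin n)) (h : σ ∈ S n) : InSumClosure S n σ
  | cons {k l : ℕ} (σ : Equiv.Perm (Fin k)) (τ : Equiv.Perm (Fin l))
      (hσ : σ ∈ S k) (hτ : InSumClosure S l τ) :
      InSumClosure S (k + l) (permDirectSum σ τ)

/-! Every member of `⊕S` of positive length splits off its first block, in exactly one way because
the blocks are indecomposable. Counting the empty permutation as well, the numbers `u n` of members
of `⊕S` therefore satisfy the renewal equation `u (n + 1) = ∑ s k * u l`, summed over `k + l = n`,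
where `s k = |S_(k+1)|`. Dividing by `x ^ (n + 1)` turns it into the same equation for `u n / x ^ n`
with the weights `s k / x ^ (k + 1)`. At `x = γ` the weights have total mass `1`, so `u n / γ ^ n`
stays below `1`; at any smaller `x > 1` finitely many weights already have mass at least `1`, so
`u n / x ^ n` stays away from `0`. -/

open Equiv (Perm)
open Finset.HasAntidiagonal (antidiagonal mem_antidiagonal)

section Permutations

variable {k l m n : ℕ}

lemma permDirectSum_castAdd (σ : Perm (Fin k)) (τ : Perm (Fin l)) (i : Fin k) :
    permDirectSum σ τ (Fin.castAdd l i) = Fin.castAdd l (σ i) := by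
  simp [permDirectSum]

lemma permDirectSum_natAdd (σ : Perm (Fin k)) (τ : Perm (Fin l)) (i : Fin l) :
    permDirectSum σ τ (Fin.natAdd k i) = Fin.natAdd k (τ i) := by
  simp [permDirectSum]

/-- The permutation of `ℕ` acting as `σ` on `{0, …, n - 1}` and fixing all other numbers. Through
it, permutations whose lengths are only propositionally equal are compared without casts. -/
def permExtend (σ : Perm (Fin n)) : Perm ℕ :=
  σ.extendDomain Fin.equivSubtype

lemma permExtend_apply_fin (σ : Perm (Fin n)) (i : Fin n) : permExtend σ i = σ i :=
  σ.extendDomain_apply_image Fin.equivSubtype i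

lemma permExtend_apply_of_le (σ : Perm (Fin n)) {i : ℕ} (hi : n ≤ i) : permExtend σ i = i :=
  σ.extendDomain_apply_not_subtype Fin.equivSubtype hi.not_gt

lemma permExtend_apply_lt (σ : Perm (Fin n)) {i : ℕ} (hi : i < n) : permExtend σ i < n :=
  (permExtend_apply_fin σ ⟨i, hi⟩).trans_lt (σ ⟨i, hi⟩).isLt

lemma permExtend_injective : Function.Injective (permExtend (n := n)) :=
  Perm.extendDomainHom_injective Fin.equivSubtype

lemma permExtend_permCongr_finCongr (h : m = n) (σ : Perm (Fin m)) :
    permExtend ((finCongr h).permCongr σ) = permExtend σ := by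
  subst h
  rfl

lemma permExtend_permDirectSum_of_lt (σ : Perm (Fin k)) (τ : Perm (Fin l)) {i : ℕ} (hi : i < k) :
    permExtend (permDirectSum σ τ) i = permExtend σ i := by
  lift i to Fin k using hi
  rw [← Fin.val_castAdd l i, permExtend_apply_fin, permDirectSum_castAdd, Fin.val_castAdd,
    Fin.val_castAdd, permExtend_apply_fin]

lemma permExtend_permDirectSum_add (σ : Perm (Fin k)) (τ : Perm (Fin l)) (i : ℕ) :
    permExtend (permDirectSum σ τ) (k + i) = k + permExtend τ i := by
  obtain hi | hi := lt_or_ge i l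
  · lift i to Fin l using hi
    rw [← Fin.val_natAdd k i, permExtend_apply_fin, permDirectSum_natAdd, Fin.val_natAdd,
      permExtend_apply_fin]
  · rw [permExtend_apply_of_le τ hi, permExtend_apply_of_le _ (by omega)]

lemma permDirectSum_fin_zero (σ : Perm (Fin k)) (τ : Perm (Fin 0)) : permDirectSum σ τ = σ := by
  refine permExtend_injective (Equiv.ext fun i => ?_)
  obtain hi | hi := lt_or_ge i k
  · exact permExtend_permDirectSum_of_lt σ τ hi
  · rw [permExtend_apply_of_le σ hi]
    exact permExtend_apply_of_le (permDirectSum σ τ) hi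

lemma permExtend_fin_zero_permDirectSum (σ : Perm (Fin 0)) (τ : Perm (Fin l)) :
    permExtend (permDirectSum σ τ) = permExtend τ := by
  ext i
  simpa using permExtend_permDirectSum_add σ τ i

lemma eq_and_eq_of_permExtend_permDirectSum_eq {σ σ' : Perm (Fin k)} {τ τ' : Perm (Fin l)}
    (h : permExtend (permDirectSum σ τ) = permExtend (permDirectSum σ' τ')) :
    σ = σ' ∧ τ = τ' := by
  constructor <;> refine permExtend_injective (Equiv.ext fun i => ?_)
  · obtain hi | hi := lt_or_ge i k
    · rw [← permExtend_permDirectSum_of_lt σ τ hi, h, permExtend_permDirectSum_of_lt σ' τ' hi]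
    · rw [permExtend_apply_of_le σ hi, permExtend_apply_of_le σ' hi]
  · have := Equiv.congr_fun h (k + i)
    rwa [permExtend_permDirectSum_add, permExtend_permDirectSum_add, add_right_inj] at this

lemma exists_eq_permDirectSum_of_forall_lt (σ : Perm (Fin (k + l)))
    (h : ∀ i < k, permExtend σ i < k) :
    ∃ (σ₁ : Perm (Fin k)) (σ₂ : Perm (Fin l)), permDirectSum σ₁ σ₂ = σ := by
  let ρ : Perm (Fin k ⊕ Fin l) := finSumFinEquiv.trans (σ.trans finSumFinEquiv.symm)
  have hρ : Set.MapsTo ρ (Set.range Sum.inl) (Set.range Sum.inl) := by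
    rintro _ ⟨i, rfl⟩
    have hi : (σ (Fin.castAdd l i) : ℕ) < k := by
      rw [← permExtend_apply_fin]
      exact h i i.isLt
    refine ⟨⟨_, hi⟩, finSumFinEquiv.injective ?_⟩
    simp [ρ]
  obtain ⟨⟨σ₁, σ₂⟩, hσ⟩ := Perm.mem_sumCongrHom_range_of_perm_mapsTo_inl hρ
  have hσ : Equiv.sumCongr σ₁ σ₂ = ρ := hσ
  exact ⟨σ₁, σ₂, by ext; simp [permDirectSum, hσ, ρ]⟩

lemma SumIndecomposable.exists_le_permExtend {σ : Perm (Fin n)} (hσ : SumIndecomposable σ)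
    (hk : 0 < k) (hkn : k < n) : ∃ i < k, k ≤ permExtend σ i := by
  by_contra! h
  obtain ⟨l, rfl⟩ := Nat.exists_eq_add_of_le hkn.le
  obtain ⟨σ₁, σ₂, rfl⟩ := exists_eq_permDirectSum_of_forall_lt σ h
  exact hσ ⟨k, l, σ₁, σ₂, rfl, hkn, by omega, rfl⟩

lemma SumIndecomposable.length_le_of_permExtend_permDirectSum_eq {k' l' : ℕ}
    {σ : Perm (Fin k)} {τ : Perm (Fin l)} {σ' : Perm (Fin k')} {τ' : Perm (Fin l')}
    (hσ' : SumIndecomposable σ') (hk : 0 < k)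
    (h : permExtend (permDirectSum σ τ) = permExtend (permDirectSum σ' τ')) : k' ≤ k := by
  by_contra! hlt
  obtain ⟨i, hik, hi⟩ := hσ'.exists_le_permExtend hk hlt
  rw [← permExtend_permDirectSum_of_lt σ' τ' (hik.trans hlt), ← h,
    permExtend_permDirectSum_of_lt σ τ hik] at hi
  exact (permExtend_apply_lt σ hik).not_ge hi

end Permutations

section SumClosure

variable {S : ∀ n : ℕ, Set (Perm (Fin n))} {k l n : ℕ}

/-- The sum closure `⊕S` together with the empty permutation, that is, all direct sums
`σ₁ ⊕ ⋯ ⊕ σ_r` with `r ≥ 0` and each `σ_i ∈ S`. -/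
def sumClosureWithEmpty (S : ∀ n : ℕ, Set (Perm (Fin n))) (n : ℕ) : Set (Perm (Fin n)) :=
  {σ | n = 0 ∨ InSumClosure S n σ}

lemma mem_sumClosureWithEmpty_iff (hn : n ≠ 0) {σ : Perm (Fin n)} :
    σ ∈ sumClosureWithEmpty S n ↔ InSumClosure S n σ :=
  or_iff_right hn

lemma card_sumClosureWithEmpty_zero : Nat.card (sumClosureWithEmpty S 0) = 1 :=
  Nat.card_eq_one_iff_unique.2 ⟨inferInstance, ⟨1, Or.inl rfl⟩⟩

lemma card_sumClosureWithEmpty_of_ne_zero (hn : n ≠ 0) :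
    Nat.card (sumClosureWithEmpty S n) = Nat.card {σ : Perm (Fin n) // InSumClosure S n σ} :=
  Nat.card_congr (Equiv.subtypeEquivRight fun _ => mem_sumClosureWithEmpty_iff hn)

lemma inSumClosure_permDirectSum {σ : Perm (Fin k)} {τ : Perm (Fin l)} (hσ : σ ∈ S k)
    (hτ : τ ∈ sumClosureWithEmpty S l) : InSumClosure S (k + l) (permDirectSum σ τ) := by
  obtain rfl | hτ := hτ
  · rw [permDirectSum_fin_zero]
    exact .single σ hσ
  · exact .cons σ τ hσ hτ

lemma inSumClosure_permCongr_finCongr_iff {m : ℕ} (h : m = n) {σ : Perm (Fin m)} :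
    InSumClosure S n ((finCongr h).permCongr σ) ↔ InSumClosure S m σ := by
  subst h
  rfl

lemma InSumClosure.exists_permDirectSum {σ : Perm (Fin n)} (h : InSumClosure S n σ) (hn : n ≠ 0) :
    ∃ (k l : ℕ) (σ₁ : Perm (Fin (k + 1))) (τ : Perm (Fin l)), k + 1 + l = n ∧ σ₁ ∈ S (k + 1) ∧
      τ ∈ sumClosureWithEmpty S l ∧ permExtend (permDirectSum σ₁ τ) = permExtend σ := by
  induction h with
  | @single n σ hσ =>
    obtain ⟨k, rfl⟩ := Nat.exists_eq_succ_of_ne_zero hn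
    exact ⟨k, 0, σ, 1, rfl, hσ, Or.inl rfl, congrArg permExtend (permDirectSum_fin_zero σ 1)⟩
  | @cons k l σ τ hσ hτ ih =>
    obtain _ | k := k
    · rw [permExtend_fin_zero_permDirectSum, zero_add]
      exact ih (by omega)
    · exact ⟨k, l, σ, τ, rfl, hσ, Or.inr hτ, rfl⟩

/-- Prepending a nonempty block `σ ∈ S` to a possibly empty sum `τ` of blocks, with total length
`n + 1`. -/
def consBlock (S : ∀ n : ℕ, Set (Perm (Fin n))) (n : ℕ)
    (x : Σ p : antidiagonal n, S (p.1.1 + 1) × sumClosureWithEmpty S p.1.2) :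
    sumClosureWithEmpty S (n + 1) :=
  have h : x.1.1.1 + 1 + x.1.1.2 = n + 1 := by
    rw [add_right_comm, mem_antidiagonal.1 x.1.2]
  ⟨(finCongr h).permCongr (permDirectSum x.2.1.1 x.2.2.1),
    Or.inr ((inSumClosure_permCongr_finCongr_iff h).2
      (inSumClosure_permDirectSum x.2.1.2 x.2.2.2))⟩

lemma permExtend_consBlock
    (x : Σ p : antidiagonal n, S (p.1.1 + 1) × sumClosureWithEmpty S p.1.2) :
    permExtend (consBlock S n x).1 = permExtend (permDirectSum x.2.1.1 x.2.2.1) :=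
  permExtend_permCongr_finCongr _ _

lemma consBlock_injective (hindec : ∀ n, ∀ σ ∈ S n, SumIndecomposable σ) :
    Function.Injective (consBlock S n) := by
  rintro ⟨⟨⟨k, l⟩, hkl⟩, ⟨σ, hσ⟩, ⟨τ, hτ⟩⟩ ⟨⟨⟨k', l'⟩, hkl'⟩, ⟨σ', hσ'⟩, ⟨τ', hτ'⟩⟩ h
  have hsum : permExtend (permDirectSum σ τ) = permExtend (permDirectSum σ' τ') := by
    simpa only [permExtend_consBlock] using congrArg (fun π => permExtend π.1) h
  have hle : k + 1 ≤ k' + 1 :=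
    (hindec _ σ hσ).length_le_of_permExtend_permDirectSum_eq k'.succ_pos hsum.symm
  have hle' : k' + 1 ≤ k + 1 :=
    (hindec _ σ' hσ').length_le_of_permExtend_permDirectSum_eq k.succ_pos hsum
  obtain rfl : k = k' := by omega
  obtain rfl : l = l' :=
    Nat.add_left_cancel ((mem_antidiagonal.1 hkl).trans (mem_antidiagonal.1 hkl').symm)
  obtain ⟨rfl, rfl⟩ := eq_and_eq_of_permExtend_permDirectSum_eq hsum
  rfl

lemma consBlock_surjective : Function.Surjective (consBlock S n) := by
  rintro ⟨π, hπ⟩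
  obtain ⟨k, l, σ, τ, hkl, hσ, hτ, h⟩ :=
    ((mem_sumClosureWithEmpty_iff n.succ_ne_zero).1 hπ).exists_permDirectSum n.succ_ne_zero
  refine ⟨⟨⟨(k, l), mem_antidiagonal.2 (by omega)⟩, ⟨σ, hσ⟩, ⟨τ, hτ⟩⟩, Subtype.ext ?_⟩
  exact permExtend_injective ((permExtend_consBlock _).trans h)

lemma card_sumClosureWithEmpty_succ (hindec : ∀ n, ∀ σ ∈ S n, SumIndecomposable σ) (n : ℕ) :
    Nat.card (sumClosureWithEmpty S (n + 1)) = ∑ p ∈ antidiagonal n,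
      Nat.card (S (p.1 + 1)) * Nat.card (sumClosureWithEmpty S p.2) := by
  have hbij : Function.Bijective (consBlock S n) :=
    ⟨consBlock_injective hindec, consBlock_surjective⟩
  rw [← Nat.card_congr (Equiv.ofBijective _ hbij), Nat.card_sigma]
  simp only [Nat.card_prod]
  exact Finset.sum_coe_sort (antidiagonal n)
    fun p => Nat.card (S (p.1 + 1)) * Nat.card (sumClosureWithEmpty S p.2)

end SumClosure

section Series

open Set

variable {s : ℕ → ℝ}

lemma summable_div_pow_of_le {c x : ℝ} (hs : ∀ n, 0 ≤ s n) (hc : ∀ n, s n ≤ c) (hx : 1 < x) :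
    Summable fun n => s n / x ^ (n + 1) := by
  have hgeom : Summable fun n : ℕ => (x⁻¹) ^ (n + 1) :=
    (summable_nat_add_iff 1).2
      (summable_geometric_of_lt_one (by positivity) (inv_lt_one_of_one_lt₀ hx))
  refine .of_nonneg_of_le (fun n => div_nonneg (hs n) (by positivity)) (fun n => ?_)
    (hgeom.mul_left c)
  rw [inv_pow, ← div_eq_mul_inv]
  gcongr
  exact hc n

lemma div_pow_le_div_pow_of_le {x y : ℝ} (hs : ∀ n, 0 ≤ s n) (hx : 0 < x) (hxy : x ≤ y) (n : ℕ) :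
    s n / y ^ (n + 1) ≤ s n / x ^ (n + 1) := by
  have := hs n
  gcongr

variable {r : ℝ}

lemma strictAntiOn_tsum_div_pow (hs : ∀ n, 0 ≤ s n) (hne : ∃ m, 0 < s m) (hr : 0 ≤ r)
    (hsum : ∀ x > r, Summable fun n => s n / x ^ (n + 1)) :
    StrictAntiOn (fun x => ∑' n, s n / x ^ (n + 1)) (Ioi r) := by
  intro x hx y hy hxy
  obtain ⟨m, hm⟩ := hne
  have hx0 : 0 < x := hr.trans_lt hx
  refine Summable.tsum_lt_tsum (div_pow_le_div_pow_of_le hs hx0 hxy.le) (i := m) ?_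
    (hsum y hy) (hsum x hx)
  gcongr

lemma continuousOn_tsum_div_pow (hs : ∀ n, 0 ≤ s n) (hr : 0 ≤ r)
    (hsum : ∀ x > r, Summable fun n => s n / x ^ (n + 1)) :
    ContinuousOn (fun x => ∑' n, s n / x ^ (n + 1)) (Ioi r) := by
  intro x hx
  obtain ⟨y, hry, hyx⟩ := exists_between (mem_Ioi.1 hx)
  have hy0 : 0 < y := hr.trans_lt hry
  have hcont : ContinuousOn (fun z => ∑' n, s n / z ^ (n + 1)) (Ici y) := by
    refine continuousOn_tsum (fun n => ?_) (hsum y hry) fun n z hz => ?_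
    · exact continuousOn_const.div (by fun_prop) fun z hz => (pow_pos (hy0.trans_le hz) _).ne'
    · have hz0 : 0 < z := hy0.trans_le hz
      rw [Real.norm_of_nonneg (div_nonneg (hs n) (by positivity))]
      exact div_pow_le_div_pow_of_le hs hy0 hz n
  exact (hcont.continuousAt (Ici_mem_nhds hyx)).continuousWithinAt

lemma tendsto_tsum_div_pow_atTop (hs : ∀ n, 0 ≤ s n) {x : ℝ} (hx : 0 < x)
    (hsum : Summable fun n => s n / x ^ (n + 1)) :
    Tendsto (fun y => ∑' n, s n / y ^ (n + 1)) atTop (nhds 0) := by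
  rw [← tsum_zero (α := ℝ) (β := ℕ)]
  refine tendsto_tsum_of_dominated_convergence hsum (fun n => ?_) ?_
  · exact tendsto_const_nhds.div_atTop (tendsto_pow_atTop n.succ_ne_zero)
  · filter_upwards [eventually_ge_atTop x] with y hy n
    have hy0 : 0 < y := hx.trans_le hy
    rw [Real.norm_of_nonneg (div_nonneg (hs n) (by positivity))]
    exact div_pow_le_div_pow_of_le hs hx hy n

theorem existsUnique_tsum_div_pow_eq_one (hs : ∀ n, 0 ≤ s n) (hr : 0 ≤ r)
    (hsum : ∀ x > r, Summable fun n => s n / x ^ (n + 1))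
    (hlarge : ∃ x > r, 1 < ∑' n, s n / x ^ (n + 1)) :
    ∃! γ, r < γ ∧ ∑' n, s n / γ ^ (n + 1) = 1 := by
  obtain ⟨x, hx, hx1⟩ := hlarge
  have hne : ∃ m, 0 < s m := by
    by_contra! h
    have h0 : s = 0 := funext fun n => (h n).antisymm (hs n)
    norm_num [h0] at hx1
  have hlim := tendsto_tsum_div_pow_atTop hs (hr.trans_lt hx) (hsum x hx)
  obtain ⟨y, hy1, hy⟩ := ((hlim.eventually_lt_const one_pos).and (eventually_gt_atTop r)).exists
  obtain ⟨γ, hγ, hγ1⟩ := isPreconnected_Ioi.intermediate_value hy hx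
    (continuousOn_tsum_div_pow hs hr hsum) ⟨hy1.le, hx1.le⟩
  refine ⟨γ, ⟨hγ, hγ1⟩, fun γ' hγ' => ?_⟩
  exact (strictAntiOn_tsum_div_pow hs hne hr hsum).injOn hγ'.1 hγ (hγ'.2.trans hγ1.symm)

lemma exists_one_lt_tsum_div_pow (hs : ∀ n, 0 ≤ s n)
    (hsum : ∀ x > 1, Summable fun n => s n / x ^ (n + 1)) {N : ℕ}
    (hN : 1 < ∑ n ∈ Finset.range N, s n) : ∃ x > 1, 1 < ∑' n, s n / x ^ (n + 1) := by
  have hcont : ContinuousAt (fun x : ℝ => ∑ n ∈ Finset.range N, s n / x ^ (n + 1)) 1 := by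
    refine tendsto_finsetSum _ fun n _ => ?_
    exact continuousAt_const.div (by fun_prop) (by norm_num)
  have hev : ∀ᶠ x in nhds (1 : ℝ), 1 < ∑ n ∈ Finset.range N, s n / x ^ (n + 1) :=
    hcont.eventually_const_lt (by simpa using hN)
  obtain ⟨x, hxN, hx⟩ :=
    ((hev.filter_mono nhdsWithin_le_nhds).and (self_mem_nhdsWithin (s := Ioi 1))).exists
  refine ⟨x, hx, hxN.trans_le ((hsum x hx).sum_le_tsum _ fun n _ => ?_)⟩
  exact div_nonneg (hs n) (pow_pos (one_pos.trans hx) _).le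

end Series

lemma tendsto_rpow_one_div_of_pow_bounds {u : ℕ → ℝ} {r γ : ℝ} (hr : 0 ≤ r) (hrγ : r < γ)
    (hu : ∀ n, 0 ≤ u n) (hupper : ∀ n, u n ≤ γ ^ n)
    (hlower : ∀ δ, r < δ → δ < γ → ∃ ε > 0, ∀ n, ε * δ ^ n ≤ u n) :
    Tendsto (fun n : ℕ => u n ^ (1 / (n : ℝ))) atTop (nhds γ) := by
  refine tendsto_order.2 ⟨fun b hb => ?_, fun b hb => ?_⟩
  · obtain ⟨δ, hδ, hδγ⟩ := exists_between (max_lt hb hrγ)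
    obtain ⟨hbδ, hrδ⟩ := max_lt_iff.1 hδ
    have hδ0 : 0 ≤ δ := hr.trans hrδ.le
    obtain ⟨ε, hε, hle⟩ := hlower δ hrδ hδγ
    have hlim : Tendsto (fun n : ℕ => ε ^ (1 / (n : ℝ)) * δ) atTop (nhds δ) := by
      have hroot := tendsto_const_nhds.rpow
        (tendsto_one_div_atTop_nhds_zero_nat (𝕜 := ℝ)) (Or.inl hε.ne')
      simpa using hroot.mul_const δ
    filter_upwards [hlim.eventually_const_lt hbδ, eventually_ne_atTop 0] with n hn hn0
    calc b < ε ^ (1 / (n : ℝ)) * δ := hn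
      _ = (ε * δ ^ n) ^ (1 / (n : ℝ)) := by
        rw [Real.mul_rpow hε.le (by positivity), one_div, Real.pow_rpow_inv_natCast hδ0 hn0]
      _ ≤ u n ^ (1 / (n : ℝ)) := Real.rpow_le_rpow (by positivity) (hle n) (by positivity)
  · filter_upwards [eventually_ne_atTop 0] with n hn0
    calc u n ^ (1 / (n : ℝ)) ≤ (γ ^ n) ^ (1 / (n : ℝ)) :=
          Real.rpow_le_rpow (hu n) (hupper n) (by positivity)
      _ = γ := by rw [one_div, Real.pow_rpow_inv_natCast (hr.trans hrγ.le) hn0]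
      _ < b := hb

/-- The renewal equation with initial value `1`: `s k` is the weight of a step of length `k + 1`,
and `u n` is the total weight of all compositions of `n` into such steps. -/
structure IsRenewalSequence (s u : ℕ → ℝ) : Prop where
  zero : u 0 = 1
  succ : ∀ n, u (n + 1) = ∑ p ∈ antidiagonal n, s p.1 * u p.2

namespace IsRenewalSequence

variable {s u : ℕ → ℝ}

lemma div_pow (h : IsRenewalSequence s u) {x : ℝ} (hx : x ≠ 0) :
    IsRenewalSequence (fun n => s n / x ^ (n + 1)) fun n => u n / x ^ n where
  zero := by simp [h.zero]
  succ n := by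
    rw [h.succ, Finset.sum_div]
    refine Finset.sum_congr rfl fun p hp => ?_
    rw [← mem_antidiagonal.1 hp]
    field_simp
    ring

lemma nonneg (h : IsRenewalSequence s u) (hs : ∀ n, 0 ≤ s n) (n : ℕ) : 0 ≤ u n := by
  induction n using Nat.strong_induction_on with
  | _ n ih =>
    obtain _ | n := n
    · simp [h.zero]
    · rw [h.succ]
      exact Finset.sum_nonneg fun p hp =>
        mul_nonneg (hs _) (ih _ (Finset.Nat.antidiagonal.snd_lt hp))

lemma pos (h : IsRenewalSequence s u) (hs : ∀ n, 0 ≤ s n) (hs0 : 0 < s 0) (n : ℕ) : 0 < u n := by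
  induction n with
  | zero => simp [h.zero]
  | succ n ih =>
    calc 0 < s 0 * u n := mul_pos hs0 ih
      _ ≤ ∑ p ∈ antidiagonal n, s p.1 * u p.2 :=
        Finset.single_le_sum (a := (0, n)) (f := fun p => s p.1 * u p.2)
          (fun p _ => mul_nonneg (hs _) (h.nonneg hs _))
          (mem_antidiagonal.2 (zero_add n))
      _ = u (n + 1) := (h.succ n).symm

lemma le_one (h : IsRenewalSequence s u) (hs : ∀ n, 0 ≤ s n)
    (hsum : ∀ n, ∑ k ∈ Finset.range n, s k ≤ 1) (n : ℕ) : u n ≤ 1 := by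
  induction n using Nat.strong_induction_on with
  | _ n ih =>
    obtain _ | n := n
    · exact h.zero.le
    calc u (n + 1) = ∑ p ∈ antidiagonal n, s p.1 * u p.2 := h.succ n
      _ ≤ ∑ p ∈ antidiagonal n, s p.1 := Finset.sum_le_sum fun p hp =>
        mul_le_of_le_one_right (hs _) (ih _ (Finset.Nat.antidiagonal.snd_lt hp))
      _ = ∑ k ∈ Finset.range (n + 1), s k :=
        Finset.Nat.sum_antidiagonal_eq_sum_range_succ (fun k _ => s k) n
      _ ≤ 1 := hsum (n + 1)

lemma ge_of_forall_le (h : IsRenewalSequence s u) (hs : ∀ n, 0 ≤ s n) {N : ℕ}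
    (hN : 1 ≤ ∑ k ∈ Finset.range N, s k) {ε : ℝ} (hε : 0 ≤ ε) (hu : ∀ n ≤ N, ε ≤ u n) (n : ℕ) :
    ε ≤ u n := by
  induction n using Nat.strong_induction_on with
  | _ n ih =>
    obtain hn | hn := le_or_gt n N
    · exact hu n hn
    obtain ⟨n, rfl⟩ := Nat.exists_eq_succ_of_ne_zero (Nat.ne_zero_of_lt hn)
    calc ε ≤ (∑ k ∈ Finset.range N, s k) * ε := le_mul_of_one_le_left hε hN
      _ ≤ (∑ k ∈ Finset.range (n + 1), s k) * ε := by
        gcongr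
        exact fun k _ _ => hs k
      _ = ∑ p ∈ antidiagonal n, s p.1 * ε := by
        rw [Finset.Nat.sum_antidiagonal_eq_sum_range_succ (fun k _ => s k * ε), Finset.sum_mul]
      _ ≤ ∑ p ∈ antidiagonal n, s p.1 * u p.2 := Finset.sum_le_sum fun p hp =>
        mul_le_mul_of_nonneg_left
          (ih _ (Finset.Nat.antidiagonal.snd_lt hp)) (hs _)
      _ = u (n + 1) := (h.succ n).symm

lemma exists_forall_le (h : IsRenewalSequence s u) (hs : ∀ n, 0 ≤ s n) (hs0 : 0 < s 0) {N : ℕ}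
    (hN : 1 ≤ ∑ k ∈ Finset.range N, s k) : ∃ ε > 0, ∀ n, ε ≤ u n := by
  obtain ⟨m, -, hm⟩ := (Finset.range (N + 1)).exists_min_image u Finset.nonempty_range_add_one
  refine ⟨u m, h.pos hs hs0 m, h.ge_of_forall_le hs hN (h.nonneg hs m) fun n hn => ?_⟩
  exact hm n (Finset.mem_range_succ_iff.2 hn)

theorem tendsto_rpow_one_div (h : IsRenewalSequence s u) (hs : ∀ n, 0 ≤ s n) (hs0 : 0 < s 0)
    {r γ : ℝ} (hr : 0 ≤ r) (hsum : ∀ x > r, Summable fun n => s n / x ^ (n + 1))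
    (hrγ : r < γ) (hγ : ∑' n, s n / γ ^ (n + 1) = 1) :
    Tendsto (fun n : ℕ => u n ^ (1 / (n : ℝ))) atTop (nhds γ) := by
  have hnonneg : ∀ x > r, ∀ n, 0 ≤ s n / x ^ (n + 1) := fun x hx n =>
    div_nonneg (hs n) (pow_nonneg (hr.trans hx.le) _)
  refine tendsto_rpow_one_div_of_pow_bounds hr hrγ (h.nonneg hs) (fun n => ?_) fun δ hrδ hδγ => ?_
  · have hγ0 : 0 < γ := hr.trans_lt hrγ
    have hmass : ∀ N, ∑ n ∈ Finset.range N, s n / γ ^ (n + 1) ≤ 1 := fun N =>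
      ((hsum γ hrγ).sum_le_tsum _ fun n _ => hnonneg γ hrγ n).trans_eq hγ
    exact (div_le_one (by positivity)).1 ((h.div_pow hγ0.ne').le_one (hnonneg γ hrγ) hmass n)
  · have hδ0 : 0 < δ := hr.trans_lt hrδ
    have hδ : 1 < ∑' n, s n / δ ^ (n + 1) :=
      hγ.symm.trans_lt (strictAntiOn_tsum_div_pow hs ⟨0, hs0⟩ hr hsum hrδ hrγ hδγ)
    obtain ⟨N, hN⟩ :=
      ((hsum δ hrδ).hasSum.tendsto_sum_nat.eventually_const_lt hδ).exists
    obtain ⟨ε, hε, hle⟩ :=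
      (h.div_pow hδ0.ne').exists_forall_le (hnonneg δ hrδ) (by positivity) hN.le
    exact ⟨ε, hε, fun n => (le_div_iff₀ (by positivity)).1 (hle n)⟩

end IsRenewalSequence

lemma isRenewalSequence_card_sumClosureWithEmpty {S : ∀ n : ℕ, Set (Perm (Fin n))}
    (hindec : ∀ n, ∀ σ ∈ S n, SumIndecomposable σ) :
    IsRenewalSequence (fun n => (Nat.card (S (n + 1)) : ℝ))
      fun n => (Nat.card (sumClosureWithEmpty S n) : ℝ) where
  zero := mod_cast card_sumClosureWithEmpty_zero
  succ n := mod_cast card_sumClosureWithEmpty_succ hindec n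

theorem sum_closure_growth_rate_general (S : ∀ n : ℕ, Set (Perm (Fin n)))
    (hindec : ∀ n, ∀ σ ∈ S n, SumIndecomposable σ) (h1 : (S 1).Nonempty)
    (h2 : ∃ m ≥ 2, (S m).Nonempty)
    (hsum : ∀ x : ℝ, 1 < x → Summable fun n : ℕ => (Nat.card (S (n + 1)) : ℝ) / x ^ (n + 1)) :
    ∃ γ : ℝ,
      (1 < γ ∧ ∑' n : ℕ, (Nat.card (S (n + 1)) : ℝ) / γ ^ (n + 1) = 1) ∧
      (∀ γ' : ℝ, 1 < γ' → ∑' n : ℕ, (Nat.card (S (n + 1)) : ℝ) / γ' ^ (n + 1) = 1 → γ' = γ) ∧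
      Tendsto
        (fun n : ℕ => (Nat.card {σ : Perm (Fin n) // InSumClosure S n σ} : ℝ) ^ (1 / (n : ℝ)))
        atTop (nhds γ) := by
  have hs : ∀ n, (0 : ℝ) ≤ Nat.card (S (n + 1)) := fun n => Nat.cast_nonneg _
  have hcard : ∀ n, (S n).Nonempty → 0 < Nat.card (S n) := fun n hn =>
    Nat.card_pos_iff.2 ⟨hn.to_subtype, inferInstance⟩
  have htwo : ∃ N, (1 : ℝ) < ∑ n ∈ Finset.range N, (Nat.card (S (n + 1)) : ℝ) := by
    obtain ⟨m, hm, hSm⟩ := h2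
    obtain ⟨m, rfl⟩ := Nat.exists_eq_add_of_le' hm
    refine ⟨m + 2, mod_cast ?_⟩
    rw [Finset.sum_range_succ, Finset.sum_range_succ']
    have hm : 0 < Nat.card (S (m + 1 + 1)) := hcard _ hSm
    have h1 : 0 < Nat.card (S (0 + 1)) := hcard _ h1
    omega
  obtain ⟨N, hN⟩ := htwo
  obtain ⟨γ, ⟨hγ, hγ1⟩, huniq⟩ := existsUnique_tsum_div_pow_eq_one hs zero_le_one hsum
    (exists_one_lt_tsum_div_pow hs hsum hN)
  refine ⟨γ, ⟨hγ, hγ1⟩, fun γ' h h' => huniq γ' ⟨h, h'⟩, ?_⟩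
  refine ((isRenewalSequence_card_sumClosureWithEmpty hindec).tendsto_rpow_one_div hs
    (mod_cast hcard 1 h1) zero_le_one hsum hγ hγ1).congr' ?_
  filter_upwards [eventually_ne_atTop 0] with n hn
  rw [card_sumClosureWithEmpty_of_ne_zero hn]

/-- For a downward closed set `S` of sum-indecomposable permutations which is positive and
bounded, there is a unique `γ > 1` with `Σ_{n ≥ 1} |S_n| γ^(-n) = 1`, and the growth rate
of the sum closure `⊕S` exists and equals this `γ`. -/
theorem sum_closure_growth_rate (S : ∀ n : ℕ, Set (Equiv.Perm (Fin n)))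
    (hindec : ∀ n, ∀ σ ∈ S n, SumIndecomposable σ)
    (hdc : ∀ (n : ℕ) (σ : Equiv.Perm (Fin n)), σ ∈ S n →
      ∀ (k : ℕ) (τ : Equiv.Perm (Fin k)), SumIndecomposable τ → PermContains τ σ → τ ∈ S k)
    (c : ℕ) (hbound : ∀ n : ℕ, 1 ≤ n → 1 ≤ Nat.card ↥(S n) ∧ Nat.card ↥(S n) ≤ c) :
    ∃ γ : ℝ,
      (1 < γ ∧ ∑' n : ℕ, (Nat.card ↥(S (n + 1)) : ℝ) / γ ^ (n + 1) = 1) ∧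
      (∀ γ' : ℝ, 1 < γ' → ∑' n : ℕ, (Nat.card ↥(S (n + 1)) : ℝ) / γ' ^ (n + 1) = 1 →
        γ' = γ) ∧
      Tendsto
        (fun n : ℕ =>
          (Nat.card {σ : Equiv.Perm (Fin n) // InSumClosure S n σ} : ℝ) ^ (1 / (n : ℝ)))
        atTop (nhds γ) := by
  have hne : ∀ n ≥ 1, (S n).Nonempty := fun n hn =>
    Set.nonempty_coe_sort.1 (Nat.card_pos_iff.1 (hbound n hn).1).1
  exact sum_closure_growth_rate_general S hindec (hne 1 le_rfl) ⟨2, le_rfl, hne 2 one_le_two⟩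
    fun _ => summable_div_pow_of_le (fun _ => Nat.cast_nonneg _)
      fun n => Nat.cast_le.2 (hbound (n + 1) n.succ_pos).2
end
end
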